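/- arXiv:2312.16816 — 4 statements merged into one kernel-verified Lean document; each statement's English description precedes it below -/
import Mathlib

section
/- In the Segal-Bargmann space of ℂ^{n×n} with Gaussian measure π^{-n²} e^{-Tr(z*z)} dz, the squared norm of the determinant function z ↦ det(z) equals n!. Equivalently, for the complex Ginibre ensemble, E|λ₁(z)⋯λₙ(z)|² = n!. -/
open MeasureTheory

/-!
Expanding along permutations writes `det z` as a signed sum of squarefree monomials, one for the
graph of each permutation. If the coordinates are independent and centred, distinct squarefree
monomials are orthogonal: some coordinate occurs in exactly one of the two, and integrating it out
gives zero. Hence the second moment of the determinant is the permanent of the matrix of second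
moments of the entries; for the Ginibre ensemble these are all `1`, so every one of the `n!`
permutations contributes `1`.
-/

lemma integral_withDensity_ofReal {α E : Type*} {mα : MeasurableSpace α}
    [NormedAddCommGroup E] [NormedSpace ℝ E] {ν : Measure α} {ρ : α → ℝ} (hρ : Measurable ρ)
    (hρ_nonneg : ∀ x, 0 ≤ ρ x) (f : α → E) :
    ∫ x, f x ∂ν.withDensity (fun x => ENNReal.ofReal (ρ x)) = ∫ x, ρ x • f x ∂ν := by
  simp_rw [integral_withDensity_eq_integral_toReal_smul hρ.ennreal_ofReal
    (.of_forall fun _ => ENNReal.ofReal_lt_top), ENNReal.toReal_ofReal (hρ_nonneg _)]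

section ProductMeasures

variable {ι : Type*} [Fintype ι] {X : ι → Type*} {mX : ∀ i, MeasurableSpace (X i)}
  {μ : ∀ i, Measure (X i)}

lemma integral_pi_finset_prod {𝕜 : Type*} [RCLike 𝕜] [∀ i, IsProbabilityMeasure (μ i)]
    (s : Finset ι) (f : ∀ i, X i → 𝕜) :
    ∫ x, ∏ i ∈ s, f i (x i) ∂Measure.pi μ = ∏ i ∈ s, ∫ x, f i x ∂μ i := by
  classical
  have integral_factor (i : ι) :
      ∫ x, (if i ∈ s then f i x else 1) ∂μ i = if i ∈ s then ∫ x, f i x ∂μ i else 1 := by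
    split_ifs <;> simp
  simpa only [integral_factor, Fintype.prod_ite_mem] using
    integral_fintype_prod_eq_prod (μ := μ) fun i x => if i ∈ s then f i x else 1

lemma integrable_pi_finset_prod {R : Type*} [NormedCommRing R] [∀ i, IsFiniteMeasure (μ i)]
    {s : Finset ι} {f : ∀ i, X i → R} (hf : ∀ i ∈ s, Integrable (f i) (μ i)) :
    Integrable (fun x => ∏ i ∈ s, f i (x i)) (Measure.pi μ) := by
  classical
  have integrable_factor (i : ι) : Integrable (fun x => if i ∈ s then f i x else 1) (μ i) := by
    split_ifs with hi
    · exact hf i hi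
    · exact integrable_const 1
  simpa only [Fintype.prod_ite_mem] using Integrable.fintype_prod_dep integrable_factor

lemma pi_withDensity_ofReal [∀ i, SigmaFinite (μ i)] {f : ∀ i, X i → ℝ}
    (hf : ∀ i, Integrable (f i) (μ i)) (hf_nonneg : ∀ i x, 0 ≤ f i x) :
    Measure.pi (fun i => (μ i).withDensity fun x => ENNReal.ofReal (f i x)) =
      (Measure.pi μ).withDensity fun x => ENNReal.ofReal (∏ i, f i (x i)) := by
  have (i : ι) : IsFiniteMeasure ((μ i).withDensity fun x => ENNReal.ofReal (f i x)) :=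
    isFiniteMeasure_withDensity_ofReal (hf i).2
  refine Measure.pi_eq fun s hs => ?_
  rw [withDensity_apply _ (.univ_pi hs), Measure.restrict_pi_pi,
    ← ofReal_integral_eq_lintegral_ofReal (.fintype_prod_dep fun i => (hf i).restrict)
      (.of_forall fun x => Finset.prod_nonneg fun i _ => hf_nonneg i (x i)),
    integral_fintype_prod_eq_prod,
    ENNReal.ofReal_prod_of_nonneg fun i _ => integral_nonneg (hf_nonneg i)]
  refine Finset.prod_congr rfl fun i _ => ?_
  rw [withDensity_apply _ (hs i),
    ofReal_integral_eq_lintegral_ofReal (hf i).restrict (.of_forall (hf_nonneg i))]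

end ProductMeasures

section Orthogonality

lemma integral_norm_sq_sum_of_orthogonal (𝕜 : Type*) {α κ E : Type*} [RCLike 𝕜]
    [NormedAddCommGroup E] [InnerProductSpace 𝕜 E] {mα : MeasurableSpace α} {ν : Measure α}
    {s : Finset κ} {f : κ → α → E} (hf : ∀ k ∈ s, MemLp (f k) 2 ν)
    (horth : ∀ k ∈ s, ∀ l ∈ s, k ≠ l → ∫ x, inner 𝕜 (f k x) (f l x) ∂ν = 0) :
    ∫ x, ‖∑ k ∈ s, f k x‖ ^ 2 ∂ν = ∑ k ∈ s, ∫ x, ‖f k x‖ ^ 2 ∂ν := by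
  have integrable_inner {k l : κ} (hk : k ∈ s) (hl : l ∈ s) :
      Integrable (fun x => inner 𝕜 (f k x) (f l x)) ν :=
    ((hf k hk).norm.integrable_mul (hf l hl).norm).mono' ((hf k hk).1.inner (hf l hl).1)
      (.of_forall fun x => norm_inner_le_norm _ _)
  apply RCLike.ofReal_injective (K := 𝕜)
  simp_rw [RCLike.ofReal_sum, ← integral_ofReal, RCLike.ofReal_pow, ← inner_self_eq_norm_sq_to_K,
    sum_inner, inner_sum]
  rw [integral_finsetSum _ fun k hk => integrable_finsetSum _ fun l hl => integrable_inner hk hl]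
  refine Finset.sum_congr rfl fun k hk => ?_
  rw [integral_finsetSum _ fun l hl => integrable_inner hk hl]
  exact Finset.sum_eq_single_of_mem k hk fun l hl hlk => horth k hk l hl hlk.symm

variable {ι 𝕜 : Type*} [Fintype ι] [RCLike 𝕜] {μ : ι → Measure 𝕜}

lemma integral_inner_monomial_of_ne [∀ i, SigmaFinite (μ i)] (hμ : ∀ i, ∫ w, w ∂μ i = 0)
    {s t : Finset ι} (hst : s ≠ t) :
    ∫ z, inner 𝕜 (∏ i ∈ s, z i) (∏ i ∈ t, z i) ∂Measure.pi μ = 0 := by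
  classical
  let factor (i : ι) (w : 𝕜) : 𝕜 :=
    (if i ∈ t then w else 1) * if i ∈ s then starRingEnd 𝕜 w else 1
  have inner_eq_prod (z : ι → 𝕜) :
      inner 𝕜 (∏ i ∈ s, z i) (∏ i ∈ t, z i) = ∏ i, factor i (z i) := by
    simp only [factor, RCLike.inner_apply, map_prod, Finset.prod_mul_distrib, Fintype.prod_ite_mem]
  obtain ⟨i, hi⟩ : ∃ i, ¬(i ∈ s ↔ i ∈ t) := by simpa [Finset.ext_iff] using hst
  have integral_factor : ∫ w, factor i w ∂μ i = 0 := by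
    by_cases his : i ∈ s
    · have hit : i ∉ t := fun hit => hi (iff_of_true his hit)
      simp only [factor, his, hit, if_true, if_false, one_mul]
      rw [integral_conj (f := fun w : 𝕜 => w), hμ, map_zero]
    · have hit : i ∈ t := by_contra fun hit => hi (iff_of_false his hit)
      simp only [factor, his, hit, if_true, if_false, mul_one, hμ]
  simp_rw [inner_eq_prod, integral_fintype_prod_eq_prod]
  exact Finset.prod_eq_zero (Finset.mem_univ i) integral_factor

lemma memLp_two_monomial [∀ i, IsFiniteMeasure (μ i)] {s : Finset ι}
    (hμ : ∀ i ∈ s, MemLp id 2 (μ i)) :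
    MemLp (fun z => ∏ i ∈ s, z i) 2 (Measure.pi μ) := by
  rw [memLp_two_iff_integrable_sq_norm (by fun_prop)]
  simp_rw [norm_prod, ← Finset.prod_pow]
  exact integrable_pi_finset_prod fun i hi => (hμ i hi).integrable_norm_pow two_ne_zero

variable [∀ i, IsProbabilityMeasure (μ i)]

lemma integral_norm_sq_monomial (s : Finset ι) :
    ∫ z, ‖∏ i ∈ s, z i‖ ^ 2 ∂Measure.pi μ = ∏ i ∈ s, ∫ w, ‖w‖ ^ 2 ∂μ i := by
  simp_rw [norm_prod, ← Finset.prod_pow]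
  exact integral_pi_finset_prod s fun _ w => ‖w‖ ^ 2

lemma integral_norm_sq_sum_mul_monomial {κ : Type*} [Fintype κ] (hμ : ∀ i, MemLp id 2 (μ i))
    (hμ_mean : ∀ i, ∫ w, w ∂μ i = 0) {S : κ → Finset ι} (hS : Function.Injective S) (c : κ → 𝕜) :
    ∫ z, ‖∑ k, c k * ∏ i ∈ S k, z i‖ ^ 2 ∂Measure.pi μ =
      ∑ k, ‖c k‖ ^ 2 * ∏ i ∈ S k, ∫ w, ‖w‖ ^ 2 ∂μ i := by
  rw [integral_norm_sq_sum_of_orthogonal 𝕜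
    fun k _ => (memLp_two_monomial fun i _ => hμ i).const_mul (c k)]
  · simp_rw [norm_mul, mul_pow, integral_const_mul, integral_norm_sq_monomial]
  · intro k _ l _ hkl
    simp_rw [← smul_eq_mul (c _), inner_smul_left, inner_smul_right, integral_const_mul,
      integral_inner_monomial_of_ne hμ_mean (hS.ne hkl), mul_zero]

end Orthogonality

section Determinant

variable {m : Type*} [Fintype m]

/-- The graph of a permutation, as a set of matrix positions. The row comes first, so that
`∏ p ∈ permGraph σ, z p` is the monomial of `σ` in the Leibniz formula `Matrix.det_apply`. -/
def permGraph (σ : Equiv.Perm m) : Finset (m × m) :=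
  Finset.univ.map ⟨fun j => (σ j, j), fun _ _ h => congrArg Prod.snd h⟩

lemma prod_permGraph {R : Type*} [CommMonoid R] (σ : Equiv.Perm m) (f : m × m → R) :
    ∏ p ∈ permGraph σ, f p = ∏ j, f (σ j, j) :=
  Finset.prod_map _ _ _

lemma permGraph_injective : Function.Injective (permGraph (m := m)) := by
  intro σ τ h
  ext j
  have hj : (σ j, j) ∈ permGraph τ := h ▸ Finset.mem_map_of_mem _ (Finset.mem_univ j)
  obtain ⟨k, -, hk⟩ := Finset.mem_map.1 hj
  obtain ⟨hτ, rfl⟩ := Prod.mk.inj hk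
  exact hτ.symm

variable [DecidableEq m]

theorem ginibre_expectation_det_sq_general {𝕜 : Type*} [RCLike 𝕜] {μ : m × m → Measure 𝕜}
    [∀ p, IsProbabilityMeasure (μ p)] (hμ : ∀ p, MemLp id 2 (μ p))
    (hμ_mean : ∀ p, ∫ w, w ∂μ p = 0) :
    ∫ z, ‖(Matrix.of fun i j => z (i, j)).det‖ ^ 2 ∂Measure.pi μ =
      (Matrix.of fun i j => ∫ w, ‖w‖ ^ 2 ∂μ (i, j)).permanent := by
  have det_eq_sum (z : m × m → 𝕜) : (Matrix.of fun i j => z (i, j)).det =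
      ∑ σ : Equiv.Perm m, ((Equiv.Perm.sign σ : ℤ) : 𝕜) * ∏ p ∈ permGraph σ, z p := by
    simp only [Matrix.det_apply', Matrix.of_apply, prod_permGraph]
  have norm_sign (σ : Equiv.Perm m) : ‖((Equiv.Perm.sign σ : ℤ) : 𝕜)‖ = 1 := by
    rcases Int.units_eq_one_or (Equiv.Perm.sign σ) with h | h <;> simp [h]
  simp_rw [det_eq_sum, integral_norm_sq_sum_mul_monomial hμ hμ_mean permGraph_injective,
    norm_sign, one_pow, one_mul, prod_permGraph, Matrix.permanent, Matrix.of_apply]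

lemma permanent_of_one {R : Type*} [CommSemiring R] :
    (Matrix.of fun _ _ : m => (1 : R)).permanent = (Fintype.card m).factorial := by
  simp [Matrix.permanent, Fintype.card_perm]

end Determinant

section ComplexGaussian

/-- The standard complex Gaussian law, i.e. the law of an entry of a Ginibre matrix. It is
normalised by `E|w|² = 1`, so the real and imaginary parts each have variance `1 / 2`. -/
noncomputable def complexGaussian : Measure ℂ :=
  volume.withDensity fun w => ENNReal.ofReal (Real.pi⁻¹ * Real.exp (-Complex.normSq w))

lemma integral_exp_neg_normSq : ∫ w : ℂ, Real.exp (-Complex.normSq w) = Real.pi := by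
  simpa [Complex.normSq_eq_norm_sq, one_add_one_eq_two] using
    Complex.integral_exp_neg_rpow one_le_two

lemma integral_norm_sq_mul_exp_neg_normSq :
    ∫ w : ℂ, ‖w‖ ^ 2 * Real.exp (-Complex.normSq w) = Real.pi := by
  calc
    _ = ∫ w : ℂ, ‖w‖ ^ (2 : ℝ) * Real.exp (-‖w‖ ^ (2 : ℝ)) := by
      simp_rw [Complex.normSq_eq_norm_sq, Real.rpow_two]
    _ = 2 * Real.pi / 2 * Real.Gamma ((2 + 2) / 2) :=
      Complex.integral_rpow_mul_exp_neg_rpow one_le_two (by norm_num)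
    _ = Real.pi := by norm_num

lemma integrable_complexGaussian_density :
    Integrable fun w : ℂ => Real.pi⁻¹ * Real.exp (-Complex.normSq w) :=
  integrable_of_integral_eq_one <| by
    rw [integral_const_mul, integral_exp_neg_normSq, inv_mul_cancel₀ Real.pi_ne_zero]

instance isProbabilityMeasure_complexGaussian : IsProbabilityMeasure complexGaussian where
  measure_univ := by
    rw [complexGaussian, withDensity_apply _ .univ, Measure.restrict_univ,
      ← ofReal_integral_eq_lintegral_ofReal integrable_complexGaussian_density
        (.of_forall fun w => by positivity),
      integral_const_mul, integral_exp_neg_normSq, inv_mul_cancel₀ Real.pi_ne_zero,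
      ENNReal.ofReal_one]

variable {E : Type*} [NormedAddCommGroup E] [NormedSpace ℝ E]

lemma integral_complexGaussian (f : ℂ → E) :
    ∫ w, f w ∂complexGaussian =
      ∫ w, (Real.pi⁻¹ * Real.exp (-Complex.normSq w)) • f w :=
  integral_withDensity_ofReal (by fun_prop) (fun w => by positivity) f

lemma integral_pi_complexGaussian {ι : Type*} [Fintype ι] (f : (ι → ℂ) → E) :
    ∫ z, f z ∂Measure.pi (fun _ => complexGaussian) =
      ∫ z, (Real.pi⁻¹ ^ Fintype.card ι * Real.exp (-∑ i, Complex.normSq (z i))) • f z := by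
  unfold complexGaussian
  rw [pi_withDensity_ofReal (fun _ => integrable_complexGaussian_density)
      (fun _ w => by positivity),
    integral_withDensity_ofReal (by fun_prop) (fun z => by positivity), ← volume_pi]
  simp_rw [Finset.prod_mul_distrib, Finset.prod_const, Finset.card_univ, ← Real.exp_sum,
    Finset.sum_neg_distrib]

lemma integral_id_complexGaussian : ∫ w, w ∂complexGaussian = 0 := by
  have h := integral_neg_eq_self
    (fun w : ℂ => (Real.pi⁻¹ * Real.exp (-Complex.normSq w)) • w) volume
  simp_rw [Complex.normSq_neg, smul_neg, integral_neg] at h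
  rw [integral_complexGaussian]
  exact neg_eq_self.mp h

lemma integral_norm_sq_complexGaussian : ∫ w, ‖w‖ ^ 2 ∂complexGaussian = 1 := by
  simp_rw [integral_complexGaussian, smul_eq_mul, mul_assoc, mul_comm (Real.exp _),
    integral_const_mul, integral_norm_sq_mul_exp_neg_normSq, inv_mul_cancel₀ Real.pi_ne_zero]

lemma memLp_two_id_complexGaussian : MemLp id 2 complexGaussian :=
  (memLp_two_iff_integrable_sq_norm (by fun_prop)).2 <|
    integrable_of_integral_eq_one integral_norm_sq_complexGaussian

end ComplexGaussian

/-- In the Segal–Bargmann space of `ℂ^{n×n}` with Gaussian measure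
`π^{-n²} e^{-Tr(z*z)} dz` (the complex Ginibre ensemble), the squared norm of the
determinant function equals `n!`: `E|λ₁(z)⋯λₙ(z)|² = n!`. -/
theorem ginibre_expectation_det_sq (n : ℕ) :
    (Real.pi) ^ (-(n ^ 2 : ℤ)) *
        ∫ z : Fin n × Fin n → ℂ,
          ‖(Matrix.of fun i j : Fin n => z (i, j)).det‖ ^ 2 *
            Real.exp (-(∑ p, Complex.normSq (z p))) = (Nat.factorial n : ℝ) := by
  have pi_zpow : Real.pi ^ (-(n ^ 2 : ℤ)) = Real.pi⁻¹ ^ Fintype.card (Fin n × Fin n) := by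
    rw [zpow_neg, inv_pow, Fintype.card_prod, Fintype.card_fin, ← sq]
    norm_cast
  calc
    _ = ∫ z : Fin n × Fin n → ℂ, ‖(Matrix.of fun i j => z (i, j)).det‖ ^ 2
          ∂Measure.pi fun _ => complexGaussian := by
      simp_rw [integral_pi_complexGaussian, pi_zpow, ← integral_const_mul, smul_eq_mul, mul_assoc,
        mul_comm (Real.exp _)]
    _ = (Matrix.of fun _ _ : Fin n => (1 : ℝ)).permanent := by
      simp_rw [ginibre_expectation_det_sq_general (fun _ => memLp_two_id_complexGaussian)
        (fun _ => integral_id_complexGaussian), integral_norm_sq_complexGaussian]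
    _ = n.factorial := by rw [permanent_of_one, Fintype.card_fin]
end

section
/- A holomorphic function on the n×n complex matrices that is invariant under conjugation by all unitary matrices and vanishes on all diagonal matrices with distinct entries vanishes identically. -/
attribute [local instance] Matrix.normedAddCommGroup Matrix.normedSpace

/-!
Let `h` and `k` be Hermitian. The function `w ↦ F (h + w • k)` is entire, and for real `w` its
argument is Hermitian; so if `F` vanishes on Hermitian matrices, this function vanishes on `ℝ`,
hence also at `w = I`, and every matrix is of the form `h + I • k`. By the spectral theorem and
unitary invariance, the values of `F` on Hermitian matrices are its values on real diagonal
matrices, among which those with distinct entries are dense.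
-/

open Filter Function Matrix Topology

section Density

variable {ι X : Type*} [TopologicalSpace X] [PerfectSpace X]

theorem dense_setOf_apply_ne_apply {i j : ι} (hij : i ≠ j) : Dense {d : ι → X | d i ≠ d j} := by
  classical
  intro d
  have h_update : Continuous (update d i) := continuous_const.update i continuous_id
  have h_ne : Set.MapsTo (update d i) {d j}ᶜ {d : ι → X | d i ≠ d j} := fun x hx ↦ by
    simpa [hij.symm] using hx
  simpa only [update_eq_self] using
    map_mem_closure h_update (dense_compl_singleton (d j) (d i)) h_ne

theorem dense_setOf_injective [Finite ι] [T2Space X] : Dense {d : ι → X | Injective d} := by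
  have h_dense : Dense (⋂₀ Set.range fun p : {p : ι × ι // p.1 ≠ p.2} ↦
      {d : ι → X | d p.1.1 ≠ d p.1.2}) := by
    refine (Set.finite_range _).dense_sInter ?_ ?_
    · rintro _ ⟨p, rfl⟩
      exact isOpen_ne_fun (continuous_apply _) (continuous_apply _)
    · rintro _ ⟨p, rfl⟩
      exact dense_setOf_apply_ne_apply p.2
  refine h_dense.mono fun d hd i j hdij ↦ ?_
  by_contra hij
  exact hd _ ⟨⟨(i, j), hij⟩, rfl⟩ hdij

end Density

section Holomorphic

variable {E : Type*} [NormedAddCommGroup E] [NormedSpace ℂ E]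

theorem eq_of_differentiable_of_forall_ofReal {f g : ℂ → E} (hf : Differentiable ℂ f)
    (hg : Differentiable ℂ g) (hfg : ∀ t : ℝ, f t = g t) : f = g := by
  -- Complex differentiability yields analyticity for complete codomains: pass to the completion.
  let toCompl : E →L[ℂ] UniformSpace.Completion E := UniformSpace.Completion.toComplL
  have h_tendsto : Tendsto ((↑) : ℝ → ℂ) (𝓝[≠] (0 : ℝ)) (𝓝[≠] ((0 : ℝ) : ℂ)) :=
    Complex.continuous_ofReal.continuousWithinAt.tendsto_nhdsWithin
      fun _ ht ↦ Complex.ofReal_injective.ne ht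
  have h_frequently : ∃ᶠ w in 𝓝[≠] ((0 : ℝ) : ℂ), toCompl (f w) = toCompl (g w) :=
    h_tendsto.frequently <| .of_forall fun t ↦ congrArg toCompl (hfg t)
  have h_analytic {φ : ℂ → E} (hφ : Differentiable ℂ φ) :
      AnalyticOnNhd ℂ (toCompl ∘ φ) Set.univ :=
    fun w _ ↦ (toCompl.differentiable.comp hφ).analyticAt w
  have h_comp : toCompl ∘ f = toCompl ∘ g :=
    (h_analytic hf).eq_of_frequently_eq (h_analytic hg) h_frequently
  exact (UniformSpace.Completion.coe_injective E).comp_left h_comp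

theorem eq_of_differentiable_of_forall_isSelfAdjoint {A : Type*} [NormedAddCommGroup A]
    [NormedSpace ℂ A] [StarAddMonoid A] [StarModule ℂ A] {F G : A → E} (hF : Differentiable ℂ F)
    (hG : Differentiable ℂ G) (hFG : ∀ a, IsSelfAdjoint a → F a = G a) : F = G := by
  funext z
  let line (w : ℂ) : A := (realPart z : A) + w • (imaginaryPart z : A)
  have h_line : Differentiable ℂ line := by fun_prop
  have h_real (t : ℝ) : IsSelfAdjoint (line t) :=
    (realPart z).2.add <| .smul (Complex.conj_ofReal t) (imaginaryPart z).2
  have h_eq : F ∘ line = G ∘ line :=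
    eq_of_differentiable_of_forall_ofReal (hF.comp h_line) (hG.comp h_line)
      fun t ↦ hFG _ (h_real t)
  simpa only [Function.comp_apply, line, realPart_add_I_smul_imaginaryPart] using
    congrFun h_eq Complex.I

end Holomorphic

section UnitaryInvariant

variable {ι : Type*} [Fintype ι] [DecidableEq ι]

theorem unitary_invariant_apply_eq_apply_diagonal_eigenvalues {𝕜 α : Type*} [RCLike 𝕜]
    {F : Matrix ι ι 𝕜 → α}
    (hU : ∀ u : unitaryGroup ι 𝕜, ∀ z, F ((↑(u⁻¹) : Matrix ι ι 𝕜) * z * (↑u : Matrix ι ι 𝕜)) = F z)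
    {A : Matrix ι ι 𝕜} (hA : A.IsHermitian) :
    F A = F (diagonal (RCLike.ofReal ∘ hA.eigenvalues)) := by
  rw [← hA.conjStarAlgAut_star_eigenvectorUnitary, Unitary.conjStarAlgAut_star_apply]
  exact (hU hA.eigenvectorUnitary A).symm

theorem unitary_invariant_holomorphic_vanishing_on_Dreg_eq_zero_general {E : Type*}
    [NormedAddCommGroup E] [NormedSpace ℂ E] {F : Matrix ι ι ℂ → E} (hF : Differentiable ℂ F)
    (hU : ∀ u : unitaryGroup ι ℂ, ∀ z, F ((↑(u⁻¹) : Matrix ι ι ℂ) * z * (↑u : Matrix ι ι ℂ)) = F z)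
    (hD : ∀ d : ι → ℝ, Injective d → F (diagonal fun i ↦ (d i : ℂ)) = 0) :
    F = 0 := by
  have h_cont : Continuous fun d : ι → ℝ ↦ F (diagonal fun i ↦ (d i : ℂ)) :=
    hF.continuous.comp <| Continuous.matrix_diagonal <| by fun_prop
  have h_diagonal : (fun d : ι → ℝ ↦ F (diagonal fun i ↦ (d i : ℂ))) = 0 :=
    h_cont.ext_on dense_setOf_injective continuous_zero hD
  refine eq_of_differentiable_of_forall_isSelfAdjoint hF (differentiable_const 0) fun A hA ↦ ?_
  rw [unitary_invariant_apply_eq_apply_diagonal_eigenvalues hU hA]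
  exact congrFun h_diagonal _

end UnitaryInvariant

/-- A holomorphic function on `M_n(ℂ)` invariant under unitary conjugation which
vanishes on all diagonal matrices with pairwise distinct entries vanishes identically. -/
theorem unitary_invariant_holomorphic_vanishing_on_Dreg_eq_zero (n : ℕ)
    (F : Matrix (Fin n) (Fin n) ℂ → ℂ) (hF : Differentiable ℂ F)
    (hU : ∀ u : Matrix.unitaryGroup (Fin n) ℂ, ∀ z,
      F ((↑(u⁻¹) : Matrix (Fin n) (Fin n) ℂ) * z * (↑u : Matrix (Fin n) (Fin n) ℂ)) = F z)
    (hD : ∀ d : Fin n → ℂ, Function.Injective d → F (Matrix.diagonal d) = 0) :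
    ∀ z, F z = 0 :=
  congrFun <| unitary_invariant_holomorphic_vanishing_on_Dreg_eq_zero_general hF hU
    fun _ hd ↦ hD _ (Complex.ofReal_injective.comp hd)
end

section
/- The HCIZ kernel identity holds: for real diagonal matrices A = diag(a₁,…,aₙ), B = diag(b₁,…,bₙ) with a₁ < ⋯ < aₙ and b₁ < ⋯ < bₙ, the integral ∫_{U(n)} e^{Tr(uAu⁻¹B)} du equals (∏_{p=1}^{n−1} p!) · det[e^{a_i b_j}]_{i,j=1}^n / (Δ(A) Δ(B)), where Δ(A) = ∏_{i<j}(a_j − a_i). -/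
open MeasureTheory

noncomputable instance unitaryGroupMeasurableSpace (n : ℕ) :
    MeasurableSpace (Matrix.unitaryGroup (Fin n) ℂ) := borel _

instance unitaryGroupBorelSpace (n : ℕ) :
    BorelSpace (Matrix.unitaryGroup (Fin n) ℂ) := ⟨rfl⟩

/-!
Translating the integration variable by `exp (tY)` gives Ward identities for the integral of
`exp (∑ c_i X_ii)` over the adjoint orbit of `Λ = diag l`. They trade an off-diagonal entry `X_ik`
for `(c_i - c_k)⁻¹` times a derivation, and so evaluate the integral of `det (X - z)`, which is
constant on the orbit, in terms of the diagonal entries alone. The outcome says that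
`Φ(c) = Δ(c) ∫ exp (∑ c_i X_ii)` satisfies `∏ (z - ∂_i) Φ = ∏ (z - l_i) Φ` for every `z`; comparing
powers of `z` and putting `z = ∂_i`, the characteristic polynomial of `Λ` in `∂_i` kills `Φ`.
The alternant `det (exp (l_i c_j))` solves the same equations. A solution is determined by its
derivatives `∂^α` at `0` with all `α_i < n`, hence, if it is antisymmetric, by `∏ ∂_i ^ i` alone,
which is `∏ i!` for `Φ` and `Δ(l)` for the alternant.
-/

namespace HCIZ

section Determinants

variable {ι R : Type*} [DecidableEq ι] [CommRing R]

theorem derivation_prod {A κ : Type*} [CommRing A] [Algebra R A] [DecidableEq κ]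
    (D : Derivation R A A) (s : Finset κ) (f : κ → A) :
    D (∏ i ∈ s, f i) = ∑ i ∈ s, D (f i) * ∏ j ∈ s.erase i, f j := by
  induction s using Finset.induction_on with
  | empty => simp
  | insert a s ha ih =>
    have erase_insert_prod : ∀ i ∈ s,
        ∏ j ∈ (insert a s).erase i, f j = f a * ∏ j ∈ s.erase i, f j := fun i hi => by
      rw [Finset.erase_insert_of_ne (ne_of_mem_of_not_mem hi ha).symm,
        Finset.prod_insert fun h => ha (Finset.mem_of_mem_erase h)]
    rw [Finset.prod_insert ha, D.leibniz, ih, Finset.sum_insert ha, Finset.erase_insert ha,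
      smul_eq_mul, smul_eq_mul, Finset.mul_sum, add_comm, mul_comm (D (f a))]
    congr 1
    exact Finset.sum_congr rfl fun i hi => by rw [erase_insert_prod i hi, mul_left_comm]

/-- The matrix `M` with its rows outside `S` replaced by those of the identity; its determinant is
the principal minor of `M` on `S`, but its size does not depend on `S`. -/
def principalRows (S : Finset ι) (M : Matrix ι ι R) : Matrix ι ι R :=
  Matrix.of fun i => if i ∈ S then M i else Pi.single i 1

theorem principalRows_of_mem {S : Finset ι} {i : ι} (hi : i ∈ S) (M : Matrix ι ι R) :
    principalRows S M i = M i :=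
  if_pos hi

theorem principalRows_of_notMem {S : Finset ι} {i : ι} (hi : i ∉ S) (M : Matrix ι ι R) :
    principalRows S M i = Pi.single i 1 :=
  if_neg hi

theorem principalRows_empty (M : Matrix ι ι R) : principalRows ∅ M = 1 := by
  ext i j
  simp [principalRows, Matrix.one_apply, Pi.single_apply, eq_comm]

theorem updateRow_principalRows (S : Finset ι) (i : ι) (M : Matrix ι ι R) :
    (principalRows S M).updateRow i (Pi.single i 1) = principalRows (S.erase i) M := by
  refine funext fun j => ?_
  obtain rfl | hj := eq_or_ne j i
  · rw [Matrix.updateRow_self, principalRows_of_notMem (Finset.notMem_erase j S)]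
  · rw [Matrix.updateRow_ne hj]
    by_cases hjS : j ∈ S
    · rw [principalRows_of_mem hjS, principalRows_of_mem (Finset.mem_erase.2 ⟨hj, hjS⟩)]
    · rw [principalRows_of_notMem hjS, principalRows_of_notMem fun h =>
        hjS (Finset.mem_of_mem_erase h)]

variable [Fintype ι]

theorem trace_mul_adjugate (M N : Matrix ι ι R) :
    (N * M.adjugate).trace = ∑ i, (M.updateRow i (N i)).det := by
  refine Finset.sum_congr rfl fun i _ => ?_
  rw [← Matrix.cramer_transpose_apply, Matrix.cramer_eq_adjugate_mulVec,
    ← Matrix.adjugate_transpose, Matrix.mulVec_transpose]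
  rfl

theorem derivation_det {A : Type*} [CommRing A] [Algebra R A] (D : Derivation R A A)
    (M : Matrix ι ι A) : D M.det = (M.map D * M.adjugate).trace := by
  have leibniz_term (σ : Equiv.Perm ι) (i : ι) :
      ∏ j, M.updateRow i (M.map D i) j (σ j) =
        D (M i (σ i)) * ∏ j ∈ Finset.univ.erase i, M j (σ j) := by
    rw [← Finset.mul_prod_erase _ _ (Finset.mem_univ i), Matrix.updateRow_self, Matrix.map_apply]
    congr 1
    exact Finset.prod_congr rfl fun j hj => by rw [Matrix.updateRow_ne (Finset.ne_of_mem_erase hj)]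
  calc D M.det = ∑ σ : Equiv.Perm ι, ∑ i, σ.sign • (D (M i (σ i)) *
        ∏ j ∈ Finset.univ.erase i, M j (σ j)) := by
        simp only [← Matrix.det_transpose M, Matrix.det_apply, map_sum, Units.smul_def, map_zsmul,
          Matrix.transpose_apply, derivation_prod, Finset.smul_sum]
    _ = ∑ i, (M.updateRow i (M.map D i)).det := by
        rw [Finset.sum_comm]
        refine Finset.sum_congr rfl fun i _ => ?_
        rw [← Matrix.det_transpose, Matrix.det_apply]
        simp only [Matrix.transpose_apply, leibniz_term]
    _ = (M.map D * M.adjugate).trace := (trace_mul_adjugate M _).symm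

theorem trace_single_row_mul_adjugate (M : Matrix ι ι R) (i : ι) (v : ι → R) :
    ((0 : Matrix ι ι R).updateRow i v * M.adjugate).trace = (M.updateRow i v).det := by
  rw [trace_mul_adjugate, Finset.sum_eq_single i, Matrix.updateRow_self]
  · intro j _ hj
    rw [Matrix.updateRow_ne hj]
    exact Matrix.det_eq_zero_of_row_eq_zero j fun k => by simp
  · simp

theorem det_updateRow_of_col_eq_single (M : Matrix ι ι R) (k : ι) (v : ι → R)
    (hM : M.col k = Pi.single k 1) : (M.updateRow k v).det = v k * M.det := by
  have mulVec_single : M.mulVec (Pi.single k 1) = Pi.single k 1 := by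
    rw [Matrix.mulVec_single_one, hM]
  have adjugate_mulVec : M.adjugate.mulVec (Pi.single k 1) = M.det • Pi.single k 1 := by
    conv_lhs => rw [← mulVec_single]
    rw [Matrix.mulVec_mulVec, Matrix.adjugate_mul, Matrix.smul_mulVec, Matrix.one_mulVec]
  have adjugate_apply (j : ι) : M.adjugate j k = M.det * (Pi.single k 1 : ι → R) j := by
    simpa using congrFun adjugate_mulVec j
  rw [← Matrix.cramer_transpose_apply, Matrix.cramer_eq_adjugate_mulVec,
    ← Matrix.adjugate_transpose, Matrix.mulVec_transpose, Matrix.vecMul, dotProduct]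
  simp [adjugate_apply, Pi.single_apply]

theorem principalRows_univ (M : Matrix ι ι R) : principalRows Finset.univ M = M := by
  ext i j
  simp [principalRows]

theorem det_principalRows_expand {S : Finset ι} {i : ι} (hi : i ∈ S) (M : Matrix ι ι R) :
    (principalRows S M).det = M i i * (principalRows (S.erase i) M).det +
      ∑ k ∈ S.erase i, M i k * ((principalRows S M).updateRow i (Pi.single k 1)).det := by
  have vanish_outside (k : ι) (hk : k ∉ S) :
      ((principalRows S M).updateRow i (Pi.single k 1)).det = 0 := by
    have hik : i ≠ k := ne_of_mem_of_not_mem hi hk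
    refine Matrix.det_zero_of_row_eq hik ?_
    rw [Matrix.updateRow_self, Matrix.updateRow_ne hik.symm, principalRows_of_notMem hk]
  rw [Matrix.det_eq_sum_mul_adjugate_row _ i, principalRows_of_mem hi,
    ← updateRow_principalRows, Finset.add_sum_erase _
      (fun k => M i k * ((principalRows S M).updateRow i (Pi.single k 1)).det) hi]
  simp only [Matrix.adjugate_apply]
  refine (Finset.sum_subset S.subset_univ fun k _ hk => ?_).symm
  rw [vanish_outside k hk, mul_zero]

theorem map_derivation_updateRow_principalRows {A : Type*} [CommRing A] [Algebra R A]
    {S : Finset ι} {i k : ι} (hk : k ∈ S) (hik : i ≠ k) (M : Matrix ι ι A)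
    (D : Derivation R A A) (hD : M.map D = ⁅Matrix.single k i (1 : A), M⁆) :
    let N := (principalRows S M).updateRow i (Pi.single k 1)
    N.map D = -(N * Matrix.single k i 1) + (0 : Matrix ι ι A).updateRow k (M i) +
      (0 : Matrix ι ι A).updateRow i (Pi.single i 1) := by
  intro N
  have map_single (a b : ι) : D ((Pi.single a 1 : ι → A) b) = 0 := by
    rw [Pi.single_apply, apply_ite D, D.map_one_eq_zero, map_zero, ite_self]
  have lie_apply (a b : ι) :
      D (M a b) = (if a = k then M i b else 0) - if b = i then M a k else 0 := by
    rw [← Matrix.map_apply (f := D), hD, Ring.lie_def, Matrix.single_mul_eq_updateRow_zero,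
      Matrix.mul_single_eq_updateCol_zero]
    simp [Matrix.updateRow_apply, Matrix.updateCol_apply]
  ext a b
  rw [Matrix.mul_single_eq_updateCol_zero, Matrix.map_apply, Matrix.add_apply, Matrix.add_apply,
    Matrix.neg_apply, Matrix.updateCol_apply]
  obtain rfl | ha := eq_or_ne a i
  · simp [N, hik, Pi.single_apply, apply_ite D]
  have N_row : N a = principalRows S M a := Matrix.updateRow_ne ha
  by_cases haS : a ∈ S
  · rw [N_row, principalRows_of_mem haS, lie_apply]
    simp [Matrix.updateRow_apply, ha, sub_eq_neg_add, N_row, principalRows_of_mem haS]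
  · have hak : a ≠ k := fun h => haS (h ▸ hk)
    rw [N_row, principalRows_of_notMem haS, map_single]
    simp [hak, ha, N_row, principalRows_of_notMem haS]

theorem derivation_det_updateRow_principalRows {A : Type*} [CommRing A] [Algebra R A]
    {S : Finset ι} {i k : ι} (hi : i ∈ S) (hk : k ∈ S) (hik : i ≠ k) (M : Matrix ι ι A)
    (D : Derivation R A A) (hD : M.map D = ⁅Matrix.single k i (1 : A), M⁆) :
    D ((principalRows S M).updateRow i (Pi.single k 1)).det =
      (principalRows (S.erase i) M).det - (principalRows (S.erase k) M).det := by
  have map_N := map_derivation_updateRow_principalRows hk hik M D hD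
  set N := (principalRows S M).updateRow i (Pi.single k 1) with hN
  have row_i : N.updateRow i (Pi.single i 1) = principalRows (S.erase i) M := by
    rw [hN, Matrix.updateRow_idem, updateRow_principalRows]
  have row_k : N.updateRow k (M i) =
      (principalRows (S.erase k) M).submatrix (Equiv.swap i k) id := by
    rw [← updateRow_principalRows]
    refine funext fun a => ?_
    change _ = (principalRows S M).updateRow k (Pi.single k 1) (Equiv.swap i k a)
    obtain rfl | hak := eq_or_ne a k
    · rw [Matrix.updateRow_self, Equiv.swap_apply_right, Matrix.updateRow_ne hik,
        principalRows_of_mem hi]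
    obtain rfl | hai := eq_or_ne a i
    · rw [Matrix.updateRow_ne hik, hN, Matrix.updateRow_self, Equiv.swap_apply_left,
        Matrix.updateRow_self]
    · rw [Equiv.swap_apply_of_ne_of_ne hai hak, Matrix.updateRow_ne hak, Matrix.updateRow_ne hak,
        hN, Matrix.updateRow_ne hai]
  rw [derivation_det, map_N, add_mul, add_mul, neg_mul, Matrix.trace_add, Matrix.trace_add,
    Matrix.trace_neg, trace_single_row_mul_adjugate, trace_single_row_mul_adjugate, row_i, row_k,
    Matrix.det_permute, Equiv.Perm.sign_swap hik, Matrix.trace_mul_cycle, Matrix.adjugate_mul,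
    Matrix.smul_mul, one_mul, Matrix.trace_smul, Matrix.trace_single_eq_of_ne _ _ _ hik.symm]
  rw [smul_zero, neg_zero, zero_add, Units.val_neg, Units.val_one, Int.cast_neg, Int.cast_one,
    neg_one_mul, neg_add_eq_sub]

end Determinants

section SymbolMatrix

variable {ι R : Type*} [DecidableEq ι] [CommRing R]

/-- The sum of `diag θ` and the Laplacian of the complete graph on `S` with edge weights `w`, the
rows outside `S` being those of the identity. For `w i j = (c i - c j)⁻¹` and full `S`, its
determinant is `Δ(c)⁻¹ ∏ (∂_i + θ_i) Δ(c)`, where `Δ` is the Vandermonde product. -/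
def symbolMatrix (w : ι → ι → R) (S : Finset ι) (θ : ι → R) : Matrix ι ι R :=
  Matrix.of fun i j =>
    if i ∈ S then
      if i = j then θ i + ∑ k ∈ S.erase i, w i k else if j ∈ S then -w i j else 0
    else if i = j then 1 else 0

theorem symbolMatrix_empty (w : ι → ι → R) (θ : ι → R) : symbolMatrix w ∅ θ = 1 := by
  ext i j
  simp [symbolMatrix, Matrix.one_apply]

theorem symbolMatrix_map {R' : Type*} [CommRing R'] (f : R →+* R') (w : ι → ι → R) (S : Finset ι)
    (θ : ι → R) :
    (symbolMatrix w S θ).map f = symbolMatrix (fun i j => f (w i j)) S (f ∘ θ) := by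
  ext i j
  simp only [symbolMatrix, Matrix.map_apply, Matrix.of_apply, apply_ite f, map_add, map_sum,
    map_neg, map_zero, map_one, Function.comp_apply]

variable [Fintype ι]

theorem symbolMatrix_updateCol_mul_diagonal {w : ι → ι → R} {c : ι → R}
    (hw : ∀ i j, i ≠ j → w i j * (c i - c j) = 1) (S : Finset ι) (θ : ι → R) {k : ι} (hk : k ∈ S) :
    let γ : ι → R := fun j => if j ∈ S.erase k then c j - c k else 1
    let χ : ι → R := fun j => if j ∈ S then 1 else 0
    (symbolMatrix w S θ).updateCol k χ * Matrix.diagonal γ =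
      Matrix.diagonal γ * symbolMatrix w (S.erase k) θ +
        (Matrix.vecMulVec χ χ - Matrix.single k k 1) := by
  intro γ χ
  ext i j
  rw [Matrix.mul_diagonal, Matrix.add_apply, Matrix.diagonal_mul, Matrix.sub_apply,
    Matrix.vecMulVec_apply]
  by_cases hi : i ∈ S
  · obtain rfl | hik := eq_or_ne i k
    · obtain rfl | hij := eq_or_ne j i
      · simp [γ, χ, symbolMatrix, hi]
      · by_cases hj : j ∈ S
        · simp only [γ, χ, symbolMatrix, Matrix.updateCol_ne hij, Matrix.of_apply, hi, hj, hij,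
            hij.symm, Finset.mem_erase, ne_eq, not_false_eq_true, not_true_eq_false, and_self,
            false_and, if_true, if_false, Matrix.single_apply_of_col_ne _ _ hij.symm]
          linear_combination hw i j hij.symm
        · simp [γ, χ, symbolMatrix, hi, hj, hij, hij.symm]
    · obtain rfl | hjk := eq_or_ne j k
      · simp [γ, χ, symbolMatrix, hi, hik, hik.symm, hk]
      · obtain rfl | hij := eq_or_ne i j
        · have split_sum : ∑ l ∈ S.erase i, w i l = w i k + ∑ l ∈ (S.erase k).erase i, w i l := by
            rw [Finset.erase_right_comm, Finset.add_sum_erase _ _ (by simp [hik.symm, hk])]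
          simp only [γ, χ, symbolMatrix, Matrix.updateCol_ne hik, Matrix.of_apply, hi, hik,
            Finset.mem_erase, ne_eq, not_false_eq_true, and_self, if_true, split_sum,
            Matrix.single_apply_of_row_ne hik.symm]
          linear_combination hw i k hik
        · by_cases hj : j ∈ S
          · simp only [γ, χ, symbolMatrix, Matrix.updateCol_ne hjk, Matrix.of_apply, hi, hj, hik,
              hij, hjk, Finset.mem_erase, ne_eq, not_false_eq_true, and_self, if_true, if_false,
              Matrix.single_apply_of_row_ne hik.symm]
            linear_combination hw i j hij
          · simp [γ, χ, symbolMatrix, hi, hj, hik, hjk, hij, hik.symm]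
  · have hik := (ne_of_mem_of_not_mem hk hi).symm
    by_cases hjk : j = k <;> by_cases hij : i = j <;>
      simp_all [γ, χ, symbolMatrix, eq_comm]

theorem det_symbolMatrix_updateCol {w : ι → ι → R} {c : ι → R}
    (hw : ∀ i j, i ≠ j → w i j * (c i - c j) = 1) (S : Finset ι) (θ : ι → R) {k : ι} (hk : k ∈ S) :
    ((symbolMatrix w S θ).updateCol k fun j => if j ∈ S then 1 else 0).det =
      (symbolMatrix w (S.erase k) θ).det := by
  set χ : ι → R := fun j => if j ∈ S then 1 else 0
  let γ : ι → R := fun j => if j ∈ S.erase k then c j - c k else 1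
  set B := Matrix.diagonal γ * symbolMatrix w (S.erase k) θ with hB
  have χ_k : χ k = 1 := if_pos hk
  have γ_unit : IsUnit (∏ j, γ j) := by
    refine IsUnit.prod_univ_iff.2 fun j => ?_
    by_cases hj : j ∈ S.erase k
    · simp only [γ, if_pos hj]
      exact .of_mul_eq_one_right _ (hw j k (Finset.ne_of_mem_erase hj))
    · simp only [γ, if_neg hj, isUnit_one]
  have B_row : B k = Pi.single k 1 := by
    ext j
    simp [hB, γ, symbolMatrix, Pi.single_apply, eq_comm]
  have B_col : B.col k = Pi.single k 1 := by
    ext i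
    by_cases hi : i = k <;> simp [hB, γ, symbolMatrix, hi]
  -- Row `k` of the sum is `χ`, which clears the rank-one term from the other rows.
  have clear_rows : (B + (Matrix.vecMulVec χ χ - Matrix.single k k 1)).det =
      (B.updateRow k χ).det := by
    refine Matrix.det_eq_of_forall_row_eq_smul_add_const (Function.update χ k 0) k (by simp) ?_
    intro i j
    obtain rfl | hi := eq_or_ne i k
    · simp [B_row, Matrix.vecMulVec_apply, χ_k, Matrix.single_apply, Pi.single_apply, eq_comm]
    · simp [hi, hi.symm, Matrix.vecMulVec_apply]
  have h := congrArg Matrix.det (symbolMatrix_updateCol_mul_diagonal hw S θ hk)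
  rw [Matrix.det_mul, Matrix.det_diagonal, clear_rows, det_updateRow_of_col_eq_single _ _ _ B_col,
    χ_k, one_mul, hB, Matrix.det_mul, Matrix.det_diagonal, mul_comm] at h
  exact γ_unit.mul_left_cancel h

theorem det_symbolMatrix_expand {w : ι → ι → R} {c : ι → R}
    (hw : ∀ i j, i ≠ j → w i j * (c i - c j) = 1) {S : Finset ι} {i : ι} (hi : i ∈ S) (θ : ι → R) :
    (symbolMatrix w S θ).det = θ i * (symbolMatrix w (S.erase i) θ).det +
      ∑ k ∈ S.erase i, w i k *
        ((symbolMatrix w (S.erase i) θ).det - (symbolMatrix w (S.erase k) θ).det) := by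
  set χ : ι → R := fun j => if j ∈ S then 1 else 0
  have h := congrFun (Matrix.mulVec_cramer (symbolMatrix w S θ) χ) i
  have cramer_term (k : ι) : symbolMatrix w S θ i k * (symbolMatrix w S θ).cramer χ k =
      if k ∈ S then symbolMatrix w S θ i k * (symbolMatrix w (S.erase k) θ).det else 0 := by
    by_cases hk : k ∈ S
    · rw [if_pos hk, Matrix.cramer_apply, det_symbolMatrix_updateCol hw S θ hk]
    · simp [hk, symbolMatrix, hi, ne_of_mem_of_not_mem hi hk]
  have off_diagonal : ∀ k ∈ S.erase i, symbolMatrix w S θ i k = -w i k := fun k hk => by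
    simp [symbolMatrix, hi, Finset.mem_of_mem_erase hk, (Finset.ne_of_mem_erase hk).symm]
  calc (symbolMatrix w S θ).det
      = ∑ k ∈ S, symbolMatrix w S θ i k * (symbolMatrix w (S.erase k) θ).det := by
        simpa [χ, hi, Matrix.mulVec, dotProduct, cramer_term] using h.symm
    _ = (θ i + ∑ k ∈ S.erase i, w i k) * (symbolMatrix w (S.erase i) θ).det +
        ∑ k ∈ S.erase i, -w i k * (symbolMatrix w (S.erase k) θ).det := by
        rw [← Finset.add_sum_erase _ _ hi]
        congr 1
        · simp [symbolMatrix, hi]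
        · exact Finset.sum_congr rfl fun k hk => by rw [off_diagonal k hk]
    _ = _ := by
        simp only [mul_sub, Finset.sum_sub_distrib, neg_mul, Finset.sum_neg_distrib,
          ← Finset.sum_mul]
        ring

end SymbolMatrix

section ConfluentVandermonde

open Polynomial

variable {F : Type*} [Field F]

theorem eval_derivative_nodal {κ : Type*} {s : Finset κ} {c : κ → F} {x : F}
    (hx : ∀ i ∈ s, x ≠ c i) :
    (derivative (Lagrange.nodal s c)).eval x =
      (∏ i ∈ s, (x - c i)) * ∑ i ∈ s, (x - c i)⁻¹ := by
  classical
  rw [Lagrange.derivative_nodal, eval_finsetSum, Finset.mul_sum]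
  refine Finset.sum_congr rfl fun i hi => ?_
  rw [Lagrange.eval_nodal, ← Finset.mul_prod_erase _ _ hi, mul_comm (x - c i), mul_assoc,
    mul_inv_cancel₀ (sub_ne_zero.2 (hx i hi)), mul_one]

/-- The square matrix of the functional `p ↦ θ i * p (c i) + p' (c i)` in the monomial basis. -/
def confluentVandermonde {R : Type*} [CommRing R] {n : ℕ} (θ c : Fin n → R) :
    Matrix (Fin n) (Fin n) R :=
  Matrix.of fun i j => θ i * c i ^ (j : ℕ) + (j : ℕ) * c i ^ ((j : ℕ) - 1)

theorem confluentVandermonde_mul_coeff {R : Type*} [CommRing R] {n : ℕ} (θ c : Fin n → R)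
    {p : Fin n → R[X]} (hp : ∀ l, (p l).natDegree < n) :
    confluentVandermonde θ c * Matrix.of (fun j l : Fin n => (p l).coeff j) =
      Matrix.of fun i l => θ i * (p l).eval (c i) + (derivative (p l)).eval (c i) := by
  ext i l
  rw [Matrix.mul_apply, Matrix.of_apply, derivative_eval, sum_over_range' _ (by simp) n (hp l),
    eval_eq_sum_range' (hp l), Finset.sum_range, Finset.sum_range, Finset.mul_sum,
    ← Finset.sum_add_distrib]
  refine Finset.sum_congr rfl fun j _ => ?_
  simp only [confluentVandermonde, Matrix.of_apply]
  ring

theorem vandermonde_mul_coeff {R : Type*} [CommRing R] {n : ℕ} (c : Fin n → R)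
    {p : Fin n → R[X]} (hp : ∀ l, (p l).natDegree < n) :
    Matrix.vandermonde c * Matrix.of (fun j l : Fin n => (p l).coeff j) =
      Matrix.of fun i l => (p l).eval (c i) := by
  ext i l
  rw [Matrix.mul_apply, Matrix.of_apply, eval_eq_sum_range' (hp l), Finset.sum_range]
  exact Finset.sum_congr rfl fun j _ => by rw [Matrix.vandermonde_apply, Matrix.of_apply, mul_comm]

theorem natDegree_nodal_erase_lt {R : Type*} [CommRing R] [Nontrivial R] {n : ℕ} (c : Fin n → R)
    (l : Fin n) : (Lagrange.nodal (Finset.univ.erase l) c).natDegree < n := by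
  rw [Lagrange.natDegree_nodal, Finset.card_erase_of_mem (Finset.mem_univ l), Finset.card_fin]
  exact Nat.sub_one_lt_of_lt l.pos

theorem vandermonde_mul_nodal_coeff {R : Type*} [CommRing R] [Nontrivial R] {n : ℕ}
    (c : Fin n → R) :
    Matrix.vandermonde c *
        Matrix.of (fun j l : Fin n => (Lagrange.nodal (Finset.univ.erase l) c).coeff j) =
      Matrix.diagonal fun i => ∏ j ∈ Finset.univ.erase i, (c i - c j) := by
  rw [vandermonde_mul_coeff c (natDegree_nodal_erase_lt c)]
  ext i l
  obtain rfl | h := eq_or_ne i l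
  · rw [Matrix.of_apply, Matrix.diagonal_apply_eq, Lagrange.eval_nodal]
  · rw [Matrix.of_apply, Matrix.diagonal_apply_ne _ h, Lagrange.eval_nodal_at_node (by simp [h])]

theorem confluentVandermonde_mul_nodal_coeff {n : ℕ} {c : Fin n → F} (hc : Function.Injective c)
    (θ : Fin n → F) :
    confluentVandermonde θ c *
        Matrix.of (fun j l : Fin n => (Lagrange.nodal (Finset.univ.erase l) c).coeff j) =
      Matrix.diagonal (fun i => ∏ j ∈ Finset.univ.erase i, (c i - c j)) *
        (symbolMatrix (fun i j => (c i - c j)⁻¹) Finset.univ θ).transpose := by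
  rw [confluentVandermonde_mul_coeff θ c (natDegree_nodal_erase_lt c)]
  ext i l
  rw [Matrix.diagonal_mul, Matrix.of_apply, Matrix.transpose_apply]
  obtain rfl | h := eq_or_ne i l
  · rw [Lagrange.eval_nodal,
      eval_derivative_nodal fun j hj => hc.ne (Finset.ne_of_mem_erase hj).symm]
    simp only [symbolMatrix, Matrix.of_apply, Finset.mem_univ, if_true]
    ring
  · have hl : l ∈ Finset.univ.erase i := by simp [h.symm]
    rw [Lagrange.eval_nodal_at_node (by simp [h]),
      Lagrange.eval_nodal_derivative_eval_node_eq (by simp [h]), Lagrange.eval_nodal,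
      Finset.erase_right_comm]
    simp only [symbolMatrix, Matrix.of_apply, Finset.mem_univ, if_true, h.symm, if_false,
      ← Finset.mul_prod_erase _ _ hl]
    field [sub_ne_zero.2 (hc.ne h), sub_ne_zero.2 (hc.ne h.symm)]

theorem det_vandermonde_mul_det_symbolMatrix {n : ℕ} {c : Fin n → F} (hc : Function.Injective c)
    (θ : Fin n → F) :
    (Matrix.vandermonde c).det *
        (symbolMatrix (fun i j => (c i - c j)⁻¹) Finset.univ θ).det =
      (confluentVandermonde θ c).det := by
  have det_vandermonde := congrArg Matrix.det (vandermonde_mul_nodal_coeff c)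
  have det_confluent := congrArg Matrix.det (confluentVandermonde_mul_nodal_coeff hc θ)
  rw [Matrix.det_mul, Matrix.det_diagonal] at det_vandermonde
  rw [Matrix.det_mul, Matrix.det_mul, Matrix.det_diagonal, Matrix.det_transpose,
    ← det_vandermonde, mul_right_comm] at det_confluent
  refine mul_right_cancel₀ (fun h₀ => ?_) det_confluent.symm
  rw [h₀, mul_zero] at det_vandermonde
  exact Finset.prod_ne_zero_iff.2 (fun i _ => Finset.prod_ne_zero_iff.2 fun j hj =>
    sub_ne_zero.2 (hc.ne (Finset.ne_of_mem_erase hj).symm)) det_vandermonde.symm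

end ConfluentVandermonde

theorem hasDerivAt_integral_of_continuous {𝕜 K E : Type*} [RCLike 𝕜] [NormedAddCommGroup E]
    [NormedSpace ℝ E] [NormedSpace 𝕜 E] [TopologicalSpace K] [CompactSpace K]
    [MeasurableSpace K] [OpensMeasurableSpace K] {μ : Measure K} [IsFiniteMeasure μ]
    [SecondCountableTopologyEither K E]
    {f f' : 𝕜 → K → E} (hf : ∀ t, Continuous (f t)) (hf' : Continuous (Function.uncurry f'))
    (h : ∀ t x, HasDerivAt (fun s => f s x) (f' t x) t) (t₀ : 𝕜) :
    HasDerivAt (fun t => ∫ x, f t x ∂μ) (∫ x, f' t₀ x ∂μ) t₀ := by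
  have hf'_slice : Continuous (f' t₀) := hf'.comp (by fun_prop : Continuous fun x => (t₀, x))
  have compact : IsCompact (Metric.closedBall t₀ 1 ×ˢ (Set.univ : Set K)) :=
    (isCompact_closedBall t₀ 1).prod isCompact_univ
  obtain ⟨C, hC⟩ := compact.exists_bound_of_continuousOn hf'.continuousOn
  refine (hasDerivAt_integral_of_dominated_loc_of_deriv_le (bound := fun _ => C)
    (Metric.closedBall_mem_nhds t₀ one_pos)
    (.of_forall fun t => (hf t).aestronglyMeasurable_of_compactSpace)
    ((hf t₀).integrable_of_hasCompactSupport (.of_compactSpace _))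
    hf'_slice.aestronglyMeasurable_of_compactSpace
    (.of_forall fun x t ht => hC (t, x) ⟨ht, Set.mem_univ x⟩) (integrable_const C)
    (.of_forall fun x t _ => h t x)).2

section OrbitMean

open scoped Matrix.Norms.L2Operator

variable {ι : Type*}

/-- Evaluation of a polynomial in matrix entries at a matrix. -/
noncomputable def evalEntries (X : Matrix ι ι ℂ) : MvPolynomial (ι × ι) ℂ →ₐ[ℂ] ℂ :=
  MvPolynomial.aeval fun ij => X ij.1 ij.2

theorem continuous_evalEntries (p : MvPolynomial (ι × ι) ℂ) :
    Continuous fun X : Matrix ι ι ℂ => evalEntries X p := by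
  simp only [evalEntries, MvPolynomial.aeval_eq_eval]
  exact (MvPolynomial.continuous_eval p).comp (by fun_prop)

theorem map_evalEntries (X : Matrix ι ι ℂ) :
    (Matrix.mvPolynomialX ι ι ℂ).map (evalEntries X) = X := by
  ext i j
  simp [evalEntries]

theorem hasDerivAt_aeval_of_derivation {σ 𝕜 R A : Type*} [NontriviallyNormedField 𝕜]
    [CommRing R] [NormedCommRing A] [NormedAlgebra 𝕜 A] [Algebra R A]
    (D : Derivation R (MvPolynomial σ R) (MvPolynomial σ R)) {γ : 𝕜 → σ → A} {t : 𝕜}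
    (hγ : ∀ i, HasDerivAt (fun s => γ s i) (MvPolynomial.aeval (γ t) (D (.X i))) t)
    (p : MvPolynomial σ R) :
    HasDerivAt (fun s => MvPolynomial.aeval (γ s) p) (MvPolynomial.aeval (γ t) (D p)) t := by
  induction p using MvPolynomial.induction_on with
  | C a => simpa using hasDerivAt_const t (algebraMap R A a)
  | add p q hp hq => simpa only [map_add] using hp.fun_add hq
  | mul_X p i hp =>
    refine ((hp.mul (hγ i)).congr_deriv ?_).congr_of_eventuallyEq (.of_forall fun s => by simp)
    simp only [Derivation.leibniz, smul_eq_mul, map_add, map_mul, MvPolynomial.aeval_X]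
    ring

variable [Fintype ι] [DecidableEq ι]

instance unitaryGroup_compactSpace : CompactSpace (Matrix.unitaryGroup ι ℂ) := by
  have closed : IsClosed (Matrix.unitaryGroup ι ℂ : Set (Matrix ι ι ℂ)) := by
    have eq_setOf : (Matrix.unitaryGroup ι ℂ : Set (Matrix ι ι ℂ)) = {A | A * star A = 1} :=
      Set.ext fun _ => Matrix.mem_unitaryGroup_iff
    rw [eq_setOf]
    exact isClosed_eq (by fun_prop) continuous_const
  have compact_polydisc : IsCompact (Set.univ.pi fun _ : ι => Set.univ.pi fun _ : ι =>
      Metric.closedBall (0 : ℂ) 1) :=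
    isCompact_univ_pi fun _ => isCompact_univ_pi fun _ => isCompact_closedBall _ _
  refine isCompact_iff_compactSpace.1 (compact_polydisc.of_isClosed_subset closed ?_)
  intro A hA i _ j _
  simpa using entry_norm_bound_of_unitary hA i j

/-- The point `u Λ u⁻¹` of the adjoint orbit of `Λ`. -/
def orbitPoint (Λ : Matrix ι ι ℂ) (u : Matrix.unitaryGroup ι ℂ) : Matrix ι ι ℂ :=
  (u : Matrix ι ι ℂ) * Λ * star (u : Matrix ι ι ℂ)

theorem continuous_orbitPoint (Λ : Matrix ι ι ℂ) : Continuous (orbitPoint Λ) := by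
  unfold orbitPoint
  fun_prop

theorem orbitPoint_mul (Λ : Matrix ι ι ℂ) (g u : Matrix.unitaryGroup ι ℂ) :
    orbitPoint Λ (g * u) = orbitPoint (orbitPoint Λ u) g := by
  simp [orbitPoint, mul_assoc]

theorem det_orbitPoint (Λ : Matrix ι ι ℂ) (u : Matrix.unitaryGroup ι ℂ) :
    (orbitPoint Λ u).det = Λ.det := by
  rw [orbitPoint, Matrix.det_mul_comm, ← mul_assoc, Matrix.mem_unitaryGroup_iff'.1 u.2, one_mul]

theorem orbitPoint_sub_smul_one (Λ : Matrix ι ι ℂ) (z : ℂ) (u : Matrix.unitaryGroup ι ℂ) :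
    orbitPoint (Λ - z • 1) u = orbitPoint Λ u - z • 1 := by
  simp [orbitPoint, mul_sub, sub_mul, Matrix.mem_unitaryGroup_iff.1 u.2]

theorem hasDerivAt_orbitPoint_expUnitary (H : selfAdjoint (Matrix ι ι ℂ)) (Λ : Matrix ι ι ℂ)
    (t : ℝ) :
    HasDerivAt (fun s : ℝ => orbitPoint Λ (selfAdjoint.expUnitary (s • H)))
      ⁅Complex.I • (H : Matrix ι ι ℂ), orbitPoint Λ (selfAdjoint.expUnitary (t • H))⁆ t := by
  set Y : Matrix ι ι ℂ := Complex.I • (H : Matrix ι ι ℂ)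
  have star_Y : star Y = -Y := by simp [Y, H.2.star_eq]
  have coe_flow (s : ℝ) : (selfAdjoint.expUnitary (s • H) : Matrix ι ι ℂ) =
      NormedSpace.exp (s • Y) := by
    rw [selfAdjoint.expUnitary_coe, selfAdjoint.val_smul, smul_comm]
  have flow := hasDerivAt_exp_smul_const' (𝕂 := ℝ) Y t
  simp only [orbitPoint, coe_flow]
  refine ((flow.mul_const Λ).mul flow.star).congr_deriv ?_
  rw [star_mul, star_Y, Ring.lie_def]
  noncomm_ring

/-- The derivation of the coordinate ring of matrices given by the vector field `X ↦ ⁅Y, X⁆`. -/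
noncomputable def commutatorDerivation : Matrix ι ι ℂ →ₗ[ℂ]
    Derivation ℂ (MvPolynomial (ι × ι) ℂ) (MvPolynomial (ι × ι) ℂ) :=
  let commutator : Module.End ℂ (Matrix ι ι (MvPolynomial (ι × ι) ℂ)) :=
    .mulRight ℂ (Matrix.mvPolynomialX ι ι ℂ) - .mulLeft ℂ (Matrix.mvPolynomialX ι ι ℂ)
  (MvPolynomial.mkDerivationEquiv ℂ).toLinearMap ∘ₗ
    (LinearEquiv.curry ℂ _ ι ι).symm.toLinearMap ∘ₗ (Matrix.ofLinearEquiv ℂ).symm.toLinearMap ∘ₗ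
      commutator ∘ₗ (Algebra.linearMap ℂ (MvPolynomial (ι × ι) ℂ)).mapMatrix

theorem map_commutatorDerivation (Y : Matrix ι ι ℂ) :
    (Matrix.mvPolynomialX ι ι ℂ).map (commutatorDerivation Y) =
      ⁅Y.map (algebraMap ℂ (MvPolynomial (ι × ι) ℂ)), Matrix.mvPolynomialX ι ι ℂ⁆ := by
  ext1 i j
  exact MvPolynomial.mkDerivation_X ℂ _ _

theorem evalEntries_commutatorDerivation_X (X Y : Matrix ι ι ℂ) (ij : ι × ι) :
    evalEntries X (commutatorDerivation Y (.X ij)) = ⁅Y, X⁆ ij.1 ij.2 := by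
  have map_C : (Y.map (algebraMap ℂ (MvPolynomial (ι × ι) ℂ))).map (evalEntries X) = Y := by
    ext i j
    simp [evalEntries]
  calc evalEntries X (commutatorDerivation Y (.X ij))
      = ((Matrix.mvPolynomialX ι ι ℂ).map (commutatorDerivation Y)).map (evalEntries X)
          ij.1 ij.2 := rfl
    _ = ⁅Y, X⁆ ij.1 ij.2 := by
      rw [map_commutatorDerivation, Ring.lie_def, Ring.lie_def, Matrix.map_sub _ (map_sub _),
        Matrix.map_mul, Matrix.map_mul, map_C, map_evalEntries]

theorem continuous_evalEntries_mul_exp (Λ : Matrix ι ι ℂ) (p q : MvPolynomial (ι × ι) ℂ) :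
    Continuous fun u : Matrix.unitaryGroup ι ℂ =>
      evalEntries (orbitPoint Λ u) p * Complex.exp (evalEntries (orbitPoint Λ u) q) :=
  ((continuous_evalEntries p).comp (continuous_orbitPoint Λ)).mul
    ((continuous_evalEntries q).comp (continuous_orbitPoint Λ)).cexp

variable [MeasurableSpace (Matrix.unitaryGroup ι ℂ)] [BorelSpace (Matrix.unitaryGroup ι ℂ)]
  (μ : Measure (Matrix.unitaryGroup ι ℂ)) [IsFiniteMeasure μ]

/-- Integration of `p e^q` over the adjoint orbit of `Λ`, as a functional of the polynomial `p`. -/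
noncomputable def orbitMean (Λ : Matrix ι ι ℂ) (q : MvPolynomial (ι × ι) ℂ) :
    MvPolynomial (ι × ι) ℂ →ₗ[ℂ] ℂ where
  toFun p := ∫ u, evalEntries (orbitPoint Λ u) p * Complex.exp (evalEntries (orbitPoint Λ u) q) ∂μ
  map_add' p p' := by
    have integrable (p : MvPolynomial (ι × ι) ℂ) :=
      (continuous_evalEntries_mul_exp Λ p q).integrable_of_hasCompactSupport (μ := μ)
        (.of_compactSpace _)
    simp only [map_add, add_mul, integral_add (integrable p) (integrable p')]
  map_smul' r p := by
    simp only [map_smul, smul_eq_mul, mul_assoc, RingHom.id_apply, integral_const_mul]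

variable (Λ : Matrix ι ι ℂ) (q p : MvPolynomial (ι × ι) ℂ)

theorem orbitMean_apply : orbitMean μ Λ q p =
    ∫ u, evalEntries (orbitPoint Λ u) p * Complex.exp (evalEntries (orbitPoint Λ u) q) ∂μ := rfl

variable [μ.IsMulLeftInvariant]

theorem orbitMean_ward_selfAdjoint (H : selfAdjoint (Matrix ι ι ℂ)) :
    orbitMean μ Λ q (commutatorDerivation (Complex.I • (H : Matrix ι ι ℂ)) p +
      p * commutatorDerivation (Complex.I • (H : Matrix ι ι ℂ)) q) = 0 := by
  set D := commutatorDerivation (Complex.I • (H : Matrix ι ι ℂ))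
  let flow (t : ℝ) : Matrix.unitaryGroup ι ℂ := selfAdjoint.expUnitary (t • H)
  let integrand (p : MvPolynomial (ι × ι) ℂ) (u : Matrix.unitaryGroup ι ℂ) : ℂ :=
    evalEntries (orbitPoint Λ u) p * Complex.exp (evalEntries (orbitPoint Λ u) q)
  have continuous_integrand (p) : Continuous (integrand p) := continuous_evalEntries_mul_exp Λ p q
  have deriv_evalEntries (p : MvPolynomial (ι × ι) ℂ) (t : ℝ) (u) :
      HasDerivAt (fun s => evalEntries (orbitPoint Λ (flow s * u)) p)
        (evalEntries (orbitPoint Λ (flow t * u)) (D p)) t := by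
    refine hasDerivAt_aeval_of_derivation D (fun ij => ?_) p
    refine HasDerivAt.congr_deriv ?_ (evalEntries_commutatorDerivation_X _ _ ij).symm
    simp only [orbitPoint_mul]
    exact hasDerivAt_pi.1 (hasDerivAt_pi.1 (hasDerivAt_orbitPoint_expUnitary H _ t) ij.1) ij.2
  have deriv_integrand (t : ℝ) (u) : HasDerivAt (fun s => integrand p (flow s * u))
      (integrand (D p + p * D q) (flow t * u)) t := by
    refine ((deriv_evalEntries p t u).mul (deriv_evalEntries q t u).cexp).congr_deriv ?_
    simp only [integrand, map_add, map_mul]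
    ring
  have continuous_flow : Continuous flow := by
    fun_prop
  have deriv_integral := hasDerivAt_integral_of_continuous (μ := μ)
    (f := fun t u => integrand p (flow t * u))
    (fun t => (continuous_integrand p).comp (continuous_const_mul (flow t)))
    (f' := fun t u => integrand (D p + p * D q) (flow t * u))
    ((continuous_integrand (D p + p * D q)).comp (by fun_prop)) deriv_integrand 0
  simp only [integral_mul_left_eq_self] at deriv_integral
  exact deriv_integral.unique (hasDerivAt_const (0 : ℝ) _)

theorem orbitMean_ward (Y : Matrix ι ι ℂ) :
    orbitMean μ Λ q (commutatorDerivation Y p + p * commutatorDerivation Y q) = 0 := by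
  have ward (H : selfAdjoint (Matrix ι ι ℂ)) : orbitMean μ Λ q
      (commutatorDerivation (H : Matrix ι ι ℂ) p + p * commutatorDerivation (H : Matrix ι ι ℂ) q) =
        0 := by
    have := orbitMean_ward_selfAdjoint μ Λ q p H
    simpa [← mul_add] using this
  calc orbitMean μ Λ q (commutatorDerivation Y p + p * commutatorDerivation Y q)
      = orbitMean μ Λ q (commutatorDerivation (realPart Y : Matrix ι ι ℂ) p +
            p * commutatorDerivation (realPart Y : Matrix ι ι ℂ) q) +
          orbitMean μ Λ q (commutatorDerivation (Complex.I • (imaginaryPart Y : Matrix ι ι ℂ)) p +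
            p * commutatorDerivation (Complex.I • (imaginaryPart Y : Matrix ι ι ℂ)) q) := by
        conv_lhs => rw [← realPart_add_I_smul_imaginaryPart Y]
        simp only [map_add, Derivation.add_apply, mul_add]
        abel
    _ = 0 := by rw [ward, orbitMean_ward_selfAdjoint, add_zero]

end OrbitMean

section Capelli

variable {ι : Type*} [Fintype ι]

/-- The linear function `X ↦ ∑ c_j X_jj = Tr (X diag c)` on matrices. -/
noncomputable def diagonalForm (c : ι → ℂ) : MvPolynomial (ι × ι) ℂ :=
  ∑ j, MvPolynomial.C (c j) * .X (j, j)

theorem evalEntries_diagonalForm (c : ι → ℂ) (X : Matrix ι ι ℂ) :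
    evalEntries X (diagonalForm c) = ∑ j, c j * X j j := by
  simp [evalEntries, diagonalForm]

/-- The generic characteristic matrix `X - z`. -/
noncomputable def genericCharmatrix [DecidableEq ι] (z : ℂ) :
    Matrix ι ι (MvPolynomial (ι × ι) ℂ) :=
  Matrix.mvPolynomialX ι ι ℂ - (MvPolynomial.C z : MvPolynomial (ι × ι) ℂ) • 1

variable [DecidableEq ι]

theorem commutatorDerivation_single_X (k i : ι) (ab : ι × ι) :
    commutatorDerivation (Matrix.single k i (1 : ℂ)) (.X ab) =
      (if ab.1 = k then .X (i, ab.2) else 0) - if ab.2 = i then .X (ab.1, k) else 0 := by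
  have h := congrFun₂ (map_commutatorDerivation (Matrix.single k i (1 : ℂ))) ab.1 ab.2
  rw [Matrix.map_single, map_one] at h
  rw [Ring.lie_def, Matrix.single_mul_eq_updateRow_zero,
    Matrix.mul_single_eq_updateCol_zero] at h
  simpa [Matrix.updateRow_apply, Matrix.updateCol_apply] using h

theorem commutatorDerivation_diagonalForm (c : ι → ℂ) (k i : ι) :
    commutatorDerivation (Matrix.single k i (1 : ℂ)) (diagonalForm c) =
      MvPolynomial.C (c k - c i) * .X (i, k) := by
  simp [diagonalForm, Derivation.leibniz, commutatorDerivation_single_X, mul_sub, sub_mul]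

theorem map_commutatorDerivation_genericCharmatrix (z : ℂ) (k i : ι) :
    (genericCharmatrix (ι := ι) z).map (commutatorDerivation (Matrix.single k i (1 : ℂ))) =
      ⁅Matrix.single k i (1 : MvPolynomial (ι × ι) ℂ), genericCharmatrix z⁆ := by
  have map_scalar : ((MvPolynomial.C z : MvPolynomial (ι × ι) ℂ) • (1 : Matrix ι ι _)).map
      (commutatorDerivation (Matrix.single k i (1 : ℂ))) = 0 := by
    ext1 a b
    simp [Matrix.one_apply, apply_ite]
  rw [genericCharmatrix, Matrix.map_sub _ (map_sub _), map_scalar, map_commutatorDerivation,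
    Matrix.map_single, map_one, Ring.lie_def, Ring.lie_def, mul_sub, sub_mul, mul_smul_one,
    smul_one_mul, sub_sub_sub_cancel_right, sub_zero]

theorem commutatorDerivation_genericCharmatrix_diag (z : ℂ) {k i j : ι} (hj : j ≠ i)
    (hk : j ≠ k) :
    commutatorDerivation (Matrix.single k i (1 : ℂ)) (genericCharmatrix z j j) = 0 := by
  simp [genericCharmatrix, commutatorDerivation_single_X, hj, hk]

theorem evalEntries_det_genericCharmatrix (X : Matrix ι ι ℂ) (z : ℂ) :
    evalEntries X (genericCharmatrix z).det = (X - z • 1).det := by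
  have map_generic : (genericCharmatrix z).map (evalEntries X) = X - z • 1 := by
    ext1 i j
    by_cases hij : i = j <;> simp [genericCharmatrix, evalEntries, hij]
  rw [← map_generic]
  exact (evalEntries X).map_det _

variable [MeasurableSpace (Matrix.unitaryGroup ι ℂ)] [BorelSpace (Matrix.unitaryGroup ι ℂ)]
  (μ : Measure (Matrix.unitaryGroup ι ℂ)) [IsFiniteMeasure μ] (Λ : Matrix ι ι ℂ)

theorem orbitMean_det_genericCharmatrix (q : MvPolynomial (ι × ι) ℂ) (z : ℂ) :
    orbitMean μ Λ q (genericCharmatrix z).det = (Λ - z • 1).det * orbitMean μ Λ q 1 := by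
  simp only [orbitMean_apply, evalEntries_det_genericCharmatrix,
    ← orbitPoint_sub_smul_one, det_orbitPoint, map_one, one_mul, integral_const_mul]

variable [μ.IsMulLeftInvariant]

theorem orbitMean_X_mul {c : ι → ℂ} (hc : Function.Injective c) {i k : ι} (hik : i ≠ k)
    (p : MvPolynomial (ι × ι) ℂ) :
    orbitMean μ Λ (diagonalForm c) (.X (i, k) * p) = (c i - c k)⁻¹ *
      orbitMean μ Λ (diagonalForm c) (commutatorDerivation (Matrix.single k i (1 : ℂ)) p) := by
  have ward := orbitMean_ward μ Λ (diagonalForm c) p (Matrix.single k i 1)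
  rw [commutatorDerivation_diagonalForm, mul_left_comm, ← MvPolynomial.smul_eq_C_mul, map_add,
    map_smul, smul_eq_mul, mul_comm p] at ward
  rw [eq_inv_mul_iff_mul_eq₀ (sub_ne_zero.2 (hc.ne hik))]
  linear_combination -ward

theorem orbitMean_mul_det_principalRows {c : ι → ℂ} (hc : Function.Injective c) (z : ℂ)
    (S : Finset ι) (p : MvPolynomial (ι × ι) ℂ)
    (hp : ∀ i ∈ S, ∀ k ∈ S, i ≠ k → commutatorDerivation (Matrix.single k i (1 : ℂ)) p = 0) :
    orbitMean μ Λ (diagonalForm c) (p * (principalRows S (genericCharmatrix z)).det) =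
      orbitMean μ Λ (diagonalForm c) (p * (symbolMatrix (fun i j => .C (c i - c j)⁻¹) S
        (genericCharmatrix z).diag).det) := by
  induction S using Finset.strongInduction generalizing p with
  | H S ih =>
  obtain rfl | ⟨i, hi⟩ := S.eq_empty_or_nonempty
  · rw [principalRows_empty, symbolMatrix_empty]
  have hw (i j : ι) (hij : i ≠ j) : (MvPolynomial.C (c i - c j)⁻¹ : MvPolynomial (ι × ι) ℂ) *
      (.C (c i) - .C (c j)) = 1 := by
    rw [← map_sub, ← map_mul, inv_mul_cancel₀ (sub_ne_zero.2 (hc.ne hij)), map_one]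
  have erase_step (k : ι) (hk : k ∈ S) := ih (S.erase k) (Finset.erase_ssubset hk) p
    fun a ha b hb => hp a (Finset.mem_of_mem_erase ha) b (Finset.mem_of_mem_erase hb)
  have diagonal_step := ih (S.erase i) (Finset.erase_ssubset hi) (p * genericCharmatrix z i i) (by
    intro a ha b hb hab
    rw [Derivation.leibniz, hp a (Finset.mem_of_mem_erase ha) b (Finset.mem_of_mem_erase hb) hab,
      commutatorDerivation_genericCharmatrix_diag z (Finset.ne_of_mem_erase ha).symm
        (Finset.ne_of_mem_erase hb).symm, smul_zero, smul_zero, add_zero])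
  rw [det_principalRows_expand hi, det_symbolMatrix_expand hw hi, mul_add, mul_add, map_add,
    map_add, ← mul_assoc, diagonal_step, ← mul_assoc, Matrix.diag_apply, Finset.mul_sum,
    Finset.mul_sum, map_sum, map_sum]
  refine congrArg _ (Finset.sum_congr rfl fun k hk => ?_)
  -- The Ward identity makes the entry `X_ik` a derivation, which turns the cofactor into a
  -- difference of smaller minors.
  have hkS := Finset.mem_of_mem_erase hk
  have hik : i ≠ k := (Finset.ne_of_mem_erase hk).symm
  have entry : genericCharmatrix z i k = (.X (i, k) : MvPolynomial (ι × ι) ℂ) := by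
    simp [genericCharmatrix, hik]
  rw [entry, mul_left_comm, orbitMean_X_mul μ Λ hc hik, Derivation.leibniz, hp i hi k hkS hik,
    derivation_det_updateRow_principalRows hi hkS hik _ _
      (map_commutatorDerivation_genericCharmatrix z k i),
    smul_zero, add_zero, smul_eq_mul, mul_left_comm, ← MvPolynomial.smul_eq_C_mul, map_smul,
    smul_eq_mul, mul_sub, mul_sub, map_sub, map_sub, erase_step i hi, erase_step k hkS]

theorem orbitMean_det_symbolMatrix {c : ι → ℂ} (hc : Function.Injective c) (z : ℂ) :
    orbitMean μ Λ (diagonalForm c) (symbolMatrix (fun i j => .C (c i - c j)⁻¹) Finset.univ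
      (genericCharmatrix z).diag).det =
      (Λ - z • 1).det * orbitMean μ Λ (diagonalForm c) 1 := by
  have h := orbitMean_mul_det_principalRows μ Λ hc z Finset.univ 1
    fun _ _ _ _ _ => Derivation.map_one_eq_zero _
  rw [one_mul, one_mul, principalRows_univ, orbitMean_det_genericCharmatrix] at h
  exact h.symm

end Capelli

section JetFamilies

variable {ι : Type*} [DecidableEq ι]

/-- The families `c ↦ (p ↦ (p(∂)Φ)(c))` of functionals on polynomials attached to smooth functions
`Φ` are those in which `∂ₖ` acts by multiplication of the argument by `X k`. -/
def jetFamilies (ι : Type*) [DecidableEq ι] :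
    Submodule ℂ ((ι → ℂ) → MvPolynomial ι ℂ →ₗ[ℂ] ℂ) where
  carrier := {Θ | ∀ (c : ι → ℂ) (k : ι) (p : MvPolynomial ι ℂ),
    HasDerivAt (fun s => Θ (Function.update c k s) p) (Θ c (MvPolynomial.X k * p)) (c k)}
  zero_mem' c k _ := hasDerivAt_const (c k) 0
  add_mem' hΘ hΨ c k p := (hΘ c k p).add (hΨ c k p)
  smul_mem' a _ hΘ c k p := (hΘ c k p).const_smul a

variable {Θ : (ι → ℂ) → MvPolynomial ι ℂ →ₗ[ℂ] ℂ}

theorem hasDerivAt_update_of_mem_jetFamilies (hΘ : Θ ∈ jetFamilies ι) (c : ι → ℂ) (k : ι)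
    (p : MvPolynomial ι ℂ) (t : ℂ) :
    HasDerivAt (fun s => Θ (Function.update c k s) p) (Θ (Function.update c k t) (.X k * p)) t := by
  simpa using hΘ (Function.update c k t) k p

theorem jet_mul_eq_zero (hΘ : Θ ∈ jetFamilies ι) {Q : MvPolynomial ι ℂ} (hQ : ∀ c, Θ c Q = 0)
    (p : MvPolynomial ι ℂ) (c : ι → ℂ) : Θ c (Q * p) = 0 := by
  induction p using MvPolynomial.induction_on generalizing c with
  | C a => rw [mul_comm, ← MvPolynomial.smul_eq_C_mul, map_smul, hQ, smul_zero]
  | add p q hp hq => rw [mul_add, map_add, hp, hq, add_zero]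
  | mul_X p i hp =>
    have deriv_zero := hΘ c i (Q * p)
    simp only [hp] at deriv_zero
    rw [← mul_assoc, mul_comm]
    exact deriv_zero.unique (hasDerivAt_const _ _)

theorem jet_eq_zero_of_forall_injective [Finite ι] (hΘ : Θ ∈ jetFamilies ι) {p : MvPolynomial ι ℂ}
    (hp : ∀ c, Function.Injective c → Θ c p = 0) (c : ι → ℂ) : Θ c p = 0 := by
  cases nonempty_fintype ι
  suffices injOn_compl : ∀ (S : Finset ι) (c : ι → ℂ), Set.InjOn c (S : Set ι)ᶜ → Θ c p = 0 from
    injOn_compl Finset.univ c (by simp)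
  intro S
  induction S using Finset.induction_on with
  | empty => exact fun c hc => hp c (by simpa using hc)
  | insert a S _ ih =>
    intro c hc
    have generic : ∀ᶠ s in nhdsWithin (c a) {c a}ᶜ, Θ (Function.update c a s) p = 0 := by
      have avoid : ∀ᶠ s in nhdsWithin (c a) {c a}ᶜ, s ∉ Set.range c :=
        (Set.finite_range c).eventually_cofinite_notMem.filter_mono (nhdsNE_le_cofinite _)
      filter_upwards [avoid] with s hs
      refine ih _ fun i hi j hj hij => ?_
      by_cases hia : i = a <;> by_cases hja : j = a
      · rw [hia, hja]
      · rw [hia, Function.update_self, Function.update_of_ne hja] at hij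
        exact absurd ⟨j, hij.symm⟩ hs
      · rw [hja, Function.update_self, Function.update_of_ne hia] at hij
        exact absurd ⟨i, hij⟩ hs
      · rw [Function.update_of_ne hia, Function.update_of_ne hja] at hij
        exact hc (by simp_all) (by simp_all) hij
    have at_c := ((hΘ c a p).continuousAt.eventuallyEq_nhds_iff_eventuallyEq_nhdsNE
      continuousAt_const).1 generic
    simpa using at_c.self_of_nhds

theorem jet_eq_zero_of_eq_zero_at [Finite ι] (hΘ : Θ ∈ jetFamilies ι) {c₀ : ι → ℂ}
    (h₀ : Θ c₀ = 0) : Θ = 0 := by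
  cases nonempty_fintype ι
  have move_coordinate (c : ι → ℂ) (k : ι) (hc : Θ c = 0) (t : ℂ) :
      Θ (Function.update c k t) = 0 := by
    refine LinearMap.ext fun p => ?_
    set f : MvPolynomial ι ℂ → ℂ → ℂ := fun p s => Θ (Function.update c k s) p
    have deriv_f (p) (s : ℂ) : HasDerivAt (f p) (f (.X k * p) s) s :=
      hasDerivAt_update_of_mem_jetFamilies hΘ c k p s
    have iteratedDeriv_f (m : ℕ) : iteratedDeriv m (f p) = f (.X k ^ m * p) := by
      induction m with
      | zero => simp
      | succ m ih =>
        rw [iteratedDeriv_succ, ih, pow_succ', mul_assoc]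
        exact funext fun s => (deriv_f _ s).deriv
    have taylor := Complex.taylorSeries_eq_of_entire (fun s => (deriv_f p s).differentiableAt)
      (c k) t
    simpa [iteratedDeriv_f, f, hc] using taylor.symm
  have agree_on (c : ι → ℂ) (S : Finset ι) : Θ (S.piecewise c c₀) = 0 := by
    induction S using Finset.induction_on with
    | empty => rwa [Finset.piecewise_empty]
    | insert k S _ ih =>
      rw [Finset.piecewise_insert]
      exact move_coordinate _ k ih _
  exact funext fun c => by simpa using agree_on c Finset.univ

end JetFamilies

section Interpolation

open Polynomial in
theorem map_coeff_eq_zero_of_forall_eval {K A : Type*} [Field K] [Infinite K] [CommRing A]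
    [Algebra K A] (L : A →ₗ[K] K) {Q : A[X]} (hQ : ∀ z, L (Q.eval (algebraMap K A z)) = 0)
    (m : ℕ) : L (Q.coeff m) = 0 := by
  set q : K[X] := ∑ k ∈ Finset.range (Q.natDegree + 1), monomial k (L (Q.coeff k)) with q_def
  have q_eq_zero : q = 0 := by
    refine Polynomial.funext fun z => ?_
    rw [eval_zero, ← hQ z, eval_eq_sum_range (p := Q), map_sum, q_def, eval_finsetSum]
    refine Finset.sum_congr rfl fun k _ => ?_
    rw [eval_monomial, ← map_pow, mul_comm (Q.coeff k), ← Algebra.smul_def, map_smul, smul_eq_mul,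
      mul_comm]
  have coeff_q := congrArg (coeff · m) q_eq_zero
  by_cases hm : m ≤ Q.natDegree
  · simpa [q_def, finsetSum_coeff, coeff_monomial, Nat.lt_succ_iff, hm] using coeff_q
  · rw [coeff_eq_zero_of_natDegree_lt (not_le.1 hm), map_zero]

open Polynomial in
theorem map_eval_mul_eq_zero_of_forall_eval {K A : Type*} [Field K] [Infinite K] [CommRing A]
    [Algebra K A] (L : A →ₗ[K] K) {Q : A[X]}
    (hQ : ∀ z p, L (Q.eval (algebraMap K A z) * p) = 0) (y p : A) : L (Q.eval y * p) = 0 := by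
  rw [eval_eq_sum_range, Finset.sum_mul, map_sum]
  refine Finset.sum_eq_zero fun k _ => ?_
  rw [mul_assoc]
  exact map_coeff_eq_zero_of_forall_eval (L ∘ₗ LinearMap.mulRight K (y ^ k * p))
    (fun z => hQ z _) k

variable {ι K M : Type*} [Fintype ι]

section CommSemiring

variable [CommSemiring K]

@[elab_as_elim]
theorem induction_prod_X_pow {motive : MvPolynomial ι K → Prop} (p : MvPolynomial ι K)
    (add : ∀ p q, motive p → motive q → motive (p + q))
    (smul : ∀ (a : K) p, motive p → motive (a • p))
    (prod : ∀ α : ι → ℕ, motive (∏ i, .X i ^ α i)) : motive p := by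
  induction p using MvPolynomial.induction_on' with
  | add p q hp hq => exact add p q hp hq
  | monomial α a =>
    rw [MvPolynomial.monomial_eq, Finsupp.prod_fintype _ _ fun _ => pow_zero _,
      ← MvPolynomial.smul_eq_C_mul]
    exact smul a _ (prod α)

theorem linearMap_ext_prod_X_pow [AddCommMonoid M] [Module K M] {L L' : MvPolynomial ι K →ₗ[K] M}
    (h : ∀ α : ι → ℕ, L (∏ i, .X i ^ α i) = L' (∏ i, .X i ^ α i)) : L = L' := by
  refine LinearMap.ext fun p => ?_
  induction p using induction_prod_X_pow with
  | add p q hp hq => rw [map_add, map_add, hp, hq]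
  | smul a p hp => rw [map_smul, map_smul, hp]
  | prod α => exact h α

theorem rename_prod_X_pow (σ : Equiv.Perm ι) (α : ι → ℕ) :
    MvPolynomial.rename σ (∏ i, (.X i : MvPolynomial ι K) ^ α i) = ∏ i, .X i ^ α (σ.symm i) := by
  simp only [map_prod, map_pow, MvPolynomial.rename_X]
  exact Fintype.prod_equiv σ _ _ fun i => by rw [σ.symm_apply_apply]

end CommSemiring

variable [CommRing K] [Nontrivial K] [AddCommGroup M] [Module K M] {P : Polynomial K}

theorem linearMap_eq_zero_of_monic {L : MvPolynomial ι K →ₗ[K] M} (hP : P.Monic)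
    (h_mul : ∀ i p, L (Polynomial.aeval (MvPolynomial.X i) P * p) = 0)
    (h_small : ∀ α : ι → ℕ, (∀ i, α i < P.natDegree) → L (∏ i, .X i ^ α i) = 0) : L = 0 := by
  classical
  suffices bounded_off : ∀ (S : Finset ι) (α : ι → ℕ), (∀ i ∉ S, α i < P.natDegree) →
      L (∏ i, .X i ^ α i) = 0 from
    linearMap_ext_prod_X_pow fun α => bounded_off Finset.univ α (by simp)
  intro S
  induction S using Finset.induction_on with
  | empty => exact fun α hα => h_small α (by simpa using hα)
  | insert k S _ ih =>
    intro α hα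
    set others : MvPolynomial ι K := ∏ i ∈ Finset.univ.erase k, .X i ^ α i with others_def
    set r : Polynomial K := Polynomial.X ^ α k %ₘ P with r_def
    have prod_update (j : ℕ) : ∏ i, (.X i : MvPolynomial ι K) ^ Function.update α k j i =
        .X k ^ j * others := by
      rw [← Finset.mul_prod_erase _ _ (Finset.mem_univ k), Function.update_self]
      refine congrArg _ (Finset.prod_congr rfl fun i hi => ?_)
      rw [Function.update_of_ne (Finset.ne_of_mem_erase hi)]
    have division : (.X k : MvPolynomial ι K) ^ α k * others =
        Polynomial.aeval (.X k) P * (Polynomial.aeval (.X k) (Polynomial.X ^ α k /ₘ P) * others) +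
          Polynomial.aeval (.X k) r * others := by
      rw [← mul_assoc, ← add_mul, ← map_mul, ← map_add, add_comm, r_def,
        Polynomial.modByMonic_add_div, map_pow, Polynomial.aeval_X]
    rw [← Function.update_eq_self k α, prod_update, division, map_add, h_mul, zero_add,
      Polynomial.aeval_def, Polynomial.eval₂_eq_sum, Polynomial.sum, Finset.sum_mul, map_sum]
    refine Finset.sum_eq_zero fun j hj => ?_
    have hjP : j < P.natDegree := by
      have h := (Polynomial.le_degree_of_mem_supp j hj).trans_lt
        (Polynomial.degree_modByMonic_lt _ hP)
      rwa [Polynomial.degree_eq_natDegree hP.ne_zero, Nat.cast_lt] at h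
    rw [mul_assoc, ← Algebra.smul_def, map_smul, ← prod_update, ih, smul_zero]
    intro i hi
    obtain rfl | hik := eq_or_ne i k
    · rwa [Function.update_self]
    · rw [Function.update_of_ne hik]
      exact hα i (by simp [hik, hi])

theorem linearMap_eq_zero_of_antisymmetric [IsAddTorsionFree M] {n : ℕ}
    {L : MvPolynomial (Fin n) K →ₗ[K] M}
    (h_anti : ∀ (σ : Equiv.Perm (Fin n)) p, L (MvPolynomial.rename σ p) = σ.sign • L p)
    (hP : P.Monic) (hPn : P.natDegree = n)
    (h_mul : ∀ i p, L (Polynomial.aeval (MvPolynomial.X i) P * p) = 0)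
    (h_staircase : L (∏ i : Fin n, .X i ^ (i : ℕ)) = 0) : L = 0 := by
  refine linearMap_eq_zero_of_monic hP h_mul fun α hα => ?_
  rw [hPn] at hα
  by_cases α_inj : Function.Injective α
  · have β_inj : Function.Injective fun i => (⟨α i, hα i⟩ : Fin n) :=
      fun i j hij => α_inj (congrArg Fin.val hij)
    set σ := Equiv.ofBijective _ β_inj.bijective_of_finite
    have h := h_anti σ.symm (∏ i : Fin n, .X i ^ (i : ℕ))
    rwa [h_staircase, smul_zero, rename_prod_X_pow] at h
  · simp only [Function.Injective, not_forall] at α_inj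
    obtain ⟨i, j, hij, ne⟩ := α_inj
    have h := h_anti (Equiv.swap i j) (∏ i, .X i ^ α i)
    have invariant (k : Fin n) : α (Equiv.swap i j k) = α k := by
      rw [Equiv.swap_apply_def]
      split_ifs <;> simp_all
    rw [rename_prod_X_pow, Equiv.symm_swap, Equiv.Perm.sign_swap ne] at h
    simp only [invariant, Units.neg_smul, one_smul] at h
    exact self_eq_neg.1 h

end Interpolation

section DetJet

open Polynomial

/-- The functional `p ↦ p(∂_c) (c ^ j * exp (c * x))`. Since `c ^ j * exp (c * x)` is the `j`-th
`x`-derivative of `exp (c * x)`, this is the `j`-th `x`-derivative of `p(x) * exp (c * x)`. -/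
noncomputable def expJet (j : ℕ) (c x : ℂ) : ℂ[X] →ₗ[ℂ] ℂ :=
  Complex.exp (c * x) • leval x ∘ₗ (derivative + c • LinearMap.id) ^ j

theorem expJet_zero (c x : ℂ) (p : ℂ[X]) : expJet 0 c x p = Complex.exp (c * x) * p.eval x := by
  simp [expJet]

theorem expJet_succ (j : ℕ) (c x : ℂ) (p : ℂ[X]) :
    expJet (j + 1) c x p = expJet j c x (derivative p) + c * expJet j c x p := by
  simp only [expJet, pow_succ, Module.End.mul_eq_comp, LinearMap.smul_apply, LinearMap.comp_apply,
    LinearMap.add_apply, LinearMap.id_apply, map_add, map_smul, smul_eq_mul]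
  ring

theorem hasDerivAt_expJet (j : ℕ) (c x : ℂ) (p : ℂ[X]) :
    HasDerivAt (fun s => expJet j s x p) (expJet j c x (X * p)) c := by
  induction j generalizing p with
  | zero =>
    simp only [expJet_zero, eval_mul, eval_X, ← mul_assoc]
    simpa using (((hasDerivAt_id c).mul_const x).cexp.mul_const (p.eval x))
  | succ j ih =>
    simp only [expJet_succ]
    refine ((ih (derivative p)).add ((hasDerivAt_id c).mul (ih p))).congr_deriv ?_
    simp only [derivative_mul, derivative_X, one_mul, map_add, id]
    ring

theorem continuous_expJet (j : ℕ) (p : ℂ[X]) :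
    Continuous fun cx : ℂ × ℂ => expJet j cx.1 cx.2 p := by
  induction j generalizing p with
  | zero => simp only [expJet_zero]; fun_prop
  | succ j ih =>
    simp only [expJet_succ]
    exact (ih _).add (continuous_fst.mul (ih p))

theorem expJet_one (j : ℕ) (c x : ℂ) : expJet j c x 1 = Complex.exp (c * x) * c ^ j := by
  induction j with
  | zero => simp [expJet_zero]
  | succ j ih => rw [expJet_succ, ih, derivative_one, map_zero]; ring

theorem expJet_X_sub_C (j : ℕ) (c x z : ℂ) :
    expJet j c x (X - C z) = Complex.exp (c * x) * ((x - z) * c ^ j + j * c ^ (j - 1)) := by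
  induction j with
  | zero => simp [expJet_zero]
  | succ j ih =>
    rw [expJet_succ, ih, derivative_X_sub_C, expJet_one]
    cases j with
    | zero => simp only [zero_add, Nat.sub_self, Nat.cast_zero, Nat.cast_one, pow_zero]; ring
    | succ j => simp only [Nat.add_sub_cancel]; push_cast; ring

theorem expJet_at_zero (j : ℕ) (x : ℂ) (p : ℂ[X]) :
    expJet j 0 x p = (derivative^[j] p).eval x := by
  simp [expJet, Module.End.pow_apply]

variable {n : ℕ}

/-- The functional `p ↦ p(∂_c) det (c_i ^ j * exp (c_i * x_i))`, defined on monomials by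
differentiating the determinant row by row. -/
noncomputable def detJet (c x : Fin n → ℂ) : MvPolynomial (Fin n) ℂ →ₗ[ℂ] ℂ :=
  (MvPolynomial.basisMonomials (Fin n) ℂ).constr ℂ fun α =>
    (Matrix.of fun i j : Fin n => expJet j (c i) (x i) (X ^ α i)).det

theorem detJet_prod (c x : Fin n → ℂ) (p : Fin n → ℂ[X]) :
    detJet c x (∏ i, aeval (MvPolynomial.X i) (p i)) =
      (Matrix.of fun i j : Fin n => expJet j (c i) (x i) (p i)).det := by
  set productMap : MultilinearMap ℂ (fun _ : Fin n => ℂ[X]) (MvPolynomial (Fin n) ℂ) :=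
    (MultilinearMap.mkPiAlgebra ℂ (Fin n) _).compLinearMap
      fun i => (aeval (MvPolynomial.X i)).toLinearMap
  set rowMap : MultilinearMap ℂ (fun _ : Fin n => ℂ[X]) ℂ :=
    Matrix.detRowAlternating.toMultilinearMap.compLinearMap
      fun i => LinearMap.pi fun j => expJet j (c i) (x i)
  suffices multilinear_eq : (detJet c x).compMultilinearMap productMap = rowMap from
    congrFun (congrArg DFunLike.coe multilinear_eq) p
  refine Module.Basis.ext_multilinear (fun _ => basisMonomials ℂ) fun α => ?_
  have monomial_eq : ∏ i, (MvPolynomial.X i : MvPolynomial (Fin n) ℂ) ^ α i =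
      MvPolynomial.basisMonomials (Fin n) ℂ (Finsupp.equivFunOnFinite.symm α) := by
    simp [MvPolynomial.monomial_eq, Finsupp.prod_fintype]
  have lhs : productMap (fun i => basisMonomials ℂ (α i)) =
      MvPolynomial.basisMonomials (Fin n) ℂ (Finsupp.equivFunOnFinite.symm α) := by
    rw [← monomial_eq]
    simp [productMap, ← X_pow_eq_monomial]
  rw [LinearMap.compMultilinearMap_apply, lhs, detJet, Module.Basis.constr_basis]
  simp only [Finsupp.coe_equivFunOnFinite_symm, X_pow_eq_monomial]
  rfl

theorem detJet_prod_X_pow (c x : Fin n → ℂ) (α : Fin n → ℕ) :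
    detJet c x (∏ i, MvPolynomial.X i ^ α i) =
      (Matrix.of fun i j : Fin n => expJet j (c i) (x i) (X ^ α i)).det := by
  simpa using detJet_prod c x fun i => X ^ α i

theorem detJet_one (c x : Fin n → ℂ) :
    detJet c x 1 = Complex.exp (∑ i, c i * x i) * (Matrix.vandermonde c).det := by
  have h := detJet_prod c x 1
  simp only [Pi.one_apply, map_one, Finset.prod_const_one, expJet_one] at h
  rw [h, Complex.exp_sum]
  exact Matrix.det_mul_column (fun i => Complex.exp (c i * x i)) (Matrix.vandermonde c)

theorem detJet_prod_X_sub_C (c x : Fin n → ℂ) (z : ℂ) :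
    detJet c x (∏ i, (MvPolynomial.X i - MvPolynomial.C z)) =
      Complex.exp (∑ i, c i * x i) * (confluentVandermonde (fun i => x i - z) c).det := by
  have h := detJet_prod c x fun _ => X - C z
  simp only [expJet_X_sub_C] at h
  simp only [map_sub, aeval_X, aeval_C, MvPolynomial.algebraMap_eq] at h
  rw [h, Complex.exp_sum]
  exact Matrix.det_mul_column (fun i => Complex.exp (c i * x i)) (confluentVandermonde _ c)

theorem detJet_staircase_at_zero (x : Fin n → ℂ) :
    detJet 0 x (∏ i : Fin n, MvPolynomial.X i ^ (i : ℕ)) =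
      ∏ i : Fin n, ((i : ℕ).factorial : ℂ) := by
  rw [detJet_prod_X_pow, Matrix.det_of_isLowerTriangular]
  · refine Finset.prod_congr rfl fun i _ => ?_
    rw [Matrix.of_apply, Pi.zero_apply, expJet_at_zero, iterate_derivative_X_pow_eq_smul]
    simp [Nat.descFactorial_self]
  · intro i j hij
    rw [Matrix.of_apply, Pi.zero_apply, expJet_at_zero, iterate_derivative_eq_zero, eval_zero]
    simpa using hij

theorem detJet_comp_perm (c x : Fin n → ℂ) (σ : Equiv.Perm (Fin n)) (p : MvPolynomial (Fin n) ℂ) :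
    detJet (c ∘ σ) (x ∘ σ) p = σ.sign • detJet c x (MvPolynomial.rename σ p) := by
  refine LinearMap.congr_fun (f := detJet (c ∘ σ) (x ∘ σ))
    (g := σ.sign • detJet c x ∘ₗ (MvPolynomial.rename σ).toLinearMap)
    (linearMap_ext_prod_X_pow fun α => ?_) p
  simp only [LinearMap.smul_apply, LinearMap.comp_apply, AlgHom.toLinearMap_apply,
    rename_prod_X_pow, detJet_prod_X_pow]
  rw [Units.smul_def, zsmul_eq_mul, ← Matrix.det_permute]
  congr 1
  ext i j
  simp

theorem X_mul_prod_aeval (p : Fin n → ℂ[X]) (k : Fin n) :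
    MvPolynomial.X k * ∏ i, aeval (MvPolynomial.X i : MvPolynomial (Fin n) ℂ) (p i) =
      ∏ i, aeval (MvPolynomial.X i) (Function.update p k (X * p k) i) := by
  rw [← Finset.mul_prod_erase _ _ (Finset.mem_univ k),
    ← Finset.mul_prod_erase _ _ (Finset.mem_univ k), Function.update_self, map_mul, aeval_X,
    mul_assoc]
  refine congrArg _ (congrArg _ (Finset.prod_congr rfl fun i hi => ?_))
  rw [Function.update_of_ne (Finset.ne_of_mem_erase hi)]

theorem hasDerivAt_detJet_prod (x c : Fin n → ℂ) (k : Fin n) (p : Fin n → ℂ[X]) :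
    HasDerivAt (fun s => detJet (Function.update c k s) x (∏ i, aeval (MvPolynomial.X i) (p i)))
      (detJet c x (MvPolynomial.X k * ∏ i, aeval (MvPolynomial.X i) (p i))) (c k) := by
  set detOfRow : (Fin n → ℂ) →ₗ[ℂ] ℂ := Matrix.detRowAlternating.toMultilinearMap.toLinearMap
    (fun i j => expJet j (c i) (x i) (p i)) k with detOfRow_def
  have detJet_eq (s : ℂ) (q : ℂ[X]) : detJet (Function.update c k s) x
      (∏ i, aeval (MvPolynomial.X i) (Function.update p k q i)) =
        detOfRow fun j => expJet j s (x k) q := by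
    rw [detJet_prod]
    refine congrArg Matrix.det (Matrix.ext fun i j => ?_)
    obtain rfl | hik := eq_or_ne i k
    · simp
    · simp [hik]
  have detJet_update (s : ℂ) := detJet_eq s (p k)
  have detJet_deriv := detJet_eq (c k) (X * p k)
  rw [Function.update_eq_self] at detJet_deriv detJet_update
  simp only [X_mul_prod_aeval, detJet_deriv, detJet_update]
  exact (LinearMap.toContinuousLinearMap detOfRow).hasFDerivAt.comp_hasDerivAt (c k)
    (hasDerivAt_pi.2 fun j => hasDerivAt_expJet j (c k) (x k) (p k))

theorem hasDerivAt_detJet (x c : Fin n → ℂ) (k : Fin n) (p : MvPolynomial (Fin n) ℂ) :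
    HasDerivAt (fun s => detJet (Function.update c k s) x p)
      (detJet c x (MvPolynomial.X k * p)) (c k) := by
  induction p using induction_prod_X_pow with
  | add p q hp hq => simp only [mul_add, map_add]; exact hp.add hq
  | smul a p hp => simp only [mul_smul_comm, map_smul]; exact hp.const_smul a
  | prod α => simpa using hasDerivAt_detJet_prod x c k fun i => X ^ α i

theorem continuous_detJet (p : MvPolynomial (Fin n) ℂ) :
    Continuous fun cx : (Fin n → ℂ) × (Fin n → ℂ) => detJet cx.1 cx.2 p := by
  induction p using induction_prod_X_pow with
  | add p q hp hq => simp only [map_add]; exact hp.add hq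
  | smul a p hp => simp only [map_smul]; exact hp.const_smul a
  | prod α =>
    simp only [detJet_prod_X_pow]
    refine Continuous.matrix_det (continuous_matrix fun i j => ?_)
    exact (continuous_expJet j (X ^ α i)).comp (g := fun cx => expJet j cx.1 cx.2 (X ^ α i))
      (f := fun cx : (Fin n → ℂ) × (Fin n → ℂ) => (cx.1 i, cx.2 i)) (by fun_prop)

end DetJet

section OrbitJet

variable {n : ℕ}

theorem exists_diag_orbitPoint_mul_eq_comp (Λ : Matrix (Fin n) (Fin n) ℂ) (σ : Equiv.Perm (Fin n)) :
    ∃ g : Matrix.unitaryGroup (Fin n) ℂ, ∀ u,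
      (orbitPoint Λ (g * u)).diag = (orbitPoint Λ u).diag ∘ σ := by
  have mem : σ.permMatrix ℂ ∈ Matrix.unitaryGroup (Fin n) ℂ := by
    rw [Matrix.mem_unitaryGroup_iff, Matrix.star_eq_conjTranspose, Matrix.conjTranspose_permMatrix,
      ← Matrix.permMatrix_mul, inv_mul_cancel, Matrix.permMatrix_one]
  refine ⟨⟨σ.permMatrix ℂ, mem⟩, fun u => funext fun i => ?_⟩
  rw [orbitPoint_mul, orbitPoint, Matrix.star_eq_conjTranspose, Matrix.conjTranspose_permMatrix]
  simp [PEquiv.toMatrix_toPEquiv_mul, PEquiv.mul_toMatrix_toPEquiv, Equiv.Perm.inv_def]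

theorem continuous_detJet_orbitPoint {α : Type*} [TopologicalSpace α] {c : α → Fin n → ℂ}
    {u : α → Matrix.unitaryGroup (Fin n) ℂ} (hc : Continuous c) (hu : Continuous u)
    (Λ : Matrix (Fin n) (Fin n) ℂ) (p : MvPolynomial (Fin n) ℂ) :
    Continuous fun a => detJet (c a) (orbitPoint Λ (u a)).diag p :=
  (continuous_detJet p).comp (g := fun cx : (Fin n → ℂ) × (Fin n → ℂ) => detJet cx.1 cx.2 p)
    (f := fun a => (c a, (orbitPoint Λ (u a)).diag))
    (hc.prodMk ((continuous_orbitPoint Λ).comp hu).matrix_diag)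

variable [MeasurableSpace (Matrix.unitaryGroup (Fin n) ℂ)]
  [BorelSpace (Matrix.unitaryGroup (Fin n) ℂ)] (μ : Measure (Matrix.unitaryGroup (Fin n) ℂ))
  [IsFiniteMeasure μ] (Λ : Matrix (Fin n) (Fin n) ℂ)

/-- The functional `p ↦ p(∂_c) (Δ(c) * ∫ exp (∑ c_i X_ii))`, where `X` runs over the adjoint orbit
of `Λ`. -/
noncomputable def orbitJet (c : Fin n → ℂ) : MvPolynomial (Fin n) ℂ →ₗ[ℂ] ℂ where
  toFun p := ∫ u, detJet c (orbitPoint Λ u).diag p ∂μ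
  map_add' p q := by
    have integrable (p : MvPolynomial (Fin n) ℂ) :
        Integrable (fun u => detJet c (orbitPoint Λ u).diag p) μ :=
      (continuous_detJet_orbitPoint continuous_const continuous_id Λ
        p).integrable_of_hasCompactSupport (.of_compactSpace _)
    simp only [map_add, integral_add (integrable p) (integrable q)]
  map_smul' r p := by
    simp only [map_smul, smul_eq_mul, RingHom.id_apply, integral_const_mul]

theorem orbitJet_apply (c : Fin n → ℂ) (p : MvPolynomial (Fin n) ℂ) :
    orbitJet μ Λ c p = ∫ u, detJet c (orbitPoint Λ u).diag p ∂μ := rfl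

theorem orbitJet_mem_jetFamilies : orbitJet μ Λ ∈ jetFamilies (Fin n) := by
  intro c k p
  let f (q : MvPolynomial (Fin n) ℂ) (s : ℂ) (u : Matrix.unitaryGroup (Fin n) ℂ) : ℂ :=
    detJet (Function.update c k s) (orbitPoint Λ u).diag q
  have continuous_f (q) : Continuous (Function.uncurry (f q)) :=
    continuous_detJet_orbitPoint (continuous_const.update k continuous_fst) continuous_snd Λ q
  have deriv_f (s : ℂ) (u) : HasDerivAt (fun s => f p s u) (f (MvPolynomial.X k * p) s u) s := by
    simpa using hasDerivAt_detJet (orbitPoint Λ u).diag (Function.update c k s) k p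
  have deriv_integral := hasDerivAt_integral_of_continuous (μ := μ)
    (fun s => (continuous_f p).uncurry_left s) (continuous_f _) deriv_f (c k)
  simpa only [orbitJet_apply, f, Function.update_eq_self] using deriv_integral

theorem orbitJet_one (c : Fin n → ℂ) :
    orbitJet μ Λ c 1 = (Matrix.vandermonde c).det * orbitMean μ Λ (diagonalForm c) 1 := by
  simp only [orbitJet_apply, detJet_one, orbitMean_apply, map_one, one_mul,
    evalEntries_diagonalForm, Matrix.diag_apply, integral_mul_const]
  exact mul_comm _ _

theorem orbitJet_staircase_at_zero [IsProbabilityMeasure μ] :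
    orbitJet μ Λ 0 (∏ i : Fin n, .X i ^ (i : ℕ)) = ∏ i : Fin n, ((i : ℕ).factorial : ℂ) := by
  simp [orbitJet_apply, detJet_staircase_at_zero]

variable [μ.IsMulLeftInvariant]

theorem orbitJet_at_zero_rename (σ : Equiv.Perm (Fin n)) (p : MvPolynomial (Fin n) ℂ) :
    orbitJet μ Λ 0 (MvPolynomial.rename σ p) = σ.sign • orbitJet μ Λ 0 p := by
  obtain ⟨g, hg⟩ := exists_diag_orbitPoint_mul_eq_comp Λ σ
  have detJet_rename (u) : detJet 0 (orbitPoint Λ u).diag (MvPolynomial.rename σ p) =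
      σ.sign • detJet 0 (orbitPoint Λ (g * u)).diag p := by
    have h := detJet_comp_perm 0 (orbitPoint Λ u).diag σ p
    rw [Pi.zero_comp] at h
    rw [hg, h, smul_smul, Int.units_mul_self, one_smul]
  simp only [orbitJet_apply, detJet_rename, Units.smul_def, zsmul_eq_mul, integral_const_mul]
  rw [integral_mul_left_eq_self fun u => detJet 0 (orbitPoint Λ u).diag p]

theorem orbitJet_prod_X_sub_C {c : Fin n → ℂ} (hc : Function.Injective c) (z : ℂ) :
    orbitJet μ Λ c (∏ i, (.X i - .C z)) = (Λ - z • 1).det * orbitJet μ Λ c 1 := by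
  have evalEntries_symbol (X : Matrix (Fin n) (Fin n) ℂ) :
      evalEntries X (symbolMatrix (fun i j => .C (c i - c j)⁻¹) Finset.univ
        (genericCharmatrix z).diag).det =
      (symbolMatrix (fun i j => (c i - c j)⁻¹) Finset.univ fun i => X.diag i - z).det := by
    have map_symbol := symbolMatrix_map (evalEntries X : MvPolynomial _ ℂ →+* ℂ)
      (fun i j => .C (c i - c j)⁻¹) Finset.univ (genericCharmatrix z).diag
    rw [AlgHom.map_det, AlgHom.mapMatrix_apply]
    refine congrArg Matrix.det (map_symbol.trans ?_)
    congr
    · simp [evalEntries]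
    · ext i
      simp [evalEntries, genericCharmatrix]
  rw [orbitJet_one, mul_left_comm, ← orbitMean_det_symbolMatrix μ Λ hc z]
  simp only [orbitJet_apply, orbitMean_apply, detJet_prod_X_sub_C,
    ← det_vandermonde_mul_det_symbolMatrix hc, evalEntries_symbol, evalEntries_diagonalForm,
    ← integral_const_mul]
  refine integral_congr_ae (.of_forall fun u => ?_)
  simp only [Matrix.diag_apply]
  ring

theorem orbitJet_eval_charpoly_sub (z : ℂ) (c : Fin n → ℂ) :
    orbitJet μ Λ c ((∏ k, (Polynomial.X - Polynomial.C (.X k)) -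
      Λ.charpoly.map MvPolynomial.C).eval (MvPolynomial.C z)) = 0 := by
  refine jet_eq_zero_of_forall_injective (orbitJet_mem_jetFamilies μ Λ) (fun c hc => ?_) c
  have det_eq : (Λ - z • 1).det = (-1) ^ n * Λ.charpoly.eval z := by
    rw [Matrix.eval_charpoly, ← neg_sub, Matrix.det_neg, Fintype.card_fin,
      Matrix.smul_one_eq_diagonal]
    rfl
  have prod_eq : ∏ k, (MvPolynomial.C z - MvPolynomial.X k) =
      (-1 : ℂ) ^ n • ∏ k : Fin n, (MvPolynomial.X k - MvPolynomial.C z) := by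
    simp_rw [← neg_sub (MvPolynomial.X _), Finset.prod_neg, MvPolynomial.smul_eq_C_mul]
    simp
  have eval_map : (Λ.charpoly.map MvPolynomial.C).eval (MvPolynomial.C z) =
      Λ.charpoly.eval z • (1 : MvPolynomial (Fin n) ℂ) := by
    rw [Polynomial.eval_map, Polynomial.eval₂_at_apply, MvPolynomial.smul_eq_C_mul, mul_one]
  simp only [Polynomial.eval_sub, Polynomial.eval_prod, Polynomial.eval_X, Polynomial.eval_C,
    eval_map, prod_eq, map_sub, map_smul, orbitJet_prod_X_sub_C μ Λ hc, det_eq, smul_eq_mul,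
    ← mul_assoc, ← mul_pow, neg_one_mul, neg_neg, one_pow, one_mul, sub_self]

theorem orbitJet_aeval_charpoly_mul (c : Fin n → ℂ) (i : Fin n) (p : MvPolynomial (Fin n) ℂ) :
    orbitJet μ Λ c (Polynomial.aeval (.X i) Λ.charpoly * p) = 0 := by
  -- `Q` vanishes at every scalar and hence, coefficient by coefficient, at `X i`, where the product
  -- is zero.
  set Q : Polynomial (MvPolynomial (Fin n) ℂ) :=
    ∏ k, (.X - .C (.X k)) - Λ.charpoly.map MvPolynomial.C with Q_def
  have eval_Q_X : Q.eval (.X i) = - Polynomial.aeval (.X i) Λ.charpoly := by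
    rw [Q_def, Polynomial.eval_sub, Polynomial.eval_prod, Finset.prod_eq_zero (Finset.mem_univ i),
      zero_sub, Polynomial.eval_map, Polynomial.aeval_def, MvPolynomial.algebraMap_eq]
    simp
  have h := map_eval_mul_eq_zero_of_forall_eval (orbitJet μ Λ c) (Q := Q)
    (fun z p => jet_mul_eq_zero (orbitJet_mem_jetFamilies μ Λ)
      (orbitJet_eval_charpoly_sub μ Λ z) p c) (.X i) p
  rwa [eval_Q_X, neg_mul, map_neg, neg_eq_zero] at h

end OrbitJet

section Alternant

variable {ι : Type*} [Fintype ι]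

/-- The functional `p ↦ p(∂_c) exp (∑ c_i l_i)`. -/
noncomputable def characterJet (l c : ι → ℂ) : MvPolynomial ι ℂ →ₗ[ℂ] ℂ :=
  Complex.exp (∑ i, c i * l i) • (MvPolynomial.aeval l).toLinearMap

theorem characterJet_apply (l c : ι → ℂ) (p : MvPolynomial ι ℂ) :
    characterJet l c p = Complex.exp (∑ i, c i * l i) * MvPolynomial.aeval l p := rfl

variable [DecidableEq ι]

theorem characterJet_mem_jetFamilies (l : ι → ℂ) : characterJet l ∈ jetFamilies ι := by
  intro c k p
  have exponent (s : ℂ) : ∑ i, Function.update c k s i * l i =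
      ∑ i ∈ Finset.univ.erase k, c i * l i + s * l k := by
    rw [← Finset.sum_erase_add _ _ (Finset.mem_univ k), Function.update_self]
    congr 1
    exact Finset.sum_congr rfl fun i hi => by rw [Function.update_of_ne (Finset.ne_of_mem_erase hi)]
  have exponent_c := exponent (c k)
  rw [Function.update_eq_self] at exponent_c
  simp only [characterJet_apply, exponent, exponent_c, map_mul, MvPolynomial.aeval_X]
  refine ((((hasDerivAt_id (c k)).mul_const (l k)).const_add _).cexp.mul_const _).congr_deriv ?_
  simp only [id, one_mul, mul_assoc]

/-- The functional `p ↦ p(∂_c) det (exp (c_i * l_j))`. -/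
noncomputable def alternantJet (l : ι → ℂ) : (ι → ℂ) → MvPolynomial ι ℂ →ₗ[ℂ] ℂ :=
  ∑ σ : Equiv.Perm ι, ((σ.sign : ℤ) : ℂ) • characterJet (l ∘ σ)

theorem alternantJet_apply (l c : ι → ℂ) (p : MvPolynomial ι ℂ) :
    alternantJet l c p = ∑ σ : Equiv.Perm ι, ((σ.sign : ℤ) : ℂ) * characterJet (l ∘ σ) c p := by
  simp [alternantJet, Finset.sum_apply, LinearMap.sum_apply]

theorem alternantJet_mem_jetFamilies (l : ι → ℂ) : alternantJet l ∈ jetFamilies ι :=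
  sum_mem fun σ _ => Submodule.smul_mem _ _ (characterJet_mem_jetFamilies (l ∘ σ))

theorem alternantJet_one (l c : ι → ℂ) :
    alternantJet l c 1 = (Matrix.of fun i j => Complex.exp (l i * c j)).det := by
  rw [alternantJet_apply, Matrix.det_apply']
  refine Finset.sum_congr rfl fun σ _ => ?_
  simp [characterJet_apply, Complex.exp_sum, mul_comm]

theorem alternantJet_staircase_at_zero {n : ℕ} (l : Fin n → ℂ) :
    alternantJet l 0 (∏ i : Fin n, .X i ^ (i : ℕ)) = (Matrix.vandermonde l).det := by
  rw [alternantJet_apply, Matrix.det_apply']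
  refine Finset.sum_congr rfl fun σ _ => ?_
  simp [characterJet_apply]

theorem alternantJet_at_zero_rename (l : ι → ℂ) (τ : Equiv.Perm ι) (p : MvPolynomial ι ℂ) :
    alternantJet l 0 (MvPolynomial.rename τ p) = τ.sign • alternantJet l 0 p := by
  simp only [alternantJet_apply, Units.smul_def, zsmul_eq_mul, Finset.mul_sum]
  refine Fintype.sum_equiv (Equiv.mulRight τ) _ _ fun σ => ?_
  have sign_sq : ((τ.sign : ℤ) : ℂ) * ((τ.sign : ℤ) : ℂ) = 1 := by
    rw [← Int.cast_mul, Int.units_coe_mul_self, Int.cast_one]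
  simp only [characterJet_apply, MvPolynomial.aeval_rename, Equiv.coe_mulRight,
    Equiv.Perm.sign_mul, Equiv.Perm.coe_mul, Function.comp_assoc, Pi.zero_apply, zero_mul,
    Units.val_mul, Int.cast_mul]
  grind

theorem alternantJet_aeval_charpoly_mul (l c : ι → ℂ) (i : ι) (p : MvPolynomial ι ℂ) :
    alternantJet l c (Polynomial.aeval (.X i) (Matrix.diagonal l).charpoly * p) = 0 := by
  rw [alternantJet_apply]
  refine Finset.sum_eq_zero fun σ _ => ?_
  have root : Polynomial.aeval (l (σ i)) (Matrix.diagonal l).charpoly = 0 := by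
    rw [Matrix.charpoly_diagonal, map_prod, Finset.prod_eq_zero (Finset.mem_univ (σ i))]
    simp
  rw [characterJet_apply, map_mul, ← Polynomial.aeval_algHom_apply, MvPolynomial.aeval_X,
    Function.comp_apply, root, zero_mul, mul_zero, mul_zero]

end Alternant

theorem trace_mul_diagonal {ι R : Type*} [Fintype ι] [DecidableEq ι] [CommSemiring R]
    (X : Matrix ι ι R) (b : ι → R) : (X * Matrix.diagonal b).trace = ∑ j, b j * X j j := by
  simp only [Matrix.trace, Matrix.diag_apply, Matrix.mul_diagonal, mul_comm]

theorem prod_Ico_one_factorial (n : ℕ) :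
    ∏ p ∈ Finset.Ico 1 n, (p.factorial : ℂ) = ∏ i : Fin n, ((i : ℕ).factorial : ℂ) := by
  cases n with
  | zero => rfl
  | succ n =>
    rw [Fin.prod_univ_eq_prod_range fun i => (i.factorial : ℂ), Finset.range_eq_Ico,
      Finset.prod_eq_prod_Ico_succ_bot n.succ_pos, Nat.factorial_zero, Nat.cast_one, one_mul]

section Main

variable {n : ℕ} [MeasurableSpace (Matrix.unitaryGroup (Fin n) ℂ)]
  [BorelSpace (Matrix.unitaryGroup (Fin n) ℂ)] (μ : Measure (Matrix.unitaryGroup (Fin n) ℂ))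
  [IsProbabilityMeasure μ] [μ.IsMulLeftInvariant]

theorem vandermonde_smul_orbitJet_eq (l : Fin n → ℂ) :
    (Matrix.vandermonde l).det • orbitJet μ (Matrix.diagonal l) =
      (∏ i : Fin n, ((i : ℕ).factorial : ℂ)) • alternantJet l := by
  rw [← sub_eq_zero]
  refine jet_eq_zero_of_eq_zero_at (c₀ := 0)
    (sub_mem (Submodule.smul_mem _ _ (orbitJet_mem_jetFamilies μ _))
      (Submodule.smul_mem _ _ (alternantJet_mem_jetFamilies l))) ?_
  refine linearMap_eq_zero_of_antisymmetric (fun σ p => ?_)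
    (Matrix.diagonal l).charpoly_monic ?_ (fun i p => ?_) ?_
  · simp only [Pi.sub_apply, Pi.smul_apply, LinearMap.sub_apply, LinearMap.smul_apply,
      orbitJet_at_zero_rename, alternantJet_at_zero_rename, smul_sub, smul_comm σ.sign]
  · rw [Matrix.charpoly_natDegree_eq_dim, Fintype.card_fin]
  · simp only [Pi.sub_apply, Pi.smul_apply, LinearMap.sub_apply, LinearMap.smul_apply,
      orbitJet_aeval_charpoly_mul, alternantJet_aeval_charpoly_mul, smul_zero, sub_zero]
  · simp only [Pi.sub_apply, Pi.smul_apply, LinearMap.sub_apply, LinearMap.smul_apply,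
      orbitJet_staircase_at_zero, alternantJet_staircase_at_zero, smul_eq_mul]
    ring

theorem vandermonde_mul_integral_exp_eq (a b : Fin n → ℂ) :
    (Matrix.vandermonde a).det * ((Matrix.vandermonde b).det *
      ∫ u, Complex.exp (∑ j, b j * orbitPoint (Matrix.diagonal a) u j j) ∂μ) =
      (∏ i : Fin n, ((i : ℕ).factorial : ℂ)) *
        (Matrix.of fun i j => Complex.exp (a i * b j)).det := by
  have h := LinearMap.congr_fun (congrFun (vandermonde_smul_orbitJet_eq μ a) b) 1
  simpa only [Pi.smul_apply, LinearMap.smul_apply, smul_eq_mul, orbitJet_one, alternantJet_one,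
    orbitMean_apply, map_one, one_mul, evalEntries_diagonalForm] using h

end Main

end HCIZ

theorem HCIZ_formula_general {n : ℕ} [MeasurableSpace (Matrix.unitaryGroup (Fin n) ℂ)]
    [BorelSpace (Matrix.unitaryGroup (Fin n) ℂ)] (μ : Measure (Matrix.unitaryGroup (Fin n) ℂ))
    [μ.IsMulLeftInvariant] [IsProbabilityMeasure μ] {a b : Fin n → ℂ}
    (ha : Function.Injective a) (hb : Function.Injective b) :
    ∫ u : Matrix.unitaryGroup (Fin n) ℂ,
        Complex.exp
          (((↑u : Matrix (Fin n) (Fin n) ℂ) * Matrix.diagonal a *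
              (↑(u⁻¹) : Matrix (Fin n) (Fin n) ℂ) * Matrix.diagonal b).trace) ∂μ =
      (∏ p ∈ Finset.Ico 1 n, (Nat.factorial p : ℂ)) *
        (Matrix.of fun i j : Fin n => Complex.exp (a i * b j)).det /
          ((∏ i : Fin n, ∏ j ∈ Finset.Ioi i, (a j - a i)) *
            (∏ i : Fin n, ∏ j ∈ Finset.Ioi i, (b j - b i))) := by
  simp only [HCIZ.trace_mul_diagonal, HCIZ.prod_Ico_one_factorial, ← Matrix.det_vandermonde]
  rw [eq_div_iff (mul_ne_zero (Matrix.det_vandermonde_ne_zero_iff.2 ha)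
    (Matrix.det_vandermonde_ne_zero_iff.2 hb)), ← HCIZ.vandermonde_mul_integral_exp_eq μ a b,
    mul_comm, mul_assoc]
  rfl

/-- The Harish-Chandra–Itzykson–Zuber integral formula: for real diagonal matrices
`A = diag(a)`, `B = diag(b)` with strictly increasing entries,
`∫_{U(n)} e^{Tr(uAu⁻¹B)} du = (∏_{p=1}^{n-1} p!) det[e^{aᵢbⱼ}] / (Δ(A)Δ(B))`,
where `du` is the normalized Haar measure on the unitary group. -/
theorem HCIZ_formula (n : ℕ) (μ : Measure (Matrix.unitaryGroup (Fin n) ℂ))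
    [μ.IsHaarMeasure] [IsProbabilityMeasure μ]
    (a b : Fin n → ℝ) (ha : StrictMono a) (hb : StrictMono b) :
    ∫ u : Matrix.unitaryGroup (Fin n) ℂ,
        Complex.exp
          (((↑u : Matrix (Fin n) (Fin n) ℂ) * Matrix.diagonal (fun i => (a i : ℂ)) *
              (↑(u⁻¹) : Matrix (Fin n) (Fin n) ℂ) *
              Matrix.diagonal (fun i => (b i : ℂ))).trace) ∂μ =
      (∏ p ∈ Finset.Ico 1 n, (Nat.factorial p : ℂ)) *
        (Matrix.of fun i j : Fin n => Complex.exp ((a i : ℂ) * (b j : ℂ))).det /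
          ((∏ i : Fin n, ∏ j ∈ Finset.Ioi i, ((a j : ℂ) - (a i : ℂ))) *
            (∏ i : Fin n, ∏ j ∈ Finset.Ioi i, ((b j : ℂ) - (b i : ℂ)))) :=
  HCIZ_formula_general μ (Complex.ofReal_injective.comp ha.injective)
    (Complex.ofReal_injective.comp hb.injective)
end

section
/- Character expansion of the HCIZ kernel: for all n×n complex matrices x, y, ∫_{U(n)} e^{Tr(u⁻¹ x u y*)} du = Σ_λ (δ!/(λ+δ)!) χ_λ(x) conj(χ_λ(y)), where the sum runs over partitions λ with at most n parts and converges absolutely and uniformly on compact subsets of M_n(ℂ) × M_n(ℂ). -/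
open MvPolynomial MeasureTheory

/-- The Vandermonde polynomial `∏_{i<j} (z_i - z_j) = a_δ`. -/
noncomputable def vand (n : ℕ) : MvPolynomial (Fin n) ℂ :=
  ∏ i : Fin n, ∏ j ∈ Finset.Ioi i, (X i - X j)

/-- `a_ν(z) = det [zᵢ^(ν_j)]`. -/
noncomputable def aDet (n : ℕ) (ν : Fin n → ℕ) : MvPolynomial (Fin n) ℂ :=
  (Matrix.of fun i j : Fin n => (X i : MvPolynomial (Fin n) ℂ) ^ (ν j)).det

/-- `λ + δ` where `δ = (n-1, n-2, …, 0)`. -/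
def shiftedExp (n : ℕ) (lam : Fin n → ℕ) : Fin n → ℕ := fun j => lam j + (n - 1 - (j : ℕ))

/-- The eigenvalues of a complex matrix, listed (with multiplicity) as the roots of its
characteristic polynomial. -/
noncomputable def eigs {n : ℕ} (x : Matrix (Fin n) (Fin n) ℂ) : Fin n → ℂ :=
  fun i => (Matrix.charpoly x).roots.toList.getD i 0

/-- Partitions with at most `n` parts. -/
def Partn (n : ℕ) := {lam : Fin n → ℕ // Antitone lam}

/-!
Let `Δ` be the Vandermonde polynomial and let `f ↦ f|_D` denote restriction of polynomials on
matrices to the diagonal. On conjugation invariants the Laplacian has the radial part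
`Δ · (L f)|_D = L (Δ · f|_D)`, and `P(∂)` is, up to a scalar, a `k`-fold commutator of the Laplacian
with multiplication by an invariant `P` of degree `k`. Hence `Δ · (P(∂) f)|_D = P|_D(∂) (Δ · f|_D)`
(Harish-Chandra).

Apply this to the invariant polynomial `f(x) = ∫ Tr (x u z u⁻¹) ^ k du`: its derivative `P(∂) f` is
the constant `k! P(z)`. Choosing `P` with `Δ · P|_D = a_{λ+δ}` and evaluating at `0` therefore gives
the coefficient of `a_{λ+δ}` in `Δ · f|_D`, so that `f` is the degree `k` part of the expansion.

For `z = x*` all terms of that identity are nonnegative, so each is at most `M ^ k / k!` where `M`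
bounds `|Tr (x u x* u⁻¹)|`; a term at `(x, y)` is at most the larger of those at `(x, x)` and
`(y, y)`. This dominates the series uniformly on compact sets.
-/

section DifferentialOperators

variable {R σ : Type*} [CommRing R]

lemma finsupp_induction_add_single {motive : (σ →₀ ℕ) → Prop} (zero : motive 0)
    (add_single : ∀ m i, motive m → motive (m + Finsupp.single i 1)) (m : σ →₀ ℕ) : motive m := by
  classical
  obtain ⟨t, rfl⟩ := Multiset.toFinsupp.surjective m
  induction t using Multiset.induction_on with
  | empty => simpa using zero
  | cons i t ih =>
    rw [← Multiset.singleton_add, add_comm, map_add, Multiset.toFinsupp_singleton]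
    exact add_single _ i ih

lemma derivation_eq_sum_pderiv [Fintype σ]
    (D : Derivation R (MvPolynomial σ R) (MvPolynomial σ R)) (f : MvPolynomial σ R) :
    D f = ∑ i, D (X i) * pderiv i f := by
  classical
  induction f using MvPolynomial.induction_on with
  | C a => simp
  | add p q hp hq => simp only [map_add, hp, hq, mul_add, Finset.sum_add_distrib]
  | mul_X p j hp =>
    have hj : ∑ i, D (X i) * pderiv i (X j : MvPolynomial σ R) = D (X j) := by
      simp [pderiv_X, Pi.single_apply]
    simp only [Derivation.leibniz, smul_eq_mul, mul_add, Finset.sum_add_distrib]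
    simp only [mul_left_comm (D _), ← Finset.mul_sum, hj, hp]

lemma commute_pderiv (i j : σ) :
    Commute (pderiv (R := R) i).toLinearMap (pderiv (R := R) j).toLinearMap := by
  have h : ⁅pderiv (R := R) i, pderiv (R := R) j⁆ = 0 := by
    classical
    refine derivation_ext fun k => ?_
    simp only [Derivation.commutator_apply, pderiv_X, Pi.single_apply]
    split_ifs <;> simp
  refine LinearMap.ext fun f => sub_eq_zero.mp ?_
  simpa [Derivation.commutator_apply] using congrArg (fun D => D f) h

lemma pderiv_pderiv_comm (i j : σ) (f : MvPolynomial σ R) :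
    pderiv i (pderiv j f) = pderiv j (pderiv i f) :=
  LinearMap.congr_fun (commute_pderiv i j).eq f

open scoped IsMulCommutative in
/-- The constant coefficient differential operator `P(∂)` attached to a polynomial `P`, where the
variable `X i` acts as `∂_{τ i}`; the involution `τ` records which variables are dual to each other
for the quadratic form that identifies the space with its dual. -/
noncomputable def diffOp (τ : σ → σ) : MvPolynomial σ R →ₐ[R] Module.End R (MvPolynomial σ R) :=
  have := Algebra.isMulCommutative_adjoin R
    (s := Set.range fun i : σ => (pderiv (R := R) i).toLinearMap)
    (by rintro _ ⟨i, rfl⟩ _ ⟨j, rfl⟩; exact commute_pderiv i j)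
  (Algebra.adjoin R (Set.range fun i : σ => (pderiv (R := R) i).toLinearMap)).val.comp
    (aeval fun i => ⟨_, Algebra.subset_adjoin ⟨τ i, rfl⟩⟩)

@[simp]
lemma diffOp_X (τ : σ → σ) (i : σ) : diffOp (R := R) τ (X i) = (pderiv (τ i)).toLinearMap := by
  simp [diffOp]

lemma diffOp_mul_X_apply (τ : σ → σ) (P f : MvPolynomial σ R) (i : σ) :
    diffOp τ (P * X i) f = diffOp τ P (pderiv (τ i) f) := by
  simp

/-- The Laplacian `∑ᵢ ∂_i ∂_{τ i}`. -/
noncomputable def laplacian (R : Type*) [CommRing R] [Fintype σ] (τ : σ → σ) :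
    Module.End R (MvPolynomial σ R) :=
  ∑ i, (pderiv i).toLinearMap * (pderiv (τ i)).toLinearMap

lemma laplacian_apply [Fintype σ] (τ : σ → σ) (f : MvPolynomial σ R) :
    laplacian R τ f = ∑ i, pderiv i (pderiv (τ i) f) := by
  simp [laplacian]

lemma laplacian_mul [Fintype σ] (f g : MvPolynomial σ R) :
    laplacian R id (f * g) =
      laplacian R id f * g + 2 * ∑ i, pderiv i g * pderiv i f + f * laplacian R id g := by
  simp only [laplacian_apply, id, Finset.sum_mul, Finset.mul_sum, ← Finset.sum_add_distrib]
  refine Finset.sum_congr rfl fun i _ => ?_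
  simp only [Derivation.leibniz, map_add, smul_eq_mul]
  ring

attribute [local instance] LieRing.ofAssociativeRing

section Commutator

variable {A : Type*} [Ring A]

lemma commutator_mul (D a b : A) : ⁅D, a * b⁆ = ⁅D, a⁆ * b + a * ⁅D, b⁆ := by
  simp only [Ring.lie_def]; noncomm_ring

lemma ad_pow_mul [Algebra R A] {D a : A} (ha : ⁅D, ⁅D, a⁆⁆ = 0) (b : A) (k : ℕ) :
    (LieAlgebra.ad R A D ^ (k + 1)) (a * b) =
      a * (LieAlgebra.ad R A D ^ (k + 1)) b + (k + 1) • (⁅D, a⁆ * (LieAlgebra.ad R A D ^ k) b) := by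
  have hpow (j : ℕ) (x : A) :
      (LieAlgebra.ad R A D ^ (j + 1)) x = ⁅D, (LieAlgebra.ad R A D ^ j) x⁆ := by
    rw [pow_succ', Module.End.mul_apply, LieAlgebra.ad_apply]
  induction k with
  | zero => simp [commutator_mul, add_comm]
  | succ k ih =>
    rw [hpow _ (a * b), ih, lie_add, lie_nsmul, commutator_mul, commutator_mul, ha, ← hpow, ← hpow,
      zero_mul, zero_add]
    module

end Commutator

lemma lie_laplacian_lmul_X [Fintype σ] {τ : σ → σ} (hτ : Function.Involutive τ) (i : σ) :
    ⁅laplacian R τ, Algebra.lmul R (MvPolynomial σ R) (X i)⁆ = 2 • (pderiv (τ i)).toLinearMap := by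
  classical
  refine LinearMap.ext fun f => ?_
  have summand (j : σ) : pderiv j (pderiv (τ j) (X i * f)) - X i * pderiv j (pderiv (τ j) f) =
      (if j = i then pderiv (τ i) f else 0) + (if j = τ i then pderiv (τ i) f else 0) := by
    have swap : i = τ j ↔ j = τ i := by rw [eq_comm, hτ.eq_iff]
    simp only [Derivation.leibniz, pderiv_X, Pi.single_apply, swap, smul_eq_mul, map_add,
      eq_comm (a := i) (b := j)]
    split_ifs with h₂ h₁ h₁
    · subst h₂
      simp only [← h₁, mul_one, one_mul, Derivation.map_one_eq_zero]
      ring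
    all_goals simp [*]
  simp only [Ring.lie_def, LinearMap.sub_apply, Module.End.mul_apply, Algebra.coe_lmul_eq_mul,
    LinearMap.mul_apply', laplacian_apply, Finset.mul_sum, ← Finset.sum_sub_distrib, summand,
    Finset.sum_add_distrib, Finset.sum_ite_eq', Finset.mem_univ, if_true]
  simp [two_smul]

lemma lie_laplacian_diffOp [Fintype σ] (τ : σ → σ) (P : MvPolynomial σ R) :
    ⁅laplacian R τ, diffOp τ P⁆ = 0 := by
  have hX (i : σ) : ⁅laplacian R τ, diffOp (R := R) τ (X i)⁆ = 0 := by
    rw [diffOp_X, ← commute_iff_lie_eq]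
    exact Commute.sum_left _ _ _ fun j _ =>
      (commute_pderiv (R := R) j (τ i)).mul_left (commute_pderiv (τ j) (τ i))
  induction P using MvPolynomial.induction_on with
  | C a => rw [← algebraMap_eq, AlgHom.commutes, Ring.lie_def, Algebra.commutes, sub_self]
  | add p q hp hq => rw [map_add, lie_add, hp, hq, add_zero]
  | mul_X p i hp => rw [map_mul, commutator_mul, hp, hX, zero_mul, mul_zero, add_zero]

lemma ad_laplacian_pow_lmul_monomial [Fintype σ] {τ : σ → σ} (hτ : Function.Involutive τ)
    (m : σ →₀ ℕ) :
    (LieAlgebra.ad R _ (laplacian R τ) ^ m.degree)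
        (Algebra.lmul R (MvPolynomial σ R) (monomial m 1)) =
      (2 ^ m.degree * m.degree.factorial) • diffOp τ (monomial m 1) := by
  induction m using finsupp_induction_add_single with
  | zero => simp [-Algebra.coe_lmul_eq_mul]
  | add_single m i ih =>
    have hX : ⁅laplacian R τ, ⁅laplacian R τ, Algebra.lmul R (MvPolynomial σ R) (X i)⁆⁆ = 0 := by
      rw [lie_laplacian_lmul_X hτ, lie_nsmul, ← diffOp_X, lie_laplacian_diffOp, smul_zero]
    have hmon : monomial (m + Finsupp.single i 1) (1 : R) = X i * monomial m 1 := by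
      rw [add_comm, X, monomial_mul, one_mul]
    rw [hmon, map_mul (Algebra.lmul R _), map_mul (diffOp τ), map_add, Finsupp.degree_single,
      ad_pow_mul hX, lie_laplacian_lmul_X hτ, ← diffOp_X, pow_succ', Module.End.mul_apply, ih,
      LieAlgebra.ad_apply, lie_nsmul, lie_laplacian_diffOp, smul_zero, mul_zero, zero_add,
      smul_mul_smul_comm, smul_smul, Nat.factorial_succ]
    congr 1
    ring

lemma linearMap_eq_of_isHomogeneous {M : Type*} [AddCommMonoid M] [Module R M] {k : ℕ}
    {F G : MvPolynomial σ R →ₗ[R] M}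
    (h : ∀ m : σ →₀ ℕ, m.degree = k → F (monomial m 1) = G (monomial m 1))
    {P : MvPolynomial σ R} (hP : P.IsHomogeneous k) : F P = G P := by
  rw [P.as_sum, map_sum, map_sum]
  refine Finset.sum_congr rfl fun m hm => ?_
  rw [← mul_one (coeff m P), ← smul_eq_mul, ← smul_monomial, map_smul, map_smul,
    h m (Finsupp.degree_eq_weight_one (R := ℕ) ▸ hP (mem_support_iff.mp hm))]

theorem ad_laplacian_pow_lmul [Fintype σ] {τ : σ → σ} (hτ : Function.Involutive τ) {k : ℕ}
    {P : MvPolynomial σ R} (hP : P.IsHomogeneous k) :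
    (LieAlgebra.ad R _ (laplacian R τ) ^ k) (Algebra.lmul R (MvPolynomial σ R) P) =
      (2 ^ k * k.factorial) • diffOp τ P :=
  linearMap_eq_of_isHomogeneous
    (F := (LieAlgebra.ad R _ (laplacian R τ) ^ k) ∘ₗ (Algebra.lmul R _).toLinearMap)
    (G := (2 ^ k * k.factorial) • (diffOp τ).toLinearMap)
    (by rintro m rfl; exact ad_laplacian_pow_lmul_monomial hτ m) hP

lemma diffOp_monomial_linearForm_pow {τ : σ → σ} {w : σ → R} {l : MvPolynomial σ R}
    (hl : ∀ i, pderiv (τ i) l = C (w i)) (m : σ →₀ ℕ) (k : ℕ) :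
    diffOp τ (monomial m 1) (l ^ k) =
      C (k.descFactorial m.degree * eval w (monomial m 1)) * l ^ (k - m.degree) := by
  induction m using finsupp_induction_add_single generalizing k with
  | zero => simp
  | add_single m i ih =>
    have hmon : monomial (m + Finsupp.single i 1) (1 : R) = X i * monomial m 1 := by
      rw [add_comm, X, monomial_mul, one_mul]
    rw [hmon, map_mul, Module.End.mul_apply, ih, diffOp_X, Derivation.coeFn_coe,
      pderiv_C_mul, Derivation.leibniz_pow, hl, map_add, Finsupp.degree_single,
      Nat.descFactorial_succ, Nat.sub_sub]
    simp only [smul_eq_mul, nsmul_eq_mul, map_mul, map_natCast, Nat.cast_mul, eval_X]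
    ring

theorem eval_zero_diffOp_linearForm_pow {τ : σ → σ} {w : σ → R} {l : MvPolynomial σ R}
    (hl : ∀ i, pderiv (τ i) l = C (w i)) {k : ℕ} {P : MvPolynomial σ R} (hP : P.IsHomogeneous k) :
    eval 0 (diffOp τ P (l ^ k)) = k.factorial * eval w P :=
  linearMap_eq_of_isHomogeneous
    (F := (aeval (0 : σ → R)).toLinearMap ∘ₗ
      (LinearMap.applyₗ (l ^ k)) ∘ₗ (diffOp τ).toLinearMap)
    (G := (k.factorial : R) • (aeval w).toLinearMap)
    (by
      rintro m rfl
      simp [diffOp_monomial_linearForm_pow hl, Nat.descFactorial_self]) hP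

theorem eval_zero_diffOp_monomial [Fintype σ] (m : σ →₀ ℕ) (G : MvPolynomial σ R) :
    eval 0 (diffOp id (monomial m 1) G) = (∏ i, (m i).factorial : ℕ) * coeff m G := by
  classical
  induction m using finsupp_induction_add_single generalizing G with
  | zero => simp [eval_zero, constantCoeff_eq]
  | add_single m i ih =>
    have hfac : ∏ j, ((m + Finsupp.single i 1 : σ →₀ ℕ) j).factorial =
        (m i + 1) * ∏ j, (m j).factorial := by
      rw [← Finset.mul_prod_erase _ _ (Finset.mem_univ i),
        ← Finset.mul_prod_erase _ (fun j => (m j).factorial) (Finset.mem_univ i), ← mul_assoc]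
      congr 1
      · simp [Nat.factorial_succ]
      · refine Finset.prod_congr rfl fun j hj => ?_
        rw [Finsupp.add_apply, Finsupp.single_eq_of_ne (Finset.ne_of_mem_erase hj), add_zero]
    rw [show monomial (m + Finsupp.single i 1) (1 : R) = monomial m 1 * X i by
      rw [X, monomial_mul, one_mul], diffOp_mul_X_apply, ih, id, coeff_pderiv, hfac]
    push_cast
    ring

end DifferentialOperators

section Antisymmetric

variable {R σ : Type*} [CommRing R]

/-- The exponent vector with entries `ν i`. -/
noncomputable abbrev expVec [Finite σ] (ν : σ → ℕ) : σ →₀ ℕ := Finsupp.equivFunOnFinite.symm ν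

lemma degree_expVec [Fintype σ] (ν : σ → ℕ) : (expVec ν).degree = ∑ i, ν i := by
  simp [Finsupp.degree_eq_sum]

lemma mapDomain_expVec [Finite σ] (π : Equiv.Perm σ) (ν : σ → ℕ) :
    (expVec ν).mapDomain π = expVec (ν ∘ π.symm) := by
  ext i
  simp [Finsupp.mapDomain_equiv_apply]

lemma monomial_expVec [Fintype σ] (ν : σ → ℕ) : monomial (expVec ν) (1 : R) = ∏ i, X i ^ ν i := by
  simp [monomial_eq, Finsupp.prod_fintype]

lemma laplacian_rename [Fintype σ] (π : Equiv.Perm σ) (φ : MvPolynomial σ R) :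
    laplacian R id (rename π φ) = rename π (laplacian R id φ) := by
  simp only [laplacian_apply, id, map_sum]
  rw [← Equiv.sum_comp π]
  simp only [pderiv_rename π.injective]

lemma isHomogeneous_laplacian [Fintype σ] {φ : MvPolynomial σ R} {k : ℕ} (hφ : φ.IsHomogeneous k)
    (τ : σ → σ) : (laplacian R τ φ).IsHomogeneous (k - 1 - 1) := by
  rw [laplacian_apply]
  exact IsHomogeneous.sum _ _ _ fun i _ => hφ.pderiv.pderiv

variable (R σ) in
/-- The antisymmetric polynomials: permuting the variables multiplies them by the sign. -/
def antisymmetricSubmodule [Fintype σ] [DecidableEq σ] : Submodule R (MvPolynomial σ R) where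
  carrier := {φ | ∀ π : Equiv.Perm σ, rename π φ = Equiv.Perm.sign π • φ}
  zero_mem' π := by rw [map_zero, smul_zero]
  add_mem' hφ hψ π := by rw [map_add, hφ, hψ, smul_add]
  smul_mem' c φ hφ π := by rw [map_smul, hφ, smul_comm]

variable [Fintype σ] [DecidableEq σ] {φ : MvPolynomial σ R}

lemma coeff_mapDomain_of_antisymmetric (hφ : φ ∈ antisymmetricSubmodule R σ) (π : Equiv.Perm σ)
    (m : σ →₀ ℕ) : coeff (m.mapDomain π) φ = Equiv.Perm.sign π • coeff m φ := by
  rw [← coeff_rename_mapDomain π π.injective φ m, hφ π, coeff_smul, smul_smul,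
    Int.units_mul_self, one_smul]

lemma coeff_eq_zero_of_antisymmetric [IsAddTorsionFree R] (hφ : φ ∈ antisymmetricSubmodule R σ)
    {m : σ →₀ ℕ} (hm : ¬Function.Injective m) : coeff m φ = 0 := by
  simp only [Function.Injective, not_forall] at hm
  obtain ⟨i, j, hij, hne⟩ := hm
  have hswap : m.mapDomain (Equiv.swap i j) = m := by
    ext k
    rw [Finsupp.mapDomain_equiv_apply, Equiv.symm_swap, Equiv.swap_apply_def]
    split_ifs with hi hj <;> simp [*]
  have h := coeff_mapDomain_of_antisymmetric hφ (Equiv.swap i j) m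
  rw [hswap, Equiv.Perm.sign_swap hne, Units.neg_smul, one_smul] at h
  exact self_eq_neg.mp h

lemma mul_mem_antisymmetricSubmodule {ψ : MvPolynomial σ R} (hφ : φ ∈ antisymmetricSubmodule R σ)
    (hψ : ψ.IsSymmetric) : φ * ψ ∈ antisymmetricSubmodule R σ := fun π => by
  rw [map_mul, hφ, hψ, smul_mul_assoc]

lemma isSymmetric_of_mul_mem_antisymmetricSubmodule [IsDomain R] {ψ : MvPolynomial σ R}
    (hφ : φ ∈ antisymmetricSubmodule R σ) (hφ₀ : φ ≠ 0)
    (h : φ * ψ ∈ antisymmetricSubmodule R σ) : ψ.IsSymmetric := fun π => by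
  have hπ := h π
  rw [map_mul, hφ, smul_mul_assoc] at hπ
  exact mul_left_cancel₀ hφ₀ (smul_left_cancel _ hπ)

lemma laplacian_mem_antisymmetricSubmodule (hφ : φ ∈ antisymmetricSubmodule R σ) :
    laplacian R id φ ∈ antisymmetricSubmodule R σ := fun π => by
  rw [← laplacian_rename, hφ, Units.smul_def, Units.smul_def, map_zsmul]

section Fin

variable {n : ℕ} {φ ψ : MvPolynomial (Fin n) R}

lemma exists_perm_strictAnti_comp {ν : Fin n → ℕ} (hν : Function.Injective ν) :
    ∃ π : Equiv.Perm (Fin n), StrictAnti (ν ∘ π) := by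
  refine ⟨Fin.revPerm.trans (Tuple.sort ν), fun i j hij => ?_⟩
  exact ((Tuple.monotone_sort ν).strictMono_of_injective (hν.comp (Tuple.sort ν).injective))
    (Fin.rev_lt_rev.mpr hij)

lemma antisymmetric_eq_zero [IsAddTorsionFree R]
    (hφ : φ ∈ antisymmetricSubmodule R (Fin n))
    (h : ∀ ν : Fin n → ℕ, StrictAnti ν → coeff (expVec ν) φ = 0) : φ = 0 := by
  ext m
  obtain ⟨ν, rfl⟩ := Finsupp.equivFunOnFinite.symm.surjective m
  by_cases hν : Function.Injective ν
  · obtain ⟨π, hπ⟩ := exists_perm_strictAnti_comp hν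
    have h₀ := coeff_mapDomain_of_antisymmetric hφ π.symm (expVec ν)
    rw [mapDomain_expVec, Equiv.symm_symm, h _ hπ] at h₀
    rw [coeff_zero, ← smul_eq_zero_iff_eq (Equiv.Perm.sign π.symm), ← h₀]
  · exact coeff_eq_zero_of_antisymmetric hφ hν

lemma add_sub_le_of_strictAnti {ν : Fin n → ℕ} (hν : StrictAnti ν) {i j : Fin n} (hij : i ≤ j) :
    ν j + (j - i) ≤ ν i := by
  induction hd : (j - i : ℕ) generalizing i with
  | zero => exact (congrArg ν (le_antisymm (Nat.sub_eq_zero_iff_le.mp hd) hij)).le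
  | succ d ih =>
    have hi : (i : ℕ) + 1 < n := by omega
    have hlt : ν ⟨i + 1, hi⟩ < ν i := hν (Fin.lt_def.mpr (Nat.lt_succ_self _))
    have := ih (i := ⟨i + 1, hi⟩) (by rw [Fin.le_def]; simp only; omega) (by simp only; omega)
    omega

lemma le_apply_of_strictAnti {ν : Fin n → ℕ} (hν : StrictAnti ν) (i : Fin n) :
    n - 1 - (i : ℕ) ≤ ν i := by
  have hle : i ≤ ⟨n - 1, Nat.sub_one_lt_of_lt i.2⟩ := Fin.le_def.mpr (Nat.le_sub_one_of_lt i.2)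
  exact (Nat.le_add_left _ _).trans (add_sub_le_of_strictAnti hν hle)

lemma antisymmetric_eq_zero_of_isHomogeneous [IsAddTorsionFree R]
    (hφ : φ ∈ antisymmetricSubmodule R (Fin n)) {k : ℕ} (hk : φ.IsHomogeneous k)
    (hlt : k < ∑ i : Fin n, (n - 1 - (i : ℕ))) : φ = 0 := by
  refine antisymmetric_eq_zero hφ fun ν hν => hk.coeff_eq_zero ?_
  rw [degree_expVec]
  exact (hlt.trans_le (Finset.sum_le_sum fun i _ => le_apply_of_strictAnti hν i)).ne'

end Fin

end Antisymmetric

section Alternant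

variable {n : ℕ}

lemma aDet_eq_sum (ν : Fin n → ℕ) :
    aDet n ν = ∑ π : Equiv.Perm (Fin n), Equiv.Perm.sign π • monomial (expVec (ν ∘ π.symm)) 1 := by
  rw [aDet, Matrix.det_apply]
  refine Finset.sum_congr rfl fun π _ => ?_
  rw [← mapDomain_expVec, ← rename_monomial, monomial_expVec]
  simp

lemma aDet_mem_antisymmetricSubmodule (ν : Fin n → ℕ) :
    aDet n ν ∈ antisymmetricSubmodule ℂ (Fin n) := fun π => by
  rw [aDet, AlgHom.map_det, Units.smul_def, zsmul_eq_mul, ← Matrix.det_permute]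
  congr 1
  ext1 i j
  simp

lemma isHomogeneous_aDet (ν : Fin n → ℕ) : (aDet n ν).IsHomogeneous (∑ i, ν i) := by
  rw [aDet_eq_sum]
  refine IsHomogeneous.sum _ _ _ fun π _ => ?_
  rw [Units.smul_def, ← Equiv.sum_comp π.symm]
  refine (homogeneousSubmodule (Fin n) ℂ _).toAddSubgroup.zsmul_mem ?_ _
  exact isHomogeneous_monomial _ (degree_expVec _)

lemma eq_one_of_strictAnti_comp {ν : Fin n → ℕ} (hν : StrictAnti ν) {π : Equiv.Perm (Fin n)}
    (h : StrictAnti (ν ∘ π)) : π = 1 := by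
  have hπ : StrictMono π := fun i j hij => hν.lt_iff_gt.mp (h hij)
  ext i
  rw [(hπ.range_inj strictMono_id).mp (by rw [π.surjective.range_eq, Set.range_id])]
  rfl

lemma coeff_aDet {ν ρ : Fin n → ℕ} (hν : StrictAnti ν) (hρ : StrictAnti ρ) :
    coeff (expVec ρ) (aDet n ν) = if ν = ρ then 1 else 0 := by
  have hsummand (π : Equiv.Perm (Fin n)) (hπ : ν ∘ π.symm = ρ) : π = 1 := by
    rw [← inv_inj, inv_one]
    exact eq_one_of_strictAnti_comp hν (hπ ▸ hρ)
  rw [aDet_eq_sum, coeff_sum, Finset.sum_eq_single 1]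
  · simp [coeff_monomial, ← Equiv.Perm.inv_def]
  · intro π _ hπ
    rw [coeff_smul, coeff_monomial, if_neg fun h =>
      hπ (hsummand π (Finsupp.equivFunOnFinite.symm.injective h)), smul_zero]
  · exact fun h => absurd (Finset.mem_univ _) h

lemma eval_zero_diffOp_aDet (ν : Fin n → ℕ) {φ : MvPolynomial (Fin n) ℂ}
    (hφ : φ ∈ antisymmetricSubmodule ℂ (Fin n)) :
    eval 0 (diffOp id (aDet n ν) φ) =
      n.factorial * (∏ i, (ν i).factorial : ℕ) * coeff (expVec ν) φ := by
  have hsummand (π : Equiv.Perm (Fin n)) :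
      eval 0 (diffOp id (Equiv.Perm.sign π • monomial (expVec (ν ∘ π.symm)) 1) φ) =
        (∏ i, (ν i).factorial : ℕ) * coeff (expVec ν) φ := by
    have hfac : ∏ i, (expVec (ν ∘ π.symm) i).factorial = ∏ i, (ν i).factorial :=
      Equiv.prod_comp π.symm fun i => (ν i).factorial
    rw [Units.smul_def, map_zsmul, LinearMap.smul_apply, map_zsmul, eval_zero_diffOp_monomial,
      hfac, ← mapDomain_expVec, coeff_mapDomain_of_antisymmetric hφ, Units.smul_def,
      mul_smul_comm, smul_smul, ← Units.val_mul, Int.units_mul_self, Units.val_one, one_smul]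
  simp only [aDet_eq_sum, map_sum, LinearMap.sum_apply, hsummand, Finset.sum_const,
    Finset.card_univ, Fintype.card_perm, Fintype.card_fin, nsmul_eq_mul, mul_assoc]

lemma vand_eq_aDet : vand n = aDet n (shiftedExp n 0) := by
  have hmat : (Matrix.of fun i j : Fin n => (X i : MvPolynomial (Fin n) ℂ) ^ shiftedExp n 0 j) =
      Matrix.projVandermonde (fun _ => 1) X := by
    ext1 i j
    rw [Matrix.projVandermonde_apply, one_pow, one_mul, Matrix.of_apply, Fin.val_rev, shiftedExp,
      Pi.zero_apply, zero_add, Nat.sub_sub, add_comm]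
  simp [aDet, hmat, Matrix.det_projVandermonde, vand]

lemma vand_ne_zero : vand n ≠ 0 :=
  Finset.prod_ne_zero_iff.mpr fun _ _ => Finset.prod_ne_zero_iff.mpr fun _ hj =>
    sub_ne_zero.mpr ((X_injective (R := ℂ)).ne (Finset.mem_Ioi.mp hj).ne)

lemma vand_mem_antisymmetricSubmodule : vand n ∈ antisymmetricSubmodule ℂ (Fin n) :=
  vand_eq_aDet ▸ aDet_mem_antisymmetricSubmodule _

lemma isHomogeneous_vand : (vand n).IsHomogeneous (∑ i : Fin n, (n - 1 - (i : ℕ))) := by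
  simpa [vand_eq_aDet, shiftedExp] using isHomogeneous_aDet (shiftedExp n 0)

theorem laplacian_vand : laplacian ℂ id (vand n) = 0 := by
  have hhom := isHomogeneous_vand (n := n)
  rcases (∑ i : Fin n, (n - 1 - (i : ℕ))).eq_zero_or_pos with h₀ | hpos
  · rw [h₀] at hhom
    obtain ⟨c, hc⟩ : ∃ c, vand n = C c :=
      ⟨_, totalDegree_eq_zero_iff_eq_C.mp (Nat.le_zero.mp hhom.totalDegree_le)⟩
    simp [hc, laplacian_apply]
  · exact antisymmetric_eq_zero_of_isHomogeneous
      (laplacian_mem_antisymmetricSubmodule vand_mem_antisymmetricSubmodule)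
      (isHomogeneous_laplacian hhom id) (by omega)

lemma strictAnti_shiftedExp {lam : Fin n → ℕ} (hlam : Antitone lam) :
    StrictAnti (shiftedExp n lam) := fun i j hij => by
  have := hlam hij.le
  have := Fin.lt_def.mp hij
  simp only [shiftedExp]
  omega

lemma exists_shiftedExp_eq {ν : Fin n → ℕ} (hν : StrictAnti ν) :
    ∃ lam : Partn n, shiftedExp n lam.1 = ν := by
  refine ⟨⟨fun i => ν i - (n - 1 - (i : ℕ)), fun i j hij => ?_⟩, funext fun i => ?_⟩
  · have := add_sub_le_of_strictAnti hν hij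
    have := le_apply_of_strictAnti hν j
    have := Fin.le_def.mp hij
    dsimp only
    omega
  · exact Nat.sub_add_cancel (le_apply_of_strictAnti hν i)

lemma shiftedExp_injective : Function.Injective (shiftedExp n) := fun lam mu h => by
  ext i
  exact Nat.add_right_cancel (congrFun h i)

end Alternant

section ConjInvariants

variable (R ι : Type*) [CommRing R] [Fintype ι] [DecidableEq ι]

variable {R ι} in
/-- The derivation of the coordinate ring of the space of matrices given by infinitesimal
conjugation by the elementary matrix `E_ij`: it sends the matrix `M` of coordinates to
`E_ij * M - M * E_ij`. -/
noncomputable def conjDerivation (i j : ι) :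
    Derivation R (MvPolynomial (ι × ι) R) (MvPolynomial (ι × ι) R) :=
  mkDerivation R fun p => (Matrix.single i j 1 * Matrix.mvPolynomialX ι ι R -
    Matrix.mvPolynomialX ι ι R * Matrix.single i j 1 : Matrix ι ι _) p.1 p.2

variable {R ι} in
lemma conjDerivation_apply (i j : ι) (f : MvPolynomial (ι × ι) R) :
    conjDerivation i j f =
      ∑ l, X (j, l) * pderiv (i, l) f - ∑ k, X (k, i) * pderiv (k, j) f := by
  rw [derivation_eq_sum_pderiv, Fintype.sum_prod_type]
  simp [conjDerivation, Matrix.single_apply, Matrix.mul_apply, sub_mul, Finset.sum_sub_distrib,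
    ite_and]

/-- The polynomial functions on the space of matrices that are infinitesimally invariant under
conjugation. -/
noncomputable def conjInvariants : Subalgebra R (MvPolynomial (ι × ι) R) where
  carrier := {f | ∀ i j, conjDerivation i j f = 0}
  algebraMap_mem' c i j := Derivation.map_algebraMap _ c
  add_mem' hf hg i j := by rw [map_add, hf, hg, add_zero]
  mul_mem' hf hg i j := by rw [Derivation.leibniz, hf, hg, smul_zero, smul_zero, add_zero]

variable {R ι}

attribute [local instance] LieRing.ofAssociativeRing in
lemma lie_laplacian_conjDerivation (i j : ι) :
    ⁅laplacian R (Prod.swap : ι × ι → ι × ι), (conjDerivation (R := R) i j).toLinearMap⁆ = 0 := by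
  have hop : (conjDerivation (R := R) i j).toLinearMap =
      ∑ l, Algebra.lmul R _ (X (j, l)) * diffOp Prod.swap (X (l, i)) -
        ∑ k, Algebra.lmul R _ (X (k, i)) * diffOp (R := R) Prod.swap (X (j, k)) := by
    refine LinearMap.ext fun f => ?_
    simp [conjDerivation_apply]
  simp only [hop, lie_sub, lie_sum, commutator_mul, lie_laplacian_lmul_X Prod.swap_swap,
    lie_laplacian_diffOp, mul_zero, add_zero, smul_mul_assoc]
  rw [sub_eq_zero]
  refine Finset.sum_congr rfl fun l _ => ?_
  rw [diffOp_X, diffOp_X]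
  exact congrArg _ (commute_pderiv _ _).eq

lemma laplacian_mem_conjInvariants {f : MvPolynomial (ι × ι) R} (hf : f ∈ conjInvariants R ι) :
    laplacian R Prod.swap f ∈ conjInvariants R ι := fun i j => by
  have h := LinearMap.congr_fun (lie_laplacian_conjDerivation (R := R) i j) f
  rwa [Ring.lie_def, LinearMap.sub_apply, Module.End.mul_apply, Module.End.mul_apply,
    Derivation.coeFn_coe, hf, map_zero, zero_sub, LinearMap.zero_apply, neg_eq_zero] at h

end ConjInvariants

section DiagRestriction

variable {R ι : Type*} [CommRing R] [DecidableEq ι]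

/-- The restriction of a polynomial function on matrices to the diagonal matrices. -/
noncomputable def diagRestriction : MvPolynomial (ι × ι) R →ₐ[R] MvPolynomial ι R :=
  aeval fun p => (Matrix.diagonal X : Matrix ι ι (MvPolynomial ι R)) p.1 p.2

@[simp]
lemma diagRestriction_X (i j : ι) :
    diagRestriction (X (i, j) : MvPolynomial (ι × ι) R) = if i = j then X i else 0 := by
  simp [diagRestriction, Matrix.diagonal_apply]

lemma isHomogeneous_diagRestriction {P : MvPolynomial (ι × ι) R} {k : ℕ} (hP : P.IsHomogeneous k) :
    (diagRestriction P).IsHomogeneous k := by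
  rw [← one_mul k]
  refine hP.aeval _ fun p => ?_
  rw [Matrix.diagonal_apply]
  split_ifs
  exacts [isHomogeneous_X _ _, isHomogeneous_zero _ _ _]

lemma pderiv_diagRestriction (i : ι) (f : MvPolynomial (ι × ι) R) :
    pderiv i (diagRestriction f) = diagRestriction (pderiv (i, i) f) := by
  induction f using MvPolynomial.induction_on with
  | C a => simp [diagRestriction]
  | add p q hp hq => simp only [map_add, hp, hq]
  | mul_X p q hp =>
    have hX : pderiv i (diagRestriction (X q : MvPolynomial (ι × ι) R)) =
        diagRestriction (pderiv (i, i) (X q)) := by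
      obtain ⟨a, b⟩ := q
      rw [diagRestriction_X]
      split_ifs with hab
      · subst hab
        rcases eq_or_ne i a with rfl | hne <;> simp [pderiv_X, *]
      · have hne : (a, b) ≠ (i, i) := by rintro ⟨⟩; exact hab rfl
        simp [pderiv_X_of_ne hne]
    simp only [map_mul, map_add, Derivation.leibniz, hp, hX, smul_eq_mul]

lemma pderiv_diagRestriction_sub [Fintype ι] {f : MvPolynomial (ι × ι) R}
    (hf : f ∈ conjInvariants R ι) (i j : ι) :
    pderiv i (diagRestriction f) - pderiv j (diagRestriction f) =
      (X i - X j) * diagRestriction (pderiv (i, j) (pderiv (j, i) f)) := by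
  have h := congrArg (fun g => diagRestriction (pderiv (j, i) g)) (hf i j)
  simp only [conjDerivation_apply, map_sub, map_sum, Derivation.leibniz,
    pderiv_pderiv_comm (j, i), smul_eq_mul, pderiv_X, Pi.single_apply, Prod.mk.injEq, true_and,
    mul_ite, mul_one, mul_zero, Finset.sum_add_distrib, Finset.sum_ite_eq', Finset.mem_univ,
    ↓reduceIte, and_true, map_add, map_mul, diagRestriction_X, ite_mul, zero_mul,
    Finset.sum_ite_eq, map_zero] at h
  rw [pderiv_diagRestriction, pderiv_diagRestriction]
  linear_combination h

lemma derivation_prod_eq_mul_sum {A κ : Type*} [CommRing A] [Algebra R A]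
    (D : Derivation R A A) {s : Finset κ} {F h : κ → A} (hF : ∀ i ∈ s, D (F i) = F i * h i) :
    D (∏ i ∈ s, F i) = (∏ i ∈ s, F i) * ∑ i ∈ s, h i := by
  classical
  induction s using Finset.induction_on with
  | empty => simp
  | insert a s ha ih =>
    rw [Finset.prod_insert ha, Finset.sum_insert ha, Derivation.leibniz,
      ih fun i hi => hF i (Finset.mem_insert_of_mem hi), hF a (Finset.mem_insert_self _ _)]
    simp only [smul_eq_mul]
    ring

end DiagRestriction

section RadialPart

variable {n : ℕ}

lemma diagRestriction_laplacian {R : Type*} [CommRing R] (f : MvPolynomial (Fin n × Fin n) R) :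
    diagRestriction (laplacian R Prod.swap f) = laplacian R id (diagRestriction f) +
      2 * ∑ i, ∑ j ∈ Finset.Ioi i, diagRestriction (pderiv (i, j) (pderiv (j, i) f)) := by
  set h : Fin n → Fin n → MvPolynomial (Fin n) R :=
    fun i j => diagRestriction (pderiv (i, j) (pderiv (j, i) f)) with hh
  have hoff : ∑ i, ∑ j ∈ {i}ᶜ, h j i = 2 * ∑ i, ∑ j ∈ Finset.Ioi i, h i j := by
    have hsymm (i j : Fin n) : h j i + h i j = 2 * h i j := by
      rw [hh, two_mul]
      exact congrArg (diagRestriction · + _) (pderiv_pderiv_comm _ _ _)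
    simp_rw [← Finset.sum_sum_Ioi_add_eq_sum_sum_off_diag, hsymm, Finset.mul_sum]
  rw [← hoff, laplacian_apply, laplacian_apply, map_sum, Fintype.sum_prod_type,
    ← Finset.sum_add_distrib]
  refine Finset.sum_congr rfl fun i _ => ?_
  rw [← Finset.sum_add_sum_compl {i}, Finset.sum_singleton, id, pderiv_diagRestriction,
    pderiv_diagRestriction]
  refine congrArg (_ + ·) (Finset.sum_congr rfl fun j _ => ?_)
  exact congrArg _ (pderiv_pderiv_comm _ _ _)

lemma sum_pderiv_mul_pderiv_vand {f : MvPolynomial (Fin n × Fin n) ℂ}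
    (hf : f ∈ conjInvariants ℂ (Fin n)) :
    ∑ i, pderiv i (diagRestriction f) * pderiv i (vand n) =
      vand n * ∑ i, ∑ j ∈ Finset.Ioi i, diagRestriction (pderiv (i, j) (pderiv (j, i) f)) := by
  set D := mkDerivation ℂ fun i => pderiv i (diagRestriction f)
  have hX (i : Fin n) : D (X i) = pderiv i (diagRestriction f) := mkDerivation_X _ _ _
  simp_rw [← hX]
  rw [← derivation_eq_sum_pderiv, vand]
  refine derivation_prod_eq_mul_sum _ fun i _ => derivation_prod_eq_mul_sum _ fun j _ => ?_
  rw [map_sub, hX, hX, pderiv_diagRestriction_sub hf]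

theorem vand_mul_diagRestriction_laplacian {f : MvPolynomial (Fin n × Fin n) ℂ}
    (hf : f ∈ conjInvariants ℂ (Fin n)) :
    vand n * diagRestriction (laplacian ℂ Prod.swap f) =
      laplacian ℂ id (vand n * diagRestriction f) := by
  rw [laplacian_mul, laplacian_vand, zero_mul, zero_add, sum_pderiv_mul_pderiv_vand hf,
    diagRestriction_laplacian]
  ring

variable (n) in
/-- The pairs `(A, B)` where `A` preserves invariant polynomial functions on matrices and `B` is its
radial part: after restriction to the diagonal and multiplication by the Vandermonde polynomial,
`A` becomes `B`. -/
noncomputable def radialPairs : Subalgebra ℂ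
    (Module.End ℂ (MvPolynomial (Fin n × Fin n) ℂ) × Module.End ℂ (MvPolynomial (Fin n) ℂ)) where
  carrier := {A | ∀ f ∈ conjInvariants ℂ (Fin n), A.1 f ∈ conjInvariants ℂ (Fin n) ∧
    vand n * diagRestriction (A.1 f) = A.2 (vand n * diagRestriction f)}
  algebraMap_mem' c f hf := ⟨Subalgebra.smul_mem _ hf c, by simp [Module.algebraMap_end_apply]⟩
  add_mem' hA hB f hf := ⟨add_mem (hA f hf).1 (hB f hf).1, by
    simp [mul_add, (hA f hf).2, (hB f hf).2]⟩
  mul_mem' hA hB f hf := ⟨(hA _ (hB f hf).1).1, by simp [(hA _ (hB f hf).1).2, (hB f hf).2]⟩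

attribute [local instance] LieRing.ofAssociativeRing

lemma lie_mem_radialPairs {A A' : Module.End ℂ (MvPolynomial (Fin n × Fin n) ℂ)}
    {B B' : Module.End ℂ (MvPolynomial (Fin n) ℂ)} (h : (A, B) ∈ radialPairs n)
    (h' : (A', B') ∈ radialPairs n) : (⁅A, A'⁆, ⁅B, B'⁆) ∈ radialPairs n := by
  rw [Ring.lie_def, Ring.lie_def, ← Prod.mk_sub_mk, ← Prod.mk_mul_mk, ← Prod.mk_mul_mk]
  exact Subalgebra.sub_mem _ (Subalgebra.mul_mem _ h h') (Subalgebra.mul_mem _ h' h)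

lemma laplacian_mem_radialPairs :
    (laplacian ℂ Prod.swap, laplacian ℂ id) ∈ radialPairs n := fun _ hf =>
  ⟨laplacian_mem_conjInvariants hf, vand_mul_diagRestriction_laplacian hf⟩

lemma lmul_mem_radialPairs {P : MvPolynomial (Fin n × Fin n) ℂ}
    (hP : P ∈ conjInvariants ℂ (Fin n)) :
    (Algebra.lmul ℂ (MvPolynomial (Fin n × Fin n) ℂ) P,
      Algebra.lmul ℂ (MvPolynomial (Fin n) ℂ) (diagRestriction P)) ∈ radialPairs n := fun f hf =>
  ⟨mul_mem hP hf, by simp [mul_left_comm]⟩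

theorem diffOp_mem_radialPairs {P : MvPolynomial (Fin n × Fin n) ℂ} {k : ℕ}
    (hP : P ∈ conjInvariants ℂ (Fin n)) (hk : P.IsHomogeneous k) :
    (diffOp Prod.swap P, diffOp id (diagRestriction P)) ∈ radialPairs n := by
  have had (j : ℕ) :
      ((LieAlgebra.ad ℂ _ (laplacian ℂ Prod.swap) ^ j) (Algebra.lmul ℂ _ P),
        (LieAlgebra.ad ℂ _ (laplacian ℂ id) ^ j) (Algebra.lmul ℂ _ (diagRestriction P))) ∈
          radialPairs n := by
    induction j with
    | zero => exact lmul_mem_radialPairs hP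
    | succ j ih =>
      simp only [pow_succ', Module.End.mul_apply, LieAlgebra.ad_apply]
      exact lie_mem_radialPairs laplacian_mem_radialPairs ih
  have hc : (2 ^ k * k.factorial : ℂ) ≠ 0 := by
    exact_mod_cast (by positivity : 2 ^ k * k.factorial ≠ 0)
  have h := Subalgebra.smul_mem _ (had k) (2 ^ k * k.factorial : ℂ)⁻¹
  rw [ad_laplacian_pow_lmul Prod.swap_swap hk, ad_laplacian_pow_lmul (fun _ => rfl)
    (isHomogeneous_diagRestriction hk)] at h
  rw [← Prod.smul_mk, ← Nat.cast_smul_eq_nsmul ℂ] at h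
  push_cast at h
  rwa [inv_smul_smul₀ hc] at h

end RadialPart

section CharpolyInvariants

variable {R ι : Type*} [CommRing R] [Fintype ι] [DecidableEq ι]

/-- The value of a polynomial function on matrices at the matrix `x`. -/
noncomputable def evalMatrix (x : Matrix ι ι R) : MvPolynomial (ι × ι) R →ₐ[R] R :=
  aeval fun p => x p.1 p.2

omit [Fintype ι] in
lemma evalMatrix_diagonal (d : ι → R) (f : MvPolynomial (ι × ι) R) :
    evalMatrix (Matrix.diagonal d) f = eval d (diagRestriction f) := by
  rw [← coe_aeval_eq_eval, RingHom.coe_coe, ← AlgHom.comp_apply]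
  refine DFunLike.congr_fun (algHom_ext fun p => ?_) f
  rw [evalMatrix, aeval_X, AlgHom.comp_apply, diagRestriction, aeval_X, Matrix.diagonal_apply,
    Matrix.diagonal_apply, apply_ite (aeval d), aeval_X, map_zero]

lemma map_charpoly_univ_coeff {A : Type*} [CommRing A] [Algebra R A]
    (φ : MvPolynomial (ι × ι) R →ₐ[R] A) (k : ℕ) :
    φ ((Matrix.charpoly.univ R ι).coeff k) =
      ((Matrix.mvPolynomialX ι ι R).map φ).charpoly.coeff k := by
  have h := Matrix.charpoly_map (Matrix.mvPolynomialX ι ι R) (φ : _ →+* A)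
  exact ((congrArg (Polynomial.coeff · k) h).trans (Polynomial.coeff_map _ _)).symm

lemma evalMatrix_charpoly_univ_coeff (x : Matrix ι ι R) (k : ℕ) :
    evalMatrix x ((Matrix.charpoly.univ R ι).coeff k) = x.charpoly.coeff k := by
  rw [map_charpoly_univ_coeff]
  congr
  ext i j
  simp [evalMatrix]

lemma diagRestriction_charpoly_univ_coeff (k : ℕ) :
    diagRestriction ((Matrix.charpoly.univ R ι).coeff k) =
      (∏ i : ι, (Polynomial.X - Polynomial.C (X i : MvPolynomial ι R))).coeff k := by
  rw [map_charpoly_univ_coeff, ← Matrix.charpoly_diagonal]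
  congr
  ext1 i j
  simp [Matrix.diagonal_apply]

lemma charpoly_add_mul_sub_mul {E M : Matrix ι ι R} (hE : E * E = 0) (hEM : E * M * E = 0) :
    (M + (E * M - M * E)).charpoly = M.charpoly := by
  have hconj : M + (E * M - M * E) = (1 + E) * M * (1 - E) := by
    linear_combination (norm := noncomm_ring) hEM
  have hinv : (1 - E) * (1 + E) = 1 := by linear_combination (norm := noncomm_ring) -hE
  rw [hconj, Matrix.charpoly_mul_comm, ← mul_assoc, hinv, one_mul]

lemma aeval_inl_add_inr_derivation {σ : Type*}
    (D : Derivation R (MvPolynomial σ R) (MvPolynomial σ R)) (f : MvPolynomial σ R) :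
    aeval (fun i => (TrivSqZeroExt.inl (X i) + TrivSqZeroExt.inr (D (X i)) :
      DualNumber (MvPolynomial σ R))) f = TrivSqZeroExt.inl f + TrivSqZeroExt.inr (D f) := by
  induction f using MvPolynomial.induction_on with
  | C a =>
    rw [← algebraMap_eq, AlgHom.commutes, Derivation.map_algebraMap, TrivSqZeroExt.inr_zero,
      add_zero]
    rfl
  | add p q hp hq =>
    rw [map_add, hp, hq, map_add]
    ext <;> simp
  | mul_X p i hp =>
    rw [map_mul, hp, aeval_X]
    ext
    · simp
    · simp [mul_comm]

lemma charpoly_univ_coeff_mem_conjInvariants (k : ℕ) :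
    (Matrix.charpoly.univ R ι).coeff k ∈ conjInvariants R ι := fun i j => by
  let inl : MvPolynomial (ι × ι) R →+* DualNumber (MvPolynomial (ι × ι) R) :=
    TrivSqZeroExt.inlHom _ _
  set M := (Matrix.mvPolynomialX ι ι R).map inl with hM
  set E : Matrix ι ι (DualNumber (MvPolynomial (ι × ι) R)) :=
    Matrix.single i j DualNumber.eps with hE
  have hEE : E * E = 0 := by
    rcases eq_or_ne i j with rfl | hij
    · simp [hE]
    · simp [hE, hij.symm]
  have hEM : E * M * E = 0 := by simp [hE, mul_right_comm]
  have hmap : (Matrix.mvPolynomialX ι ι R).map (aeval fun p =>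
      (TrivSqZeroExt.inl (X p) + TrivSqZeroExt.inr (conjDerivation i j (X p)) :
        DualNumber (MvPolynomial (ι × ι) R))) = M + (E * M - M * E) := by
    ext1 a b
    rw [Matrix.map_apply, Matrix.mvPolynomialX_apply, aeval_X, conjDerivation, mkDerivation_X]
    by_cases hia : i = a <;> by_cases hjb : j = b <;> ext1 <;>
      simp [hE, hM, inl, Matrix.mul_apply, Matrix.single_apply, hia, hjb]
  have h := aeval_inl_add_inr_derivation (conjDerivation i j) ((Matrix.charpoly.univ R ι).coeff k)
  rw [map_charpoly_univ_coeff, hmap, charpoly_add_mul_sub_mul hEE hEM, hM, Matrix.charpoly_map,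
    Polynomial.coeff_map] at h
  simpa [inl] using (congrArg TrivSqZeroExt.snd h).symm

variable (R ι) in
/-- The algebra of polynomial functions on matrices generated by the coefficients of the
characteristic polynomial. -/
noncomputable def charpolyInvariants : Subalgebra R (MvPolynomial (ι × ι) R) :=
  Algebra.adjoin R (Set.range (Matrix.charpoly.univ R ι).coeff)

lemma charpolyInvariants_le_conjInvariants : charpolyInvariants R ι ≤ conjInvariants R ι :=
  Algebra.adjoin_le <| Set.range_subset_iff.2 charpoly_univ_coeff_mem_conjInvariants

lemma evalMatrix_eq_of_charpoly_eq {P : MvPolynomial (ι × ι) R} (hP : P ∈ charpolyInvariants R ι)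
    {x y : Matrix ι ι R} (hxy : x.charpoly = y.charpoly) : evalMatrix x P = evalMatrix y P := by
  have hle : charpolyInvariants R ι ≤ AlgHom.equalizer (evalMatrix x) (evalMatrix y) :=
    Algebra.adjoin_le <| Set.range_subset_iff.2 fun k => by
      rw [SetLike.mem_coe, AlgHom.mem_equalizer, evalMatrix_charpoly_univ_coeff,
        evalMatrix_charpoly_univ_coeff, hxy]
  exact hle hP

attribute [local instance] MvPolynomial.gradedAlgebra in
lemma homogeneousComponent_mem_charpolyInvariants {P : MvPolynomial (ι × ι) R}
    (hP : P ∈ charpolyInvariants R ι) (k : ℕ) :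
    homogeneousComponent k P ∈ charpolyInvariants R ι := by
  have h : DirectSum.SetLike.IsHomogeneous (homogeneousSubmodule (ι × ι) R)
      (charpolyInvariants R ι).toSubsemiring := by
    refine IsHomogeneous.subsemiringClosure_of_isHomogeneousElem
      (𝒜 := homogeneousSubmodule (ι × ι) R) ?_
    rintro _ (⟨r, rfl⟩ | ⟨i, rfl⟩)
    · exact ⟨0, isHomogeneous_C _ r⟩
    · refine ⟨Fintype.card ι - i, ?_⟩
      rcases eq_or_ne ((Matrix.charpoly.univ R ι).coeff i) 0 with h₀ | h₀
      · exact h₀ ▸ zero_mem _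
      · have := nontrivial_of_ne _ _ h₀
        have hi := (Polynomial.le_natDegree_of_ne_zero h₀).trans_eq
          (Matrix.charpoly_natDegree_eq_dim _)
        exact Matrix.charpoly.univ_coeff_isHomogeneous R ι i _ (Nat.add_sub_cancel' hi)
  rw [← decomposition.decompose'_apply]
  exact h k hP

omit [Fintype ι] in
lemma homogeneousComponent_diagRestriction (f : MvPolynomial (ι × ι) R) (k : ℕ) :
    homogeneousComponent k (diagRestriction f) = diagRestriction (homogeneousComponent k f) := by
  conv_lhs => rw [← sum_homogeneousComponent f, map_sum, map_sum]
  have hk (i : ℕ) := isHomogeneous_diagRestriction (homogeneousComponent_isHomogeneous i f)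
  simp_rw [homogeneousComponent_of_mem (hk _)]
  rw [Finset.sum_ite_eq]
  split_ifs with h
  · rfl
  · rw [homogeneousComponent_eq_zero _ _ (by simpa using h), map_zero]

lemma esymm_mem_map_diagRestriction {k : ℕ} (hk : k ≤ Fintype.card ι) :
    esymm ι R k ∈ (charpolyInvariants R ι).map diagRestriction := by
  have hcoeff : (Matrix.charpoly.univ R ι).coeff (Fintype.card ι - k) ∈ charpolyInvariants R ι :=
    Algebra.subset_adjoin ⟨_, rfl⟩
  refine ⟨_, Subalgebra.smul_mem _ hcoeff ((-1) ^ k), ?_⟩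
  have h := Multiset.prod_X_sub_C_coeff (Finset.univ.val.map (X : ι → MvPolynomial ι R))
    (k := Fintype.card ι - k) (by simp)
  rw [Multiset.map_map, Multiset.card_map, Finset.card_val, Finset.card_univ,
    Nat.sub_sub_self hk, ← aeval_esymm_eq_multiset_esymm ι R, aeval_X_left] at h
  rw [RingHom.coe_coe, map_smul, diagRestriction_charpoly_univ_coeff]
  refine (congrArg ((-1 : R) ^ k • ·) h).trans ?_
  simp [smul_eq_C_mul, ← mul_assoc, ← mul_pow]

/-- The surjectivity half of Chevalley's restriction theorem. -/
lemma exists_mem_charpolyInvariants_diagRestriction_eq {g : MvPolynomial ι R}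
    (hg : g.IsSymmetric) : ∃ P ∈ charpolyInvariants R ι, diagRestriction P = g := by
  obtain ⟨q, hq⟩ := esymmAlgHom_surjective R le_rfl ⟨g, hg⟩
  suffices g ∈ (charpolyInvariants R ι).map diagRestriction from this
  rw [show g = aeval _ q from (congrArg Subtype.val hq).symm.trans (esymmAlgHom_apply q)]
  rw [Subalgebra.mvPolynomial_aeval_coe (Subalgebra.map diagRestriction (charpolyInvariants R ι))
    fun i : Fin _ => ⟨esymm ι R (i + 1), esymm_mem_map_diagRestriction i.2⟩]
  exact SetLike.coe_mem _

lemma exists_isHomogeneous_diagRestriction_eq {g : MvPolynomial ι R} {k : ℕ}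
    (hg : g.IsSymmetric) (hk : g.IsHomogeneous k) :
    ∃ P ∈ charpolyInvariants R ι, P.IsHomogeneous k ∧ diagRestriction P = g := by
  obtain ⟨P, hP, rfl⟩ := exists_mem_charpolyInvariants_diagRestriction_eq hg
  refine ⟨_, homogeneousComponent_mem_charpolyInvariants hP k,
    homogeneousComponent_isHomogeneous k P, ?_⟩
  rw [← homogeneousComponent_diagRestriction, homogeneousComponent_of_mem hk, if_pos rfl]

end CharpolyInvariants

section UnitaryInvariants

variable {ι : Type*} [Fintype ι] [DecidableEq ι]

omit [Fintype ι] [DecidableEq ι] in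
lemma eq_zero_of_evalMatrix_isHermitian {f : MvPolynomial (ι × ι) ℂ}
    (hf : ∀ A : Matrix ι ι ℂ, A.IsHermitian → evalMatrix A f = 0) : f = 0 := by
  refine MvPolynomial.funext fun v => ?_
  let x : Matrix ι ι ℂ := Matrix.of v.curry
  let A : Matrix ι ι ℂ := (realPart x).1
  let B : Matrix ι ι ℂ := (imaginaryPart x).1
  let Q : Polynomial ℂ :=
    aeval (fun p : ι × ι => Polynomial.C (A p.1 p.2) + Polynomial.X * Polynomial.C (B p.1 p.2)) f
  have hQ (t : ℂ) : Q.eval t = evalMatrix (A + t • B) f := by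
    rw [← Polynomial.coe_aeval_eq_eval, show (Polynomial.aeval t) Q = _ from comp_aeval_apply _ _ _]
    simp [evalMatrix, mul_comm t]
  have hQ₀ : Q = 0 := by
    refine Polynomial.eq_zero_of_infinite_isRoot _ <|
      (Set.infinite_range_of_injective Complex.ofReal_injective).mono ?_
    rintro _ ⟨t, rfl⟩
    refine (hQ t).trans (hf _ ?_)
    exact IsSelfAdjoint.add (realPart x).2
      (IsSelfAdjoint.smul (Complex.conj_ofReal t) (imaginaryPart x).2)
  have h := hQ Complex.I
  rw [hQ₀, Polynomial.eval_zero, realPart_add_I_smul_imaginaryPart] at h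
  rw [map_zero, h]
  rfl

variable (ι) in
/-- The polynomial functions on matrices that are invariant under unitary conjugation. -/
noncomputable def unitaryInvariants : Subalgebra ℂ (MvPolynomial (ι × ι) ℂ) :=
  ⨅ (u : Matrix.unitaryGroup ι ℂ) (x : Matrix ι ι ℂ),
    AlgHom.equalizer (evalMatrix (Unitary.conjStarAlgAut ℂ _ u x)) (evalMatrix x)

lemma mem_unitaryInvariants {f : MvPolynomial (ι × ι) ℂ} :
    f ∈ unitaryInvariants ι ↔ ∀ (u : Matrix.unitaryGroup ι ℂ) (x : Matrix ι ι ℂ),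
      evalMatrix (Unitary.conjStarAlgAut ℂ _ u x) f = evalMatrix x f := by
  simp only [unitaryInvariants, Algebra.mem_iInf, AlgHom.mem_equalizer]

lemma charpolyInvariants_le_unitaryInvariants :
    charpolyInvariants ℂ ι ≤ unitaryInvariants ι := fun P hP =>
  mem_unitaryInvariants.2 fun u x => evalMatrix_eq_of_charpoly_eq hP <| by
    rw [Unitary.conjStarAlgAut_apply, Matrix.charpoly_mul_comm, ← mul_assoc,
      Unitary.coe_star_mul_self, one_mul]

lemma eq_of_diagRestriction_eq {f g : MvPolynomial (ι × ι) ℂ} (hf : f ∈ unitaryInvariants ι)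
    (hg : g ∈ unitaryInvariants ι) (h : diagRestriction f = diagRestriction g) : f = g := by
  rw [← sub_eq_zero]
  refine eq_zero_of_evalMatrix_isHermitian fun A hA => ?_
  rw [hA.spectral_theorem, mem_unitaryInvariants.1 (sub_mem hf hg), evalMatrix_diagonal, map_sub,
    h, sub_self, map_zero]

lemma isSymmetric_diagRestriction {f : MvPolynomial (ι × ι) ℂ} (hf : f ∈ unitaryInvariants ι) :
    (diagRestriction f).IsSymmetric := fun π => by
  refine MvPolynomial.funext fun d => ?_
  have hu : π.permMatrix ℂ ∈ Matrix.unitaryGroup ι ℂ := by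
    rw [Matrix.mem_unitaryGroup_iff, Matrix.star_eq_conjTranspose, Matrix.conjTranspose_permMatrix,
      ← Matrix.permMatrix_mul, inv_mul_cancel, Matrix.permMatrix_one]
  rw [eval_rename, ← evalMatrix_diagonal, ← evalMatrix_diagonal,
    ← mem_unitaryInvariants.1 hf ⟨_, hu⟩ (Matrix.diagonal d)]
  congr
  simp only [Unitary.conjStarAlgAut_apply, Matrix.star_eq_conjTranspose,
    Matrix.conjTranspose_permMatrix, Equiv.Perm.permMatrix, PEquiv.toMatrix_toPEquiv_mul,
    PEquiv.mul_toMatrix_toPEquiv, Matrix.submatrix_submatrix]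
  exact (Matrix.submatrix_diagonal_equiv d π).symm

theorem unitaryInvariants_eq_charpolyInvariants :
    unitaryInvariants ι = charpolyInvariants ℂ ι := by
  refine le_antisymm (fun f hf => ?_) charpolyInvariants_le_unitaryInvariants
  obtain ⟨P, hP, hPf⟩ :=
    exists_mem_charpolyInvariants_diagRestriction_eq (isSymmetric_diagRestriction hf)
  rwa [eq_of_diagRestriction_eq hf (charpolyInvariants_le_unitaryInvariants hP) hPf.symm]

end UnitaryInvariants

section Eigenvalues

variable {n : ℕ}

lemma map_eigs (x : Matrix (Fin n) (Fin n) ℂ) :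
    Finset.univ.val.map (eigs x) = x.charpoly.roots := by
  have hl : x.charpoly.roots.toList.length = n := by
    rw [Multiset.length_toList, ← (IsAlgClosed.splits x.charpoly).natDegree_eq_card_roots,
      Matrix.charpoly_natDegree_eq_dim, Fintype.card_fin]
  conv_rhs => rw [← Multiset.coe_toList x.charpoly.roots]
  rw [Fin.univ_val_map, Multiset.coe_eq_coe]
  refine .of_eq <| List.ext_getElem (by simp [hl]) fun i _ hi => ?_
  rw [List.getElem_ofFn]
  exact List.getD_eq_getElem _ _ hi

lemma charpoly_diagonal_eigs (x : Matrix (Fin n) (Fin n) ℂ) :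
    (Matrix.diagonal (eigs x)).charpoly = x.charpoly := by
  rw [Matrix.charpoly_diagonal, (IsAlgClosed.splits x.charpoly).eq_prod_roots_of_monic
    x.charpoly_monic, ← map_eigs, Multiset.map_map]
  rfl

lemma evalMatrix_eq_eval_eigs {P : MvPolynomial (Fin n × Fin n) ℂ}
    (hP : P ∈ charpolyInvariants ℂ (Fin n)) (x : Matrix (Fin n) (Fin n) ℂ) :
    evalMatrix x P = eval (eigs x) (diagRestriction P) := by
  rw [← evalMatrix_diagonal, evalMatrix_eq_of_charpoly_eq hP (charpoly_diagonal_eigs x)]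

end Eigenvalues

section TraceForm

variable {R ι : Type*} [CommRing R] [Fintype ι]

/-- The linear form `x ↦ Tr (x A)` on matrices. -/
noncomputable def traceForm (A : Matrix ι ι R) : MvPolynomial (ι × ι) R :=
  ∑ p : ι × ι, C (A p.2 p.1) * X p

lemma evalMatrix_traceForm (A x : Matrix ι ι R) : evalMatrix x (traceForm A) = (x * A).trace := by
  simp only [traceForm, evalMatrix, map_sum, map_mul, algHom_C, aeval_X,
    Algebra.algebraMap_self_apply, Matrix.trace, Matrix.diag_apply, Matrix.mul_apply,
    Fintype.sum_prod_type, mul_comm]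

lemma pderiv_swap_traceForm (A : Matrix ι ι R) (p : ι × ι) :
    pderiv p.swap (traceForm A) = C (A p.1 p.2) := by
  classical
  simp [traceForm, pderiv_X, Pi.single_apply, apply_ite]

lemma isHomogeneous_traceForm_pow (A : Matrix ι ι R) (k : ℕ) :
    (traceForm A ^ k).IsHomogeneous k := by
  have h : (traceForm A).IsHomogeneous 1 := IsHomogeneous.sum _ _ _ fun p _ =>
    zero_add 1 ▸ (isHomogeneous_C _ (A p.2 p.1)).mul (isHomogeneous_X R p)
  simpa only [one_mul] using h.pow k

lemma continuous_coeff_traceForm_pow [TopologicalSpace R] [IsTopologicalRing R] (k : ℕ)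
    (m : ι × ι →₀ ℕ) : Continuous fun A : Matrix ι ι R => coeff m (traceForm A ^ k) := by
  classical
  induction k generalizing m with
  | zero => simpa only [pow_zero] using continuous_const
  | succ k ih =>
    simp only [pow_succ, coeff_mul]
    refine continuous_finsetSum _ fun a _ => (ih a.1).mul ?_
    simp only [traceForm, coeff_sum, coeff_C_mul]
    fun_prop

end TraceForm

section Averaging

lemma eq_sum_finsuppAntidiag_monomial_coeff {R σ : Type*} [CommSemiring R] [Fintype σ]
    [DecidableEq σ] {p : MvPolynomial σ R} {k : ℕ} (hp : p.IsHomogeneous k) :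
    p = ∑ m ∈ Finset.univ.finsuppAntidiag k, monomial m (coeff m p) := by
  refine p.as_sum.trans (Finset.sum_subset (fun m hm => ?_) fun m _ hm => ?_)
  · rw [Finset.mem_finsuppAntidiag, ← Finsupp.degree_eq_sum]
    exact ⟨(hp.degree_eq_sum_deg_support hm).symm, Finset.subset_univ _⟩
  · rw [notMem_support_iff.1 hm, monomial_zero]

lemma exists_isHomogeneous_forall_eq_integral {Ω σ : Type*} [MeasurableSpace Ω] {μ : Measure Ω}
    [Finite σ] {φ : Ω → MvPolynomial σ ℂ} {k : ℕ} (hφ : ∀ ω, (φ ω).IsHomogeneous k)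
    (hint : ∀ m, Integrable (fun ω => coeff m (φ ω)) μ) :
    ∃ f : MvPolynomial σ ℂ, f.IsHomogeneous k ∧
      ∀ Λ : MvPolynomial σ ℂ →ₗ[ℂ] ℂ, Λ f = ∫ ω, Λ (φ ω) ∂μ := by
  classical
  have := Fintype.ofFinite σ
  refine ⟨∑ m ∈ Finset.univ.finsuppAntidiag k, monomial m (∫ ω, coeff m (φ ω) ∂μ),
    IsHomogeneous.sum _ _ _ fun m hm => isHomogeneous_monomial _ ?_, fun Λ => ?_⟩
  · rw [Finsupp.degree_eq_sum]
    exact (Finset.mem_finsuppAntidiag.1 hm).1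
  have hΛ (m : σ →₀ ℕ) (c : ℂ) : Λ (monomial m c) = c * Λ (monomial m 1) := by
    rw [← smul_eq_mul, ← map_smul, smul_monomial, smul_eq_mul, mul_one]
  have hΛφ (ω : Ω) : Λ (φ ω) =
      ∑ m ∈ Finset.univ.finsuppAntidiag k, coeff m (φ ω) * Λ (monomial m 1) := by
    conv_lhs => rw [eq_sum_finsuppAntidiag_monomial_coeff (hφ ω), map_sum]
    exact Finset.sum_congr rfl fun m _ => hΛ m _
  simp_rw [hΛφ, map_sum, hΛ _ (∫ _, _ ∂μ)]
  rw [integral_finsetSum _ fun m _ => (hint m).mul_const _]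
  simp_rw [integral_mul_const]

end Averaging

section UnitaryGroup

instance compactSpace_unitaryGroup (ι 𝕜 : Type*) [Fintype ι] [DecidableEq ι] [RCLike 𝕜] :
    CompactSpace (Matrix.unitaryGroup ι 𝕜) := by
  have hbox : IsCompact (Set.univ.pi fun _ : ι => Set.univ.pi fun _ : ι =>
      Metric.closedBall (0 : 𝕜) 1) :=
    isCompact_univ_pi fun _ => isCompact_univ_pi fun _ => isCompact_closedBall 0 1
  have hclosed : IsClosed (Matrix.unitaryGroup ι 𝕜 : Set (Matrix ι ι 𝕜)) := isClosed_unitary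
  exact isCompact_iff_compactSpace.1 <| hbox.of_isClosed_subset hclosed fun A hA i _ j _ =>
    mem_closedBall_zero_iff.2 (entry_norm_bound_of_unitary hA i j)

variable {ι : Type*} [Fintype ι] [DecidableEq ι]

lemma continuous_conjStarAlgAut (z : Matrix ι ι ℂ) :
    Continuous fun u : Matrix.unitaryGroup ι ℂ => Unitary.conjStarAlgAut ℂ _ u z := by
  simp only [Unitary.conjStarAlgAut_apply]
  fun_prop

lemma trace_conjStarAlgAut (u : Matrix.unitaryGroup ι ℂ) (x : Matrix ι ι ℂ) :
    (Unitary.conjStarAlgAut ℂ _ u x).trace = x.trace := by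
  rw [Unitary.conjStarAlgAut_apply, Matrix.trace_mul_comm, ← mul_assoc, Unitary.coe_star_mul_self,
    one_mul]

variable {n : ℕ}

instance borelSpace_unitaryGroup : BorelSpace (Matrix.unitaryGroup (Fin n) ℂ) := ⟨rfl⟩

variable (μ : Measure (Matrix.unitaryGroup (Fin n) ℂ))

lemma integrable_unitaryGroup_of_continuous [IsFiniteMeasureOnCompacts μ] {E : Type*}
    [NormedAddCommGroup E] {f : Matrix.unitaryGroup (Fin n) ℂ → E} (hf : Continuous f) :
    Integrable f μ :=
  hf.integrable_of_hasCompactSupport (.of_compactSpace f)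

lemma exists_mem_unitaryInvariants_forall_eq_integral [μ.IsHaarMeasure]
    (z : Matrix (Fin n) (Fin n) ℂ) (k : ℕ) :
    ∃ f ∈ unitaryInvariants (Fin n), f.IsHomogeneous k ∧
      ∀ Λ : MvPolynomial (Fin n × Fin n) ℂ →ₗ[ℂ] ℂ,
        Λ f = ∫ u, Λ (traceForm (Unitary.conjStarAlgAut ℂ _ u z) ^ k) ∂μ := by
  obtain ⟨f, hf, hΛ⟩ := exists_isHomogeneous_forall_eq_integral (μ := μ)
    (fun u => isHomogeneous_traceForm_pow (Unitary.conjStarAlgAut ℂ _ u z) k) fun m =>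
      integrable_unitaryGroup_of_continuous μ
        ((continuous_coeff_traceForm_pow k m).comp (continuous_conjStarAlgAut z))
  have heval (x : Matrix (Fin n) (Fin n) ℂ) :
      evalMatrix x f = ∫ u, (x * Unitary.conjStarAlgAut ℂ _ u z).trace ^ k ∂μ := by
    simpa only [AlgHom.toLinearMap_apply, map_pow, evalMatrix_traceForm] using
      hΛ (evalMatrix x).toLinearMap
  refine ⟨f, mem_unitaryInvariants.2 fun v x => ?_, hf, hΛ⟩
  rw [heval, heval, ← integral_mul_left_eq_self _ v]
  simp_rw [Unitary.conjStarAlgAut_mul_apply, ← map_mul, trace_conjStarAlgAut]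

end UnitaryGroup

section Homogeneous

variable {R σ : Type*} [CommRing R] {p q : MvPolynomial σ R} {k l : ℕ}

lemma isHomogeneous_of_mul_left [IsDomain R] (hp : p.IsHomogeneous k) (hp₀ : p ≠ 0)
    (hpq : (p * q).IsHomogeneous (k + l)) : q.IsHomogeneous l := by
  let := gradedAlgebra (σ := σ) (R := R)
  have h := DirectSum.coe_decompose_mul_add_of_left_mem (homogeneousSubmodule σ R) (i := k) (j := l)
    (b := q) hp
  rw [DirectSum.decompose_of_mem_same _ hpq] at h
  rw [mul_left_cancel₀ hp₀ h]
  exact (DirectSum.decompose (homogeneousSubmodule σ R) q l).2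

lemma coeff_mul_of_isHomogeneous {m : σ →₀ ℕ} (hp : p.IsHomogeneous m.degree) :
    coeff m (p * q) = coeff m p * coeff 0 q := by
  classical
  rw [coeff_mul, Finset.sum_eq_single (m, 0)]
  · rintro ⟨a, b⟩ hab hne
    obtain rfl : a + b = m := Finset.HasAntidiagonal.mem_antidiagonal.1 hab
    refine mul_eq_zero_of_left (hp.coeff_eq_zero fun ha => hne ?_) _
    obtain rfl : b = 0 := by simpa [Finsupp.degree_eq_zero_iff] using ha
    rw [add_zero]
  · simp

lemma eval_zero_diffOp_mul_of_isHomogeneous [Finite σ] (hp : p.IsHomogeneous k)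
    (hq : q.IsHomogeneous k) (f : MvPolynomial σ R) :
    eval 0 (diffOp id p (q * f)) = eval 0 (diffOp id p q) * eval 0 f := by
  have := Fintype.ofFinite σ
  rw [p.as_sum]
  simp only [map_sum, LinearMap.sum_apply, Finset.sum_mul]
  refine Finset.sum_congr rfl fun m hm => ?_
  have hm' : m.degree = k := (hp.degree_eq_sum_deg_support hm).symm
  have hmon : monomial m (coeff m p) = coeff m p • monomial m 1 := by
    rw [smul_monomial, smul_eq_mul, mul_one]
  rw [hmon]
  simp only [map_smul, LinearMap.smul_apply, smul_eval, eval_zero_diffOp_monomial]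
  rw [coeff_mul_of_isHomogeneous (hm' ▸ hq), ← constantCoeff_eq, eval_zero]
  ring

end Homogeneous

section AlternantExpansion

/-- The number `|λ|` of which `λ` is a partition. -/
def Partn.size {n : ℕ} (lam : Partn n) : ℕ := ∑ i, lam.1 i

lemma finite_setOf_size_eq (n k : ℕ) : {lam : Partn n | lam.size = k}.Finite :=
  ((Finset.univ.piAntidiag k).finite_toSet.preimage Subtype.val_injective.injOn).subset
    fun (lam : Partn n) (hlam : lam.size = k) => Finset.mem_piAntidiag.2 ⟨hlam, by simp⟩

/-- The partitions of `k` with at most `n` parts. -/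
noncomputable def partnsOfSize (n k : ℕ) : Finset (Partn n) := (finite_setOf_size_eq n k).toFinset

variable {n k : ℕ}

lemma mem_partnsOfSize {lam : Partn n} : lam ∈ partnsOfSize n k ↔ lam.size = k :=
  (finite_setOf_size_eq n k).mem_toFinset

lemma sum_shiftedExp (lam : Partn n) :
    ∑ i, shiftedExp n lam.1 i = ∑ i : Fin n, (n - 1 - (i : ℕ)) + lam.size := by
  simp only [shiftedExp, Partn.size, Finset.sum_add_distrib, add_comm]

lemma eq_sum_coeff_smul_aDet {φ : MvPolynomial (Fin n) ℂ}
    (hφ : φ ∈ antisymmetricSubmodule ℂ (Fin n))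
    (hk : φ.IsHomogeneous (∑ i : Fin n, (n - 1 - (i : ℕ)) + k)) :
    φ = ∑ lam ∈ partnsOfSize n k,
      coeff (expVec (shiftedExp n lam.1)) φ • aDet n (shiftedExp n lam.1) := by
  classical
  rw [← sub_eq_zero]
  refine antisymmetric_eq_zero (sub_mem hφ <| sum_mem fun lam _ =>
    Submodule.smul_mem _ _ (aDet_mem_antisymmetricSubmodule _)) fun ν hν => ?_
  obtain ⟨lam, rfl⟩ := exists_shiftedExp_eq hν
  have hcoeff (mu : Partn n) : coeff (expVec (shiftedExp n lam.1)) (aDet n (shiftedExp n mu.1)) =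
      if mu = lam then 1 else 0 := by
    rw [coeff_aDet (strictAnti_shiftedExp mu.2) hν]
    exact if_congr (shiftedExp_injective.eq_iff.trans Subtype.val_inj) rfl rfl
  simp only [coeff_sub, coeff_sum, coeff_smul, hcoeff, smul_eq_mul, mul_ite, mul_one, mul_zero,
    Finset.sum_ite_eq', mem_partnsOfSize]
  split_ifs with hlam
  · exact sub_self _
  · rw [sub_zero]
    refine hk.coeff_eq_zero ?_
    rw [degree_expVec, sum_shiftedExp]
    omega

end AlternantExpansion

section Schur

variable {n : ℕ} {g : MvPolynomial (Fin n) ℂ}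

lemma isSymmetric_of_vand_mul_eq_aDet {ν : Fin n → ℕ} (h : vand n * g = aDet n ν) :
    g.IsSymmetric :=
  isSymmetric_of_mul_mem_antisymmetricSubmodule vand_mem_antisymmetricSubmodule vand_ne_zero <|
    h ▸ aDet_mem_antisymmetricSubmodule ν

lemma isHomogeneous_of_vand_mul_eq_aDet {lam : Partn n}
    (h : vand n * g = aDet n (shiftedExp n lam.1)) : g.IsHomogeneous lam.size :=
  isHomogeneous_of_mul_left isHomogeneous_vand vand_ne_zero <| by
    rw [h, ← sum_shiftedExp]
    exact isHomogeneous_aDet _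

variable (n) in
lemma eval_zero_diffOp_vand_mul (g : MvPolynomial (Fin n) ℂ) :
    eval 0 (diffOp id (vand n) (vand n * g)) =
      n.factorial * (∏ i : Fin n, (n - 1 - (i : ℕ)).factorial : ℕ) * eval 0 g := by
  have hδ := strictAnti_shiftedExp (n := n) (lam := 0) antitone_const
  have hvand : eval 0 (diffOp id (vand n) (vand n)) =
      n.factorial * (∏ i, (shiftedExp n 0 i).factorial : ℕ) := by
    rw [vand_eq_aDet, eval_zero_diffOp_aDet _ (aDet_mem_antisymmetricSubmodule _), coeff_aDet hδ hδ,
      if_pos rfl, mul_one]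
  rw [eval_zero_diffOp_mul_of_isHomogeneous isHomogeneous_vand isHomogeneous_vand, hvand]
  simp [shiftedExp]

lemma coeff_vand_mul_diagRestriction {f P : MvPolynomial (Fin n × Fin n) ℂ} {k : ℕ}
    {ν : Fin n → ℕ} (hf : f ∈ unitaryInvariants (Fin n)) (hP : P ∈ charpolyInvariants ℂ (Fin n))
    (hk : P.IsHomogeneous k) (hν : vand n * diagRestriction P = aDet n ν) :
    (∏ i, (ν i).factorial : ℕ) * coeff (expVec ν) (vand n * diagRestriction f) =
      (∏ i : Fin n, (n - 1 - (i : ℕ)).factorial : ℕ) * eval 0 (diffOp Prod.swap P f) := by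
  have hf' : f ∈ conjInvariants ℂ (Fin n) :=
    charpolyInvariants_le_conjInvariants (unitaryInvariants_eq_charpolyInvariants (ι := Fin n) ▸ hf)
  have hanti : vand n * diagRestriction f ∈ antisymmetricSubmodule ℂ (Fin n) :=
    mul_mem_antisymmetricSubmodule vand_mem_antisymmetricSubmodule (isSymmetric_diagRestriction hf)
  have hradial :
      vand n * diagRestriction (diffOp Prod.swap P f) =
        diffOp id (diagRestriction P) (vand n * diagRestriction f) :=
    (diffOp_mem_radialPairs (charpolyInvariants_le_conjInvariants hP) hk f hf').2
  refine mul_left_cancel₀ (Nat.cast_ne_zero.2 n.factorial_ne_zero : (n.factorial : ℂ) ≠ 0) ?_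
  have heval : eval 0 (diagRestriction (diffOp Prod.swap P f)) = eval 0 (diffOp Prod.swap P f) := by
    rw [← evalMatrix_diagonal]
    simp [evalMatrix, Matrix.diagonal_apply, eval_zero]
  calc _ = eval 0 (diffOp id (aDet n ν) (vand n * diagRestriction f)) := by
        rw [eval_zero_diffOp_aDet ν hanti, mul_assoc]
    _ = eval 0 (diffOp id (vand n) (vand n * diagRestriction (diffOp Prod.swap P f))) := by
        rw [← hν, map_mul (diffOp id), Module.End.mul_apply, hradial]
    _ = _ := by rw [eval_zero_diffOp_vand_mul, heval, mul_assoc]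

end Schur

section HaarAverage

variable {n : ℕ} (μ : Measure (Matrix.unitaryGroup (Fin n) ℂ)) [IsProbabilityMeasure μ]

lemma eval_zero_diffOp_of_forall_eq_integral {z : Matrix (Fin n) (Fin n) ℂ} {k : ℕ}
    {f P : MvPolynomial (Fin n × Fin n) ℂ}
    (hf : ∀ Λ : MvPolynomial (Fin n × Fin n) ℂ →ₗ[ℂ] ℂ,
      Λ f = ∫ u, Λ (traceForm (Unitary.conjStarAlgAut ℂ _ u z) ^ k) ∂μ)
    (hP : P ∈ unitaryInvariants (Fin n)) (hk : P.IsHomogeneous k) :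
    eval 0 (diffOp Prod.swap P f) = k.factorial * evalMatrix z P := by
  have hpow (A : Matrix (Fin n) (Fin n) ℂ) :
      eval 0 (diffOp Prod.swap P (traceForm A ^ k)) = k.factorial * evalMatrix A P :=
    eval_zero_diffOp_linearForm_pow (pderiv_swap_traceForm A) hk
  have h := hf ((aeval 0).toLinearMap ∘ₗ diffOp Prod.swap P)
  simp only [LinearMap.comp_apply, AlgHom.toLinearMap_apply, aeval_eq_eval, hpow,
    mem_unitaryInvariants.1 hP, integral_const, probReal_univ, one_smul] at h
  exact h

/-- The coefficient `δ! / (λ + δ)!` of the character expansion. -/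
noncomputable def Partn.weight (lam : Partn n) : ℝ :=
  (∏ i : Fin n, ((n - 1 - (i : ℕ)).factorial : ℝ)) / ∏ i, ((shiftedExp n lam.1 i).factorial : ℝ)

lemma coeff_vand_mul_diagRestriction_of_forall_eq_integral {z : Matrix (Fin n) (Fin n) ℂ}
    {f : MvPolynomial (Fin n × Fin n) ℂ} {g : MvPolynomial (Fin n) ℂ} {lam : Partn n}
    (hf : f ∈ unitaryInvariants (Fin n))
    (hΛ : ∀ Λ : MvPolynomial (Fin n × Fin n) ℂ →ₗ[ℂ] ℂ,
      Λ f = ∫ u, Λ (traceForm (Unitary.conjStarAlgAut ℂ _ u z) ^ lam.size) ∂μ)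
    (hg : vand n * g = aDet n (shiftedExp n lam.1)) :
    coeff (expVec (shiftedExp n lam.1)) (vand n * diagRestriction f) =
      lam.size.factorial * lam.weight * eval (eigs z) g := by
  obtain ⟨P, hP, hPk, rfl⟩ := exists_isHomogeneous_diagRestriction_eq
    (isSymmetric_of_vand_mul_eq_aDet hg) (isHomogeneous_of_vand_mul_eq_aDet hg)
  have h := coeff_vand_mul_diagRestriction hf hP hPk hg
  rw [eval_zero_diffOp_of_forall_eq_integral μ hΛ (charpolyInvariants_le_unitaryInvariants hP)
    hPk, evalMatrix_eq_eval_eigs hP] at h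
  have h₀ : (∏ i, ((shiftedExp n lam.1 i).factorial : ℂ)) ≠ 0 :=
    Finset.prod_ne_zero_iff.2 fun i _ => Nat.cast_ne_zero.2 (Nat.factorial_ne_zero _)
  push_cast [Partn.weight] at h ⊢
  field_simp
  linear_combination h

variable [μ.IsHaarMeasure] {s : Partn n → MvPolynomial (Fin n) ℂ}

theorem integral_trace_mul_conjStarAlgAut_pow
    (hs : ∀ lam, vand n * s lam = aDet n (shiftedExp n lam.1)) (x z : Matrix (Fin n) (Fin n) ℂ)
    (k : ℕ) :
    ∫ u, (x * Unitary.conjStarAlgAut ℂ _ u z).trace ^ k ∂μ =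
      k.factorial * ∑ lam ∈ partnsOfSize n k,
        lam.weight * eval (eigs x) (s lam) * eval (eigs z) (s lam) := by
  obtain ⟨f, hf, hfk, hΛ⟩ := exists_mem_unitaryInvariants_forall_eq_integral μ z k
  have hrestr : diagRestriction f = ∑ lam ∈ partnsOfSize n k,
      (k.factorial * lam.weight * eval (eigs z) (s lam) : ℂ) • s lam := by
    refine mul_left_cancel₀ vand_ne_zero ?_
    rw [eq_sum_coeff_smul_aDet (mul_mem_antisymmetricSubmodule vand_mem_antisymmetricSubmodule
      (isSymmetric_diagRestriction hf))
      (isHomogeneous_vand.mul (isHomogeneous_diagRestriction hfk)), Finset.mul_sum]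
    refine Finset.sum_congr rfl fun lam hlam => ?_
    obtain rfl := mem_partnsOfSize.1 hlam
    rw [coeff_vand_mul_diagRestriction_of_forall_eq_integral μ hf hΛ (hs lam), mul_smul_comm, hs]
  calc _ = evalMatrix x f := by
        simpa only [AlgHom.toLinearMap_apply, map_pow, evalMatrix_traceForm] using
          (hΛ (evalMatrix x).toLinearMap).symm
    _ = eval (eigs x) (diagRestriction f) :=
        evalMatrix_eq_eval_eigs (unitaryInvariants_eq_charpolyInvariants (ι := Fin n) ▸ hf) x
    _ = _ := by
        rw [hrestr, map_sum, Finset.mul_sum]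
        exact Finset.sum_congr rfl fun lam _ => by rw [smul_eval]; ring

end HaarAverage

section Series

lemma summable_prod_apply {ι α : Type*} [Fintype ι] {f : α → ℝ} (hf₀ : ∀ a, 0 ≤ f a)
    (hf : Summable f) : Summable fun v : ι → α => ∏ i, f (v i) := by
  classical
  refine summable_of_sum_le (c := ∏ _i : ι, ∑' a, f a)
    (fun v => Finset.prod_nonneg fun i _ => hf₀ _) fun t => ?_
  have ht : t ⊆ Fintype.piFinset fun i => t.image fun v => v i := fun v hv =>
    Fintype.mem_piFinset.2 fun i => Finset.mem_image_of_mem (fun v : ι → α => v i) hv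
  calc _ ≤ ∑ v ∈ Fintype.piFinset fun i => t.image fun v => v i, ∏ i, f (v i) :=
        Finset.sum_le_sum_of_subset_of_nonneg ht fun v _ _ => Finset.prod_nonneg fun i _ => hf₀ _
    _ = ∏ i, ∑ a ∈ t.image fun v => v i, f a := (Finset.prod_univ_sum _ fun _ => f).symm
    _ ≤ _ := Finset.prod_le_prod (fun _ _ => Finset.sum_nonneg fun a _ => hf₀ a) fun _ _ =>
        hf.sum_le_tsum _ fun a _ => hf₀ a

lemma summable_pow_size_div_factorial (n : ℕ) (M : ℝ) :
    Summable fun lam : Partn n => M ^ lam.size / lam.size.factorial := by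
  have h : Summable fun lam : Partn n => ∏ i, (|M| ^ lam.1 i / (lam.1 i).factorial : ℝ) :=
    (summable_prod_apply (fun k => by positivity)
      (Real.summable_pow_div_factorial |M|)).comp_injective Subtype.val_injective
  refine h.of_norm_bounded fun lam => ?_
  have hfact : ∏ i, ((lam.1 i).factorial : ℝ) ≤ lam.size.factorial := by
    exact_mod_cast Nat.le_of_dvd (Nat.factorial_pos _) (Nat.prod_factorial_dvd_factorial_sum _ _)
  rw [Finset.prod_div_distrib, Finset.prod_pow_eq_pow_sum, norm_div, norm_pow, Real.norm_eq_abs,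
    Real.norm_natCast]
  exact div_le_div_of_nonneg_left (by positivity) (by positivity) hfact

lemma hasSum_integral_pow_div_factorial {Ω : Type*} [TopologicalSpace Ω] [CompactSpace Ω]
    [MeasurableSpace Ω] [OpensMeasurableSpace Ω] (μ : Measure Ω) [IsFiniteMeasure μ]
    {F : Ω → ℂ} (hF : Continuous F) :
    HasSum (fun k : ℕ => (∫ ω, F ω ^ k ∂μ) / k.factorial) (∫ ω, Complex.exp (F ω) ∂μ) := by
  obtain ⟨M, hM⟩ := isCompact_univ.exists_bound_of_continuousOn hF.continuousOn
  simp_rw [← integral_div]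
  refine hasSum_integral_of_dominated_convergence (fun k _ => M ^ k / k.factorial)
    (fun k => ((hF.pow k).div_const _).aestronglyMeasurable)
    (fun k => .of_forall fun ω => ?_) (.of_forall fun _ => Real.summable_pow_div_factorial M)
    (integrable_const _) (.of_forall fun ω => ?_)
  · rw [norm_div, norm_pow, Complex.norm_natCast]
    gcongr
    exact hM ω (Set.mem_univ ω)
  · rw [Complex.exp_eq_exp_ℂ]
    exact NormedSpace.expSeries_div_hasSum_exp (F ω)

end Series

section ComplexConjugation

variable {n : ℕ}

lemma map_conj_aDet (ν : Fin n → ℕ) : map (starRingEnd ℂ) (aDet n ν) = aDet n ν := by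
  rw [aDet, RingHom.map_det]
  congr 1
  ext i j : 2
  simp

lemma map_conj_of_vand_mul_eq_aDet {g : MvPolynomial (Fin n) ℂ} {ν : Fin n → ℕ}
    (hg : vand n * g = aDet n ν) : map (starRingEnd ℂ) g = g := by
  have h := congrArg (map (starRingEnd ℂ)) hg
  rw [map_mul, map_conj_aDet, vand_eq_aDet, map_conj_aDet, ← vand_eq_aDet, ← hg] at h
  exact mul_left_cancel₀ vand_ne_zero h

lemma conj_eval_eigs {g : MvPolynomial (Fin n) ℂ} {ν : Fin n → ℕ} (hg : vand n * g = aDet n ν)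
    (y : Matrix (Fin n) (Fin n) ℂ) :
    starRingEnd ℂ (eval (eigs y) g) = eval (eigs y.conjTranspose) g := by
  obtain ⟨P, hP, hPg⟩ :=
    exists_mem_charpolyInvariants_diagRestriction_eq (isSymmetric_of_vand_mul_eq_aDet hg)
  have hchar : (Matrix.diagonal (starRingEnd ℂ ∘ eigs y)).charpoly =
      (Matrix.diagonal (eigs y.conjTranspose)).charpoly := by
    have hdiag : Matrix.diagonal (starRingEnd ℂ ∘ eigs y) =
        (Matrix.diagonal (eigs y)).map (starRingEnd ℂ) :=
      (Matrix.diagonal_map (map_zero _)).symm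
    rw [hdiag, Matrix.charpoly_map, charpoly_diagonal_eigs, charpoly_diagonal_eigs,
      ← Matrix.charpoly_map, ← Matrix.charpoly_transpose]
    rfl
  calc _ = eval (starRingEnd ℂ ∘ eigs y) (map (starRingEnd ℂ) g) := by
        rw [← map_eval]
    _ = eval (starRingEnd ℂ ∘ eigs y) g := by rw [map_conj_of_vand_mul_eq_aDet hg]
    _ = eval (eigs y.conjTranspose) g := by
        rw [← hPg, ← evalMatrix_diagonal, evalMatrix_eq_of_charpoly_eq hP hchar,
          evalMatrix_diagonal]

end ComplexConjugation

section CharacterExpansion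

variable {n : ℕ} {s : Partn n → MvPolynomial (Fin n) ℂ}

lemma Partn.weight_nonneg (lam : Partn n) : 0 ≤ lam.weight := by
  unfold Partn.weight
  positivity

/-- The summand `δ!/(λ+δ)! · s_λ(x) · conj (s_λ(y))` of the character expansion at `p = (x, y)`. -/
noncomputable def hcizTerm (s : Partn n → MvPolynomial (Fin n) ℂ) (lam : Partn n)
    (p : Matrix (Fin n) (Fin n) ℂ × Matrix (Fin n) (Fin n) ℂ) : ℂ :=
  lam.weight * eval (eigs p.1) (s lam) * starRingEnd ℂ (eval (eigs p.2) (s lam))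

lemma hcizTerm_self (lam : Partn n) (x : Matrix (Fin n) (Fin n) ℂ) :
    hcizTerm s lam (x, x) = (lam.weight * ‖eval (eigs x) (s lam)‖ ^ 2 : ℝ) := by
  simp only [hcizTerm, mul_assoc, Complex.mul_conj']
  push_cast
  rfl

lemma norm_hcizTerm (lam : Partn n) (x y : Matrix (Fin n) (Fin n) ℂ) :
    ‖hcizTerm s lam (x, y)‖ =
      lam.weight * ‖eval (eigs x) (s lam)‖ * ‖eval (eigs y) (s lam)‖ := by
  simp [hcizTerm, abs_of_nonneg lam.weight_nonneg]

lemma exists_norm_trace_mul_conjStarAlgAut_conjTranspose_le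
    {L : Set (Matrix (Fin n) (Fin n) ℂ)} (hL : IsCompact L) :
    ∃ M : ℝ, ∀ x ∈ L, ∀ u : Matrix.unitaryGroup (Fin n) ℂ,
      ‖(x * Unitary.conjStarAlgAut ℂ _ u x.conjTranspose).trace‖ ≤ M := by
  have hcont : Continuous fun q : Matrix (Fin n) (Fin n) ℂ × Matrix.unitaryGroup (Fin n) ℂ =>
      (q.1 * Unitary.conjStarAlgAut ℂ _ q.2 q.1.conjTranspose).trace := by
    simp only [Unitary.conjStarAlgAut_apply]
    fun_prop
  obtain ⟨M, hM⟩ := (hL.prod isCompact_univ).exists_bound_of_continuousOn hcont.continuousOn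
  exact ⟨M, fun x hx u => hM (x, u) ⟨hx, Set.mem_univ u⟩⟩

lemma sum_partnsOfSize_hcizTerm (μ : Measure (Matrix.unitaryGroup (Fin n) ℂ)) [μ.IsHaarMeasure]
    [IsProbabilityMeasure μ] (hs : ∀ lam, vand n * s lam = aDet n (shiftedExp n lam.1))
    (x y : Matrix (Fin n) (Fin n) ℂ) (k : ℕ) :
    ∑ lam ∈ partnsOfSize n k, hcizTerm s lam (x, y) =
      (∫ u, (x * Unitary.conjStarAlgAut ℂ _ u y.conjTranspose).trace ^ k ∂μ) / k.factorial := by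
  rw [integral_trace_mul_conjStarAlgAut_pow μ hs,
    mul_div_cancel_left₀ _ (Nat.cast_ne_zero.2 k.factorial_ne_zero)]
  exact Finset.sum_congr rfl fun lam _ => by rw [hcizTerm, conj_eval_eigs (hs lam)]

lemma norm_hcizTerm_self_le (hs : ∀ lam, vand n * s lam = aDet n (shiftedExp n lam.1))
    {x : Matrix (Fin n) (Fin n) ℂ} {M : ℝ} (hM : ∀ u : Matrix.unitaryGroup (Fin n) ℂ,
      ‖(x * Unitary.conjStarAlgAut ℂ _ u x.conjTranspose).trace‖ ≤ M) (lam : Partn n) :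
    ‖hcizTerm s lam (x, x)‖ ≤ M ^ lam.size / lam.size.factorial := by
  let μ : Measure (Matrix.unitaryGroup (Fin n) ℂ) := .haarMeasure ⊤
  have : IsProbabilityMeasure μ := ⟨Measure.haarMeasure_self⟩
  have hnn (lam : Partn n) : 0 ≤ lam.weight * ‖eval (eigs x) (s lam)‖ ^ 2 :=
    mul_nonneg lam.weight_nonneg (sq_nonneg _)
  have hint : ‖∫ u, (x * Unitary.conjStarAlgAut ℂ _ u x.conjTranspose).trace ^ lam.size ∂μ‖ ≤
      M ^ lam.size := by
    refine (norm_integral_le_of_norm_le_const (.of_forall fun u => ?_)).trans_eq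
      (by rw [probReal_univ, mul_one])
    rw [norm_pow]
    exact pow_le_pow_left₀ (norm_nonneg _) (hM u) _
  calc ‖hcizTerm s lam (x, x)‖ = lam.weight * ‖eval (eigs x) (s lam)‖ ^ 2 := by
        rw [hcizTerm_self, Complex.norm_of_nonneg (hnn lam)]
    _ ≤ ∑ κ ∈ partnsOfSize n lam.size, κ.weight * ‖eval (eigs x) (s κ)‖ ^ 2 :=
        Finset.single_le_sum (fun κ _ => hnn κ) (mem_partnsOfSize.2 rfl)
    _ = ‖∑ κ ∈ partnsOfSize n lam.size, hcizTerm s κ (x, x)‖ := by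
        simp_rw [hcizTerm_self, ← Complex.ofReal_sum]
        rw [Complex.norm_of_nonneg (Finset.sum_nonneg fun κ _ => hnn κ)]
    _ ≤ M ^ lam.size / lam.size.factorial := by
        rw [sum_partnsOfSize_hcizTerm μ hs, norm_div, Complex.norm_natCast]
        gcongr

lemma norm_hcizTerm_le_max (lam : Partn n) (x y : Matrix (Fin n) (Fin n) ℂ) :
    ‖hcizTerm s lam (x, y)‖ ≤ max ‖hcizTerm s lam (x, x)‖ ‖hcizTerm s lam (y, y)‖ := by
  have h₀ := lam.weight_nonneg
  simp only [norm_hcizTerm]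
  rcases le_total ‖eval (eigs x) (s lam)‖ ‖eval (eigs y) (s lam)‖ with h | h
  · exact le_max_of_le_right (by gcongr)
  · exact le_max_of_le_left (by gcongr)

lemma exists_summable_forall_norm_hcizTerm_le
    (hs : ∀ lam, vand n * s lam = aDet n (shiftedExp n lam.1))
    {K : Set (Matrix (Fin n) (Fin n) ℂ × Matrix (Fin n) (Fin n) ℂ)} (hK : IsCompact K) :
    ∃ b : Partn n → ℝ, Summable b ∧ ∀ lam, ∀ p ∈ K, ‖hcizTerm s lam p‖ ≤ b lam := by
  obtain ⟨M, hM⟩ := exists_norm_trace_mul_conjStarAlgAut_conjTranspose_le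
    ((hK.image continuous_fst).union (hK.image continuous_snd))
  refine ⟨_, summable_pow_size_div_factorial n M, fun lam p hp =>
    (norm_hcizTerm_le_max lam p.1 p.2).trans (max_le ?_ ?_)⟩
  · exact norm_hcizTerm_self_le hs (hM p.1 (.inl ⟨p, hp, rfl⟩)) lam
  · exact norm_hcizTerm_self_le hs (hM p.2 (.inr ⟨p, hp, rfl⟩)) lam

theorem hasSum_hcizTerm (μ : Measure (Matrix.unitaryGroup (Fin n) ℂ)) [μ.IsHaarMeasure]
    [IsProbabilityMeasure μ] (hs : ∀ lam, vand n * s lam = aDet n (shiftedExp n lam.1))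
    (x y : Matrix (Fin n) (Fin n) ℂ) :
    HasSum (fun lam => hcizTerm s lam (x, y))
      (∫ u, Complex.exp (x * Unitary.conjStarAlgAut ℂ _ u y.conjTranspose).trace ∂μ) := by
  obtain ⟨b, hb, hle⟩ :=
    exists_summable_forall_norm_hcizTerm_le hs (isCompact_singleton (x := (x, y)))
  have hsum : Summable fun lam => hcizTerm s lam (x, y) :=
    hb.of_norm_bounded fun lam => hle lam _ rfl
  have hfiber (k : ℕ) : ∑' lam : Partn.size ⁻¹' {k}, hcizTerm s lam.1 (x, y) =
      (∫ u, (x * Unitary.conjStarAlgAut ℂ _ u y.conjTranspose).trace ^ k ∂μ) / k.factorial := by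
    have hset : Partn.size ⁻¹' {k} = (partnsOfSize n k : Set (Partn n)) :=
      Set.ext fun _ => mem_partnsOfSize.symm
    rw [← sum_partnsOfSize_hcizTerm μ hs, hset]
    exact Finset.tsum_subtype' _ fun lam => hcizTerm s lam (x, y)
  have hsize := hsum.hasSum.tsum_fiberwise Partn.size
  simp_rw [hfiber] at hsize
  have hexp := hasSum_integral_pow_div_factorial μ
    (F := fun u => (x * Unitary.conjStarAlgAut ℂ _ u y.conjTranspose).trace)
    (continuous_const.mul (continuous_conjStarAlgAut _)).matrix_trace
  exact hsize.unique hexp ▸ hsum.hasSum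

end CharacterExpansion

/-- Character expansion of the HCIZ kernel: for a Haar probability measure on `U(n)`
and for any choice `s λ` of the Schur polynomials (characterized by `Δ · s_λ = a_{λ+δ}`),
setting `χ_λ(x) = s_λ(eigenvalues of x)`, one has
`∫_{U(n)} e^{Tr(u⁻¹ x u y*)} du = Σ_λ (δ!/(λ+δ)!) χ_λ(x) conj(χ_λ(y))`,
the series converging absolutely, and uniformly on compact subsets of
`M_n(ℂ) × M_n(ℂ)`. -/
theorem HCIZ_character_expansion (n : ℕ)
    (μ : Measure (Matrix.unitaryGroup (Fin n) ℂ))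
    [μ.IsHaarMeasure] [IsProbabilityMeasure μ]
    (s : (Fin n → ℕ) → MvPolynomial (Fin n) ℂ)
    (hs : ∀ lam : Fin n → ℕ, Antitone lam → vand n * s lam = aDet n (shiftedExp n lam))
    (chi : (Fin n → ℕ) → Matrix (Fin n) (Fin n) ℂ → ℂ)
    (hchi : ∀ lam x, chi lam x = eval (eigs x) (s lam))
    (term : Partn n → Matrix (Fin n) (Fin n) ℂ × Matrix (Fin n) (Fin n) ℂ → ℂ)
    (hterm : ∀ lam p, term lam p =
      ((∏ i : Fin n, ((n - 1 - (i : ℕ)).factorial : ℂ)) /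
          (∏ i : Fin n, ((shiftedExp n lam.1 i).factorial : ℂ))) *
        chi lam.1 p.1 * (starRingEnd ℂ) (chi lam.1 p.2))
    (I : Matrix (Fin n) (Fin n) ℂ × Matrix (Fin n) (Fin n) ℂ → ℂ)
    (hI : ∀ p, I p = ∫ u : Matrix.unitaryGroup (Fin n) ℂ,
        Complex.exp (((↑(u⁻¹) : Matrix (Fin n) (Fin n) ℂ) * p.1 *
          (↑u : Matrix (Fin n) (Fin n) ℂ) * Matrix.conjTranspose p.2).trace) ∂μ) :
    (∀ p, HasSum (fun lam : Partn n => term lam p) (I p)) ∧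
    (∀ p, Summable (fun lam : Partn n => ‖term lam p‖)) ∧
    (∀ K : Set (Matrix (Fin n) (Fin n) ℂ × Matrix (Fin n) (Fin n) ℂ), IsCompact K →
      TendstoUniformlyOn (fun (t : Finset (Partn n)) p => ∑ lam ∈ t, term lam p)
        I Filter.atTop K) := by
  have hs' (lam : Partn n) : vand n * s lam.1 = aDet n (shiftedExp n lam.1) := hs lam.1 lam.2
  have hterm' : term = hcizTerm fun lam => s lam.1 := by
    ext lam p
    simp [hterm, hchi, hcizTerm, Partn.weight]
  have hI' (p : Matrix (Fin n) (Fin n) ℂ × Matrix (Fin n) (Fin n) ℂ) :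
      I p = ∫ u, Complex.exp
        (p.1 * Unitary.conjStarAlgAut ℂ _ u p.2.conjTranspose).trace ∂μ := by
    simp only [hI, Matrix.UnitaryGroup.inv_val, Unitary.conjStarAlgAut_apply, mul_assoc]
    simp_rw [Matrix.trace_mul_comm (star _), mul_assoc]
  have hsum (p : Matrix (Fin n) (Fin n) ℂ × Matrix (Fin n) (Fin n) ℂ) :
      HasSum (fun lam => term lam p) (I p) := by
    rw [hterm', hI']
    exact hasSum_hcizTerm μ hs' p.1 p.2
  refine ⟨hsum, fun p => (hsum p).summable.norm, fun K hK => ?_⟩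
  obtain ⟨b, hb, hle⟩ := exists_summable_forall_norm_hcizTerm_le hs' hK
  rw [hterm'] at hsum ⊢
  exact (tendstoUniformlyOn_tsum hb hle).congr_right fun p _ => (hsum p).tsum_eq
end
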